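/- arXiv:1707.01458 — 4 statements merged into one kernel-verified Lean document; each statement's English description precedes it below -/
import Mathlib

section
/- Let L > 0 and let g : ℝ → ℂ be an infinitely differentiable function that is periodic with period L. Then for every integer κ ≥ 2 and every integer N ≥ 1, |∫₀^L g(θ) dθ − (L/N)·Σ_{i=1}^{N} g((i − 1/2)·L/N)| ≤ (π²·L^{κ+1})/(3·(2πN)^κ) · sup_{x ∈ ℝ} |g^{(κ)}(x)|. -/
open Real MeasureTheory

/-!
Put `T = L / N` and fold `g` into the `T`-periodic function `F x = ∑ i < N, g (x + i * T)`. Then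
`∫₀ᵀ F = ∫₀ᴸ g`, and the Riemann sum is `T * F x` for a single point `x`, so the quadrature error is
`T` times the difference between the mean of `F` and one of its values. In the Fourier series of `F`
this difference is the sum of all modes `n ≠ 0`. Integrating by parts `κ` times bounds the `n`-th
mode by `(T / (2 * π * |n|)) ^ κ * N * sup ‖g^(κ)‖`; as `1 / |n| ^ κ ≤ 1 / n ^ 2`, summing over
`n ≠ 0` gives the factor `2 * ζ(2) = π ^ 2 / 3`.
-/

open Function (Periodic)

section PeriodicDerivatives

variable {E : Type*} [NormedAddCommGroup E]

lemma periodic_iteratedDeriv {𝕜 : Type*} [NontriviallyNormedField 𝕜] [NormedSpace 𝕜 E]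
    {f : 𝕜 → E} {T : 𝕜} (hf : Periodic f T) (k : ℕ) : Periodic (iteratedDeriv k f) T := by
  intro x
  rw [← congrFun (iteratedDeriv_comp_add_const k f T) x, hf.funext]

lemma norm_iteratedDeriv_le_iSup_of_periodic [NormedSpace ℝ E] {f : ℝ → E} {T : ℝ}
    (hf : Periodic f T) (hT : T ≠ 0) {k : ℕ} (hfk : ContDiff ℝ k f) (x : ℝ) :
    ‖iteratedDeriv k f x‖ ≤ ⨆ y, ‖iteratedDeriv k f y‖ := by
  have hper : Periodic (fun y ↦ ‖iteratedDeriv k f y‖) T := (periodic_iteratedDeriv hf k).comp norm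
  exact le_ciSup
    (hper.isBounded_of_continuous hT (hfk.continuous_iteratedDeriv' k).norm).bddAbove x

end PeriodicDerivatives

section FourierCoefficients

variable {T : ℝ} [hT : Fact (0 < T)]

lemma norm_fourierCoeff_le {E : Type*} [NormedAddCommGroup E] [NormedSpace ℂ E]
    {f : AddCircle T → E} {M : ℝ} (hM : ∀ x, ‖f x‖ ≤ M) (n : ℤ) : ‖fourierCoeff f n‖ ≤ M := by
  have h := norm_integral_le_of_norm_le_const (μ := AddCircle.haarAddCircle (T := T))
    (f := fun x ↦ fourier (-n) x • f x) (C := M) (.of_forall fun x ↦ by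
      rw [norm_smul, fourier_apply, Circle.norm_coe, one_mul]
      exact hM x)
  simpa [fourierCoeff] using h

lemma period_mul_fourierCoeff_lift_zero {f : ℝ → ℂ} (hf : Periodic f T) :
    T * fourierCoeff hf.lift 0 = ∫ t in (0 : ℝ)..T, f t := by
  have hT0 : (T : ℂ) ≠ 0 := by exact_mod_cast hT.out.ne'
  simp [fourierCoeff_eq_intervalIntegral _ _ 0, hT0]

lemma fourierCoeff_lift_of_hasDerivAt {f f' : ℝ → ℂ} (hf : Periodic f T) (hf' : Periodic f' T)
    (hderiv : ∀ x, HasDerivAt f (f' x) x) (hcont : Continuous f') (n : ℤ) :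
    fourierCoeff hf'.lift n = 2 * π * Complex.I * n / T * fourierCoeff hf.lift n := by
  have hbyParts := intervalIntegral.integral_mul_deriv_eq_deriv_mul (a := 0) (b := 0 + T)
    (fun x _ ↦ hasDerivAt_fourier_neg T n x) (fun x _ ↦ hderiv x)
    (Continuous.intervalIntegrable (by fun_prop) _ _) (hcont.intervalIntegrable _ _)
  simp only [zero_add, AddCircle.coe_period, AddCircle.coe_zero, hf.eq, sub_self, zero_sub,
    mul_assoc, intervalIntegral.integral_const_mul] at hbyParts
  simp only [fourierCoeff_eq_intervalIntegral _ _ 0, Periodic.lift_coe, smul_eq_mul, zero_add,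
    hbyParts, Complex.real_smul]
  ring

lemma fourierCoeff_lift_iteratedDeriv {f : ℝ → ℂ} (hf : Periodic f T) {k : ℕ}
    (hfk : ContDiff ℝ k f) (n : ℤ) :
    fourierCoeff (periodic_iteratedDeriv hf k).lift n =
      (2 * π * Complex.I * n / T) ^ k * fourierCoeff hf.lift n := by
  induction k with
  | zero => simp [fourierCoeff_eq_intervalIntegral _ _ 0]
  | succ k ih =>
    have hderiv (x : ℝ) : HasDerivAt (iteratedDeriv k f) (iteratedDeriv (k + 1) f x) x := by
      rw [iteratedDeriv_succ]
      exact (hfk.differentiable_iteratedDeriv' k x).hasDerivAt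
    rw [fourierCoeff_lift_of_hasDerivAt (periodic_iteratedDeriv hf k) _ hderiv
      (hfk.continuous_iteratedDeriv' (k + 1)), ih (hfk.of_le (by simp))]
    ring

lemma norm_fourierCoeff_lift_le_of_norm_iteratedDeriv_le {f : ℝ → ℂ} (hf : Periodic f T) {k : ℕ}
    (hfk : ContDiff ℝ k f) {M : ℝ} (hM : ∀ x, ‖iteratedDeriv k f x‖ ≤ M) {n : ℤ} (hn : n ≠ 0) :
    ‖fourierCoeff hf.lift n‖ ≤ (T / (2 * π)) ^ k * M / |(n : ℝ)| ^ k := by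
  have hT0 := hT.out
  have hcoeff := norm_fourierCoeff_le (f := (periodic_iteratedDeriv hf k).lift) (M := M)
    (fun x ↦ x.induction_on hM) n
  have hfactor : ‖2 * π * Complex.I * n / T‖ = 2 * π * |(n : ℝ)| / T := by
    simp [abs_of_pos hT0, abs_of_pos pi_pos]
  rw [fourierCoeff_lift_iteratedDeriv hf hfk, norm_mul, norm_pow, hfactor] at hcoeff
  calc ‖fourierCoeff hf.lift n‖
      = (T / (2 * π)) ^ k * ((2 * π * |(n : ℝ)| / T) ^ k * ‖fourierCoeff hf.lift n‖)
          / |(n : ℝ)| ^ k := by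
        simp only [div_pow, mul_pow]
        field_simp
    _ ≤ (T / (2 * π)) ^ k * M / |(n : ℝ)| ^ k := by gcongr

lemma norm_sub_fourierCoeff_zero_le_of_hasSum {F : C(AddCircle T, ℂ)} {b : ℤ → ℝ} {B : ℝ}
    (hb : HasSum b B) (hb0 : 0 ≤ b 0) (hF : ∀ n ≠ 0, ‖fourierCoeff F n‖ ≤ b n)
    (x : AddCircle T) :
    ‖F x - fourierCoeff F 0‖ ≤ B := by
  have hsummable : Summable (fourierCoeff F) :=
    .of_norm_bounded_eventually hb.summable <| (Set.finite_singleton 0).subset fun n hn ↦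
      not_imp_comm.1 (hF n) hn
  have hseries := (has_pointwise_sum_fourier_series_of_summable hsummable x).sub
    (hasSum_ite_eq 0 (fourierCoeff F 0))
  refine hseries.norm_le_of_bounded hb fun n ↦ ?_
  rcases eq_or_ne n 0 with rfl | hn
  · simpa using hb0
  · simpa only [hn, if_false, sub_zero, norm_smul, fourier_apply, Circle.norm_coe, mul_one]
      using hF n hn

end FourierCoefficients

lemma hasSum_int_one_div_sq : HasSum (fun n : ℤ ↦ 1 / (n : ℝ) ^ 2) (π ^ 2 / 3) := by
  have hsum := HasSum.of_nat_of_neg (f := fun n : ℤ ↦ 1 / (n : ℝ) ^ 2)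
    (g := π ^ 2 / 6) (g' := π ^ 2 / 6)
    (by simpa using hasSum_zeta_two) (by simpa using hasSum_zeta_two)
  have hvalue : π ^ 2 / 6 + π ^ 2 / 6 - 1 / ((0 : ℤ) : ℝ) ^ 2 = π ^ 2 / 3 := by
    norm_num
    ring
  exact hvalue ▸ hsum

lemma norm_integral_period_sub_mul_le {T : ℝ} (hT : 0 < T) {f : ℝ → ℂ} (hf : Periodic f T)
    {k : ℕ} (hk : 2 ≤ k) (hfk : ContDiff ℝ k f) {M : ℝ} (hM : ∀ x, ‖iteratedDeriv k f x‖ ≤ M)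
    (x : ℝ) :
    ‖(∫ t in (0 : ℝ)..T, f t) - T * f x‖ ≤ T * ((T / (2 * π)) ^ k * M * (π ^ 2 / 3)) := by
  have : Fact (0 < T) := ⟨hT⟩
  have hM0 : 0 ≤ M := (norm_nonneg _).trans (hM 0)
  let F : C(AddCircle T, ℂ) := ⟨hf.lift, continuous_coinduced_dom.2 hfk.continuous⟩
  have hdecay (n : ℤ) (hn : n ≠ 0) :
      ‖fourierCoeff F n‖ ≤ (T / (2 * π)) ^ k * M * (1 / (n : ℝ) ^ 2) := by
    have hn1 : 1 ≤ |(n : ℝ)| := by exact_mod_cast Int.one_le_abs hn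
    calc ‖fourierCoeff F n‖ ≤ (T / (2 * π)) ^ k * M / |(n : ℝ)| ^ k :=
          norm_fourierCoeff_lift_le_of_norm_iteratedDeriv_le hf hfk hM hn
      _ ≤ (T / (2 * π)) ^ k * M / |(n : ℝ)| ^ 2 := by gcongr
      _ = (T / (2 * π)) ^ k * M * (1 / (n : ℝ) ^ 2) := by rw [sq_abs, mul_one_div]
  have hmean : ‖f x - fourierCoeff F 0‖ ≤ (T / (2 * π)) ^ k * M * (π ^ 2 / 3) :=
    norm_sub_fourierCoeff_zero_le_of_hasSum (hasSum_int_one_div_sq.mul_left _) (by simp) hdecay x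
  calc ‖(∫ t in (0 : ℝ)..T, f t) - T * f x‖ = T * ‖f x - fourierCoeff F 0‖ := by
        rw [← period_mul_fourierCoeff_lift_zero hf, ← mul_sub, norm_mul, norm_sub_rev,
          Complex.norm_real, norm_of_nonneg hT.le]
        rfl
    _ ≤ T * ((T / (2 * π)) ^ k * M * (π ^ 2 / 3)) := by gcongr

section TranslateSum

variable {E : Type*}

/-- The sum of the `N` translates of `f` by `0, T, …, (N - 1) * T`. It folds an `N * T`-periodic
function into a `T`-periodic one whose values are unnormalised equispaced Riemann sums of `f`. -/
def translateSum [AddCommMonoid E] (f : ℝ → E) (T : ℝ) (N : ℕ) (x : ℝ) : E :=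
  ∑ i ∈ Finset.range N, f (x + i * T)

variable {f : ℝ → E} {T : ℝ} {N : ℕ}

lemma sum_Icc_eq_translateSum [AddCommMonoid E] (s : ℝ) :
    ∑ i ∈ Finset.Icc 1 N, f ((i + s) * T) = translateSum f T N ((1 + s) * T) := by
  rw [← Finset.Ico_add_one_right_eq_Icc, Finset.sum_Ico_eq_sum_range]
  refine Finset.sum_congr rfl fun i _ ↦ congrArg f ?_
  push_cast
  ring

lemma periodic_translateSum [AddCommGroup E] (hf : Periodic f (N * T)) :
    Periodic (translateSum f T N) T := by
  intro x
  have hshift := Finset.sum_range_succ (fun i : ℕ ↦ f (x + i * T)) N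
  rw [Finset.sum_range_succ', hf x] at hshift
  simpa [translateSum, add_mul, add_assoc, add_comm T] using hshift

variable [NormedAddCommGroup E]

lemma norm_translateSum_le {M : ℝ} (hM : ∀ x, ‖f x‖ ≤ M) (x : ℝ) :
    ‖translateSum f T N x‖ ≤ N * M := by
  simpa [translateSum] using norm_sum_le_of_le (Finset.range N) fun i _ ↦ hM (x + i * T)

variable [NormedSpace ℝ E]

lemma contDiff_translateSum {n : WithTop ℕ∞} (hf : ContDiff ℝ n f) :
    ContDiff ℝ n (translateSum f T N) :=
  ContDiff.sum fun _ _ ↦ hf.comp (contDiff_id.add contDiff_const)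

lemma iteratedDeriv_translateSum {k : ℕ} (hf : ContDiff ℝ k f) :
    iteratedDeriv k (translateSum f T N) = translateSum (iteratedDeriv k f) T N := by
  ext x
  have htranslate (i : ℕ) : ContDiff ℝ k fun y ↦ f (y + i * T) :=
    hf.comp (contDiff_id.add contDiff_const)
  unfold translateSum
  rw [iteratedDeriv_fun_sum fun i _ ↦ (htranslate i).contDiffAt]
  simp only [iteratedDeriv_comp_add_const]

lemma integral_translateSum (hf : Continuous f) :
    ∫ x in (0 : ℝ)..T, translateSum f T N x = ∫ x in (0 : ℝ)..N * T, f x := by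
  have htranslate (i : ℕ) :
      ∫ x in (0 : ℝ)..T, f (x + i * T) = ∫ x in (i * T)..((i + 1 : ℕ) * T), f x := by
    rw [intervalIntegral.integral_comp_add_right, zero_add, Nat.cast_succ, add_one_mul, add_comm T]
  simp only [translateSum]
  rw [intervalIntegral.integral_finsetSum fun i _ ↦
    Continuous.intervalIntegrable (by fun_prop) _ _]
  simp only [htranslate]
  rw [intervalIntegral.sum_integral_adjacent_intervals (a := fun i : ℕ ↦ i * T)
    fun i _ ↦ hf.intervalIntegrable _ _, Nat.cast_zero, zero_mul]

end TranslateSum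

theorem riemann_midpoint_rate_general {L : ℝ} (hL : 0 < L) {g : ℝ → ℂ} {κ N : ℕ}
    (hg : ContDiff ℝ κ g) (hper : Periodic g L) (hκ : 2 ≤ κ) (hN : 1 ≤ N) (s : ℝ) :
    ‖(∫ θ in (0 : ℝ)..L, g θ) -
        ((L / N : ℝ) : ℂ) * ∑ i ∈ Finset.Icc 1 N, g ((i + s) * L / N)‖ ≤
      π ^ 2 * L ^ (κ + 1) / (3 * (2 * π * N) ^ κ) * ⨆ x : ℝ, ‖iteratedDeriv κ g x‖ := by
  have hN0 : (0 : ℝ) < N := by exact_mod_cast hN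
  set T := L / N with hTdef
  have hT : 0 < T := div_pos hL hN0
  set M := ⨆ x : ℝ, ‖iteratedDeriv κ g x‖
  have hNT : N * T = L := mul_div_cancel₀ L hN0.ne'
  have hderiv (x : ℝ) : ‖iteratedDeriv κ (translateSum g T N) x‖ ≤ N * M := by
    rw [iteratedDeriv_translateSum hg]
    exact norm_translateSum_le (norm_iteratedDeriv_le_iSup_of_periodic hper hL.ne' hg) x
  have hfold := norm_integral_period_sub_mul_le hT
    (periodic_translateSum (hNT.symm ▸ hper)) hκ (contDiff_translateSum hg) hderiv ((1 + s) * T)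
  rw [integral_translateSum hg.continuous, hNT, ← sum_Icc_eq_translateSum] at hfold
  simp only [mul_div_assoc _ L]
  refine hfold.trans_eq ?_
  simp only [hTdef, div_pow, mul_pow, pow_succ]
  field_simp

/-- Convergence rate of midpoint Riemann sums for smooth periodic functions. -/
theorem riemann_midpoint_rate (L : ℝ) (hL : 0 < L) (g : ℝ → ℂ)
    (hg : ContDiff ℝ (⊤ : ℕ∞) g) (hper : ∀ x, g (x + L) = g x)
    (κ N : ℕ) (hκ : 2 ≤ κ) (hN : 1 ≤ N) :
    ‖(∫ θ in (0:ℝ)..L, g θ) -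
        (((L / (N : ℝ)) : ℝ) : ℂ) * ∑ i ∈ Finset.Icc 1 N, g (((i : ℝ) - 1/2) * L / (N : ℝ))‖ ≤
      (π ^ 2 * L ^ (κ + 1)) / (3 * (2 * π * (N : ℝ)) ^ κ) *
        ⨆ x : ℝ, ‖iteratedDeriv κ g x‖ := by
  simpa only [sub_eq_add_neg] using
    riemann_midpoint_rate_general hL (contDiff_infty.1 hg κ) hper hκ hN (-(1 / 2))
end

section
/- Let L > 0, let κ ≥ 2 be an integer and let M > 0. There exist C > 0 and N₀ such that for every integer N ≥ N₀, all points s₁, …, s_N ∈ [0, L) and s̃₁, …, s̃_N ∈ [0, L) with |s_i − (i − 1)·L/N| ≤ M·N^{−(κ+1)} and |s̃_i − (i − 1/2)·L/N| ≤ M·N^{−(κ+1)} for all i, and every z ∈ ℝ^N: (i) |(1/N)·(N^{−1}·Σ_{k=1}^{N} (Σ_{j=1}^{N} cot((s̃_k − s_j)·π/L)·z_j)²)^{1/2} − (N^{−1}·Σ_{i=1}^{N} (z_i − ⟨z⟩)²)^{1/2}| ≤ C·N^{1−κ}·‖z‖_{ℓ¹}, and (ii) (1/N)·(N^{−1}·Σ_{k=1}^{N}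 (Σ_{j=1, j≠k}^{N} cot((s_k − s_j)·π/L)·z_j)²)^{1/2} ≤ (N^{−1}·Σ_{i=1}^{N} (z_i − ⟨z⟩)²)^{1/2} + C·N^{1−κ}·‖z‖_{ℓ¹}. -/
open Real

/-- The mean value of a vector. -/
noncomputable def avg {N : ℕ} (z : Fin N → ℝ) : ℝ := (N : ℝ)⁻¹ * ∑ i, z i

/-- The normalized `ℓ¹` norm of a vector. -/
noncomputable def l1norm {N : ℕ} (z : Fin N → ℝ) : ℝ := (N : ℝ)⁻¹ * ∑ i, |z i|

/-!
On the uniform mesh the rows and the columns of `A k j = cot ((k + θ - j) π / N)`, `θ ∈ {0, 1/2}`,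
sum to zero. Zero row sums give `2 ‖A z‖² = -∑ j l, (Aᵀ A) j l (z j - z l)²`. By the addition
formula `cot a cot b = cot (b - a) (cot a - cot b) - 1` and zero column sums, the off-diagonal
entries of `Aᵀ A` equal `-N` for `θ = 1/2`; for `θ = 0` they are at least `-N`, because at the
poles, where `cot` is read as `0`, the formula becomes the inequality `≥`. So `‖A z‖²` is equal to,
respectively at most, `N² ∑ i, (z i - avg z)²`.

Moving the points by `O(N ^ (-κ - 1))` moves every entry by `O(N ^ (1 - κ))`, since the sines stay
above a multiple of `1 / N`. This changes `N⁻¹` times the root mean square of `A z` by at most a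
constant times `N ^ (1 - κ)` times the normalized `ℓ¹` norm of `z`.
-/

open scoped Matrix

/-- The root mean square of a vector, i.e. its `ℓ²` norm normalized as `avg` and `l1norm` are. -/
noncomputable def rms {N : ℕ} (v : Fin N → ℝ) : ℝ := √((N : ℝ)⁻¹ * ∑ i, v i ^ 2)

/-- The matrix of the `L`-periodic cotangent kernel with targets `x` and sources `y`. Coincident
points contribute `0`, as `Real.cot 0 = 0`. -/
noncomputable def cotMatrix {N : ℕ} (L : ℝ) (x y : Fin N → ℝ) : Matrix (Fin N) (Fin N) ℝ :=
  Matrix.of fun k j ↦ cot ((x k - y j) * π / L)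

/-- The cotangent kernel on the uniform mesh of step `1` and period `N`, with targets shifted by `θ`
from the sources. The shift `1 / 2` puts the targets at the midpoints. -/
noncomputable def uniformCotMatrix (N : ℕ) (θ : ℝ) : Matrix (Fin N) (Fin N) ℝ :=
  cotMatrix N (fun k ↦ (k : ℕ) + θ) (fun j ↦ (j : ℕ))

section Rms

variable {N : ℕ}

lemma rms_eq_sqrt_mul_norm (v : Fin N → ℝ) : rms v = √(N : ℝ)⁻¹ * ‖WithLp.toLp 2 v‖ := by
  rw [rms, sqrt_mul (by positivity), EuclideanSpace.norm_eq]
  simp only [norm_eq_abs, sq_abs]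

lemma abs_rms_sub_rms_le (u v : Fin N → ℝ) : |rms u - rms v| ≤ rms (u - v) := by
  simp only [rms_eq_sqrt_mul_norm, ← mul_sub, abs_mul, abs_of_nonneg (sqrt_nonneg _),
    WithLp.toLp_sub]
  gcongr
  exact abs_norm_sub_norm_le _ _

lemma rms_le_of_forall_abs_le {v : Fin N → ℝ} {E : ℝ} (hE : 0 ≤ E) (h : ∀ i, |v i| ≤ E) :
    rms v ≤ E := by
  refine sqrt_le_iff.2 ⟨hE, ?_⟩
  calc (N : ℝ)⁻¹ * ∑ i, v i ^ 2 ≤ (N : ℝ)⁻¹ * ∑ _i : Fin N, E ^ 2 := by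
        refine mul_le_mul_of_nonneg_left (Finset.sum_le_sum fun i _ ↦ ?_) (by positivity)
        exact sq_le_sq' (abs_le.1 (h i)).1 (abs_le.1 (h i)).2
    _ = (N : ℝ)⁻¹ * N * E ^ 2 := by simp [mul_assoc]
    _ ≤ E ^ 2 := mul_le_of_le_one_left (sq_nonneg E) inv_mul_le_one

lemma mul_rms {c : ℝ} (hc : 0 ≤ c) (v : Fin N → ℝ) :
    c * rms v = √((N : ℝ)⁻¹ * (c ^ 2 * ∑ i, v i ^ 2)) := by
  rw [mul_left_comm, sqrt_mul (sq_nonneg c), sqrt_sq hc, rms]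

lemma abs_rms_mulVec_sub_rms_mulVec_le {m : ℕ} {A B : Matrix (Fin m) (Fin N) ℝ} {D : ℝ}
    (hD : 0 ≤ D) (h : ∀ k j, |A k j - B k j| ≤ D) (z : Fin N → ℝ) :
    |(N : ℝ)⁻¹ * rms (A *ᵥ z) - (N : ℝ)⁻¹ * rms (B *ᵥ z)| ≤ D * l1norm z := by
  have hrow (k : Fin m) : |(A *ᵥ z - B *ᵥ z) k| ≤ D * ∑ j, |z j| := by
    rw [← Matrix.sub_mulVec, Matrix.mulVec, dotProduct, Finset.mul_sum]
    refine (Finset.abs_sum_le_sum_abs _ _).trans (Finset.sum_le_sum fun j _ ↦ ?_)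
    rw [abs_mul]
    exact mul_le_mul_of_nonneg_right (h k j) (abs_nonneg _)
  calc |(N : ℝ)⁻¹ * rms (A *ᵥ z) - (N : ℝ)⁻¹ * rms (B *ᵥ z)|
      = (N : ℝ)⁻¹ * |rms (A *ᵥ z) - rms (B *ᵥ z)| := by
        rw [← mul_sub, abs_mul, abs_of_nonneg (by positivity)]
    _ ≤ (N : ℝ)⁻¹ * (D * ∑ j, |z j|) := by
        gcongr
        exact (abs_rms_sub_rms_le _ _).trans (rms_le_of_forall_abs_le (by positivity) hrow)
    _ = D * l1norm z := by rw [l1norm, mul_left_comm]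

end Rms

section QuadraticForms

lemma sum_sum_mul_sub_sq {ι R : Type*} [Fintype ι] [CommRing R] (a z : ι → R) :
    ∑ j, ∑ l, a j * a l * (z j - z l) ^ 2 =
      2 * ((∑ j, a j) * ∑ j, a j * z j ^ 2) - 2 * (∑ j, a j * z j) ^ 2 := by
  have expand (j l : ι) : a j * a l * (z j - z l) ^ 2 =
      a j * z j ^ 2 * a l + a j * (a l * z l ^ 2) - 2 * (a j * z j * (a l * z l)) := by ring
  simp only [expand, Finset.sum_sub_distrib, Finset.sum_add_distrib, ← Finset.mul_sum,
    ← Finset.sum_mul]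
  ring

lemma two_mul_sum_mulVec_sq {κ ι R : Type*} [Fintype κ] [Fintype ι] [CommRing R]
    {A : Matrix κ ι R} (hA : ∀ k, ∑ j, A k j = 0) (z : ι → R) :
    2 * ∑ k, (A *ᵥ z) k ^ 2 = -∑ j, ∑ l, (∑ k, A k j * A k l) * (z j - z l) ^ 2 := by
  have hrow (k : κ) : 2 * (A *ᵥ z) k ^ 2 = -∑ j, ∑ l, A k j * A k l * (z j - z l) ^ 2 := by
    simp [sum_sum_mul_sub_sq, hA, Matrix.mulVec, dotProduct]
  simp only [Finset.mul_sum, hrow, Finset.sum_neg_distrib, Finset.sum_mul]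
  rw [Finset.sum_comm]
  simp only [Finset.sum_comm (γ := κ)]

lemma sum_sum_sub_sq_eq_sum_sub_avg_sq {N : ℕ} (z : Fin N → ℝ) :
    ∑ j, ∑ l, (z j - z l) ^ 2 = 2 * N * ∑ i, (z i - avg z) ^ 2 := by
  obtain rfl | hN := eq_or_ne N 0
  · simp
  have hsum : ∑ i, (z i - avg z) = 0 := by
    simp only [Finset.sum_sub_distrib, Finset.sum_const, Finset.card_fin, nsmul_eq_mul, avg]
    field_simp
    simp
  simpa [hsum, mul_assoc] using sum_sum_mul_sub_sq 1 fun i ↦ z i - avg z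

end QuadraticForms

section Cotangent

lemma cot_neg (x : ℝ) : cot (-x) = -cot x := by
  simp [cot_eq_cos_div_sin, div_neg]

lemma cot_add_pi (x : ℝ) : cot (x + π) = cot x := by
  simp [cot_eq_cos_div_sin]

lemma cot_sub_cot {a b : ℝ} (ha : sin a ≠ 0) (hb : sin b ≠ 0) :
    cot a - cot b = sin (b - a) / (sin a * sin b) := by
  rw [cot_eq_cos_div_sin, cot_eq_cos_div_sin, sin_sub]
  field_simp

lemma cot_mul_cot {a b : ℝ} (ha : sin a ≠ 0) (hb : sin b ≠ 0) (hab : sin (b - a) ≠ 0) :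
    cot a * cot b = cot (b - a) * (cot a - cot b) - 1 := by
  calc cot a * cot b = cos (b - a) / (sin a * sin b) - 1 := by
        rw [cot_eq_cos_div_sin, cot_eq_cos_div_sin, cos_sub]
        field_simp
        ring
    _ = cot (b - a) * (cot a - cot b) - 1 := by
        rw [cot_sub_cot ha hb, cot_eq_cos_div_sin, div_mul_div_cancel₀ hab]

lemma cot_eq_zero_of_sin_eq_zero {x : ℝ} (hx : sin x = 0) : cot x = 0 := by
  rw [cot_eq_cos_div_sin, hx, div_zero]

lemma cot_sub_of_sin_eq_zero {a b : ℝ} (ha : sin a = 0) : cot (b - a) = cot b := by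
  have hc : cos a ≠ 0 := fun h ↦ by simpa [ha, h] using sin_sq_add_cos_sq a
  simp [cot_eq_cos_div_sin, sin_sub, cos_sub, ha, hc, mul_div_mul_right]

/-- Unlike `cot_mul_cot` this survives at the poles, where `Real.cot` takes the value `0`: it is
what makes the diagonal entries of the unshifted kernel harmless. -/
lemma cot_sub_mul_sub_one_le (a b : ℝ) :
    cot (b - a) * (cot a - cot b) - 1 ≤ cot a * cot b := by
  by_cases ha : sin a = 0
  · rw [cot_sub_of_sin_eq_zero ha, cot_eq_zero_of_sin_eq_zero ha]
    nlinarith [sq_nonneg (cot b)]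
  by_cases hb : sin b = 0
  · rw [← neg_sub a b, cot_neg, cot_sub_of_sin_eq_zero hb, cot_eq_zero_of_sin_eq_zero hb]
    nlinarith [sq_nonneg (cot a)]
  by_cases hab : sin (b - a) = 0
  · have heq : cot a = cot b := by
      rw [← sub_eq_zero, cot_sub_cot ha hb, hab, zero_div]
    rw [heq]
    nlinarith [sq_nonneg (cot b)]
  · exact (cot_mul_cot ha hb hab).ge

lemma two_mul_div_le_abs_sin {r R t : ℝ} (hr : 0 < r) (h₁ : r ≤ |t|) (h₂ : |t| ≤ R - r) :
    2 * r / R ≤ |sin (t * π / R)| := by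
  have hR : 0 < R := by linarith
  have near_zero {x : ℝ} (hx : r ≤ x) (hx' : x ≤ R / 2) : 2 * r / R ≤ sin (x * π / R) := by
    have hx₀ : 0 ≤ x := hr.le.trans hx
    calc 2 * r / R ≤ 2 / π * (x * π / R) := by
          rw [show 2 / π * (x * π / R) = 2 * x / R by field_simp]
          gcongr
      _ ≤ sin (x * π / R) := mul_le_sin (by positivity) (by
          rw [div_le_iff₀ hR]
          nlinarith [pi_pos])
  have hsin : 2 * r / R ≤ sin (|t| * π / R) := by
    obtain h | h := le_total |t| (R / 2)
    · exact near_zero h₁ h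
    · rw [← sin_pi_sub, show π - |t| * π / R = (R - |t|) * π / R by field_simp]
      exact near_zero (by linarith) (by linarith)
  calc 2 * r / R ≤ |sin (|t| * π / R)| := hsin.trans (le_abs_self _)
    _ = |sin (t * π / R)| := by
      obtain h | h := abs_choice t
      · rw [h]
      · rw [h, neg_mul, neg_div, sin_neg, abs_neg]

lemma abs_cot_sub_cot_le {a b δ ε : ℝ} (hε : 0 < ε) (hb : ε ≤ |sin b|) (hab : |a - b| ≤ δ)
    (hδ : δ ≤ ε / 2) : |cot a - cot b| ≤ 2 * δ / ε ^ 2 := by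
  have hδ₀ : 0 ≤ δ := (abs_nonneg _).trans hab
  have ha : ε / 2 ≤ |sin a| := by
    have hlip : |sin b - sin a| ≤ |a - b| := by
      simpa [Real.dist_eq, abs_sub_comm] using lipschitzWith_sin.dist_le_mul a b
    linarith [abs_sub_abs_le_abs_sub (sin b) (sin a)]
  rw [cot_sub_cot (abs_pos.1 (by linarith)) (abs_pos.1 (by linarith)), abs_div, abs_mul]
  calc |sin (b - a)| / (|sin a| * |sin b|) ≤ δ / (ε / 2 * ε) := by
        gcongr
        exact abs_sin_le_abs.trans (by rwa [abs_sub_comm])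
    _ = 2 * δ / ε ^ 2 := by field_simp

end Cotangent

section UniformMesh

variable {N : ℕ}

lemma sum_fin_sub_of_periodic {M : Type*} [AddCommMonoid M] {f : ℤ → M}
    (hf : Function.Periodic f N) (c : ℤ) :
    ∑ i : Fin N, f (c - (i : ℕ)) = ∑ i : Fin N, f (i : ℕ) := by
  obtain rfl | hN := N.eq_zero_or_pos
  · simp
  have hpos (m : ℤ) : 0 ≤ m % N := Int.emod_nonneg _ (by lia)
  let σ (i : Fin N) : Fin N := ⟨((c - (i : ℕ)) % N).toNat, by
    have := Int.emod_lt_of_pos (c - (i : ℕ)) (by lia : (0 : ℤ) < N)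
    lia⟩
  have coe_σ (i : Fin N) : (((σ i : Fin N) : ℕ) : ℤ) = (c - (i : ℕ)) % N :=
    Int.toNat_of_nonneg (hpos _)
  have σ_σ : Function.Involutive σ := fun i ↦ by
    have : (((σ (σ i) : Fin N) : ℕ) : ℤ) = (i : ℕ) := by
      rw [coe_σ, coe_σ, Int.sub_emod_emod, sub_sub_cancel, Int.emod_eq_of_lt] <;> omega
    exact Fin.ext (by exact_mod_cast this)
  refine Fintype.sum_equiv (Function.Involutive.toPerm σ σ_σ) _ _ fun i ↦ ?_
  rw [Function.Involutive.coe_toPerm, coe_σ, Int.emod_def, mul_comm, ← smul_eq_mul,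
    hf.sub_zsmul_eq]

/-- The reflection `i ↦ -2 * x - i` of `ℤ / N` changes the sign of every summand. -/
lemma sum_cot_add_mul_pi_div_eq_zero {x : ℝ} {c : ℤ} (hx : 2 * x = c) :
    ∑ i : Fin N, cot (((i : ℕ) + x) * π / N) = 0 := by
  obtain rfl | hN := eq_or_ne N 0
  · simp
  let f (m : ℤ) : ℝ := cot ((m + x) * π / N)
  have periodic : Function.Periodic f N := fun m ↦ by
    simp only [f]
    rw [← cot_add_pi ((m + x) * π / N)]
    congr 1
    push_cast
    field_simp
    ring
  have antisymm (m : ℤ) : f (-c - m) = -f m := by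
    simp only [f]
    rw [← cot_neg]
    congr 1
    push_cast
    rw [← hx]
    ring
  have hreflect := sum_fin_sub_of_periodic periodic (-c)
  simp only [antisymm, Finset.sum_neg_distrib] at hreflect
  simpa [f] using neg_eq_self.1 hreflect

lemma uniformCotMatrix_apply (θ : ℝ) (k j : Fin N) :
    uniformCotMatrix N θ k j = cot (((k : ℕ) + θ - (j : ℕ)) * π / N) := rfl

lemma sum_uniformCotMatrix_col {θ : ℝ} {c : ℤ} (hθ : 2 * θ = c) (j : Fin N) :
    ∑ k, uniformCotMatrix N θ k j = 0 := by
  simp only [uniformCotMatrix_apply, add_sub_assoc]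
  exact sum_cot_add_mul_pi_div_eq_zero (c := c - 2 * (j : ℕ)) (by push_cast; linarith)

lemma sum_uniformCotMatrix_row {θ : ℝ} {c : ℤ} (hθ : 2 * θ = c) (k : Fin N) :
    ∑ j, uniformCotMatrix N θ k j = 0 := by
  have hneg (j : Fin N) :
      uniformCotMatrix N θ k j = -cot (((j : ℕ) + (-(k : ℕ) - θ)) * π / N) := by
    rw [uniformCotMatrix_apply, ← cot_neg]
    ring_nf
  simp only [hneg, Finset.sum_neg_distrib, neg_eq_zero]
  exact sum_cot_add_mul_pi_div_eq_zero (c := -2 * (k : ℕ) - c) (by push_cast; linarith)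

lemma sum_mul_sub_uniformCotMatrix_sub_one {θ : ℝ} {c : ℤ} (hθ : 2 * θ = c) (x : ℝ) (j l : Fin N) :
    ∑ k, (x * (uniformCotMatrix N θ k j - uniformCotMatrix N θ k l) - 1) = -N := by
  simp [← Finset.mul_sum, sum_uniformCotMatrix_col hθ]

lemma neg_natCast_le_sum_uniformCotMatrix_mul {θ : ℝ} {c : ℤ} (hθ : 2 * θ = c) (j l : Fin N) :
    -(N : ℝ) ≤ ∑ k, uniformCotMatrix N θ k j * uniformCotMatrix N θ k l := by
  rw [← sum_mul_sub_uniformCotMatrix_sub_one hθ (cot (((j : ℕ) - (l : ℕ)) * π / N)) j l]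
  gcongr with k
  convert! cot_sub_mul_sub_one_le _ _ using 4
  ring

lemma abs_val_sub_val_le (k j : Fin N) : |((k : ℕ) : ℝ) - (j : ℕ)| ≤ N - 1 := by
  have : |((k : ℕ) : ℤ) - (j : ℕ)| ≤ N - 1 := abs_le.2 ⟨by omega, by omega⟩
  exact_mod_cast this

lemma inv_le_abs_sin_of_ne {k j : Fin N} (hkj : k ≠ j) :
    (N : ℝ)⁻¹ ≤ |sin (((k : ℕ) - (j : ℕ)) * π / N)| := by
  have hdist : (1 : ℝ) ≤ |((k : ℕ) : ℝ) - (j : ℕ)| := by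
    have : (1 : ℤ) ≤ |((k : ℕ) : ℤ) - (j : ℕ)| := Int.one_le_abs (by omega)
    exact_mod_cast this
  simpa using two_mul_div_le_abs_sin one_half_pos (by linarith)
    ((abs_val_sub_val_le k j).trans (by linarith))

lemma inv_le_abs_sin_add_half (k j : Fin N) :
    (N : ℝ)⁻¹ ≤ |sin (((k : ℕ) + 1 / 2 - (j : ℕ)) * π / N)| := by
  have hlower : (1 / 2 : ℝ) ≤ |((k : ℕ) : ℝ) + 1 / 2 - (j : ℕ)| := by
    have : (1 : ℤ) ≤ |2 * ((k : ℕ) : ℤ) + 1 - 2 * (j : ℕ)| := Int.one_le_abs (by lia)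
    have : (1 : ℝ) ≤ |2 * ((k : ℕ) : ℝ) + 1 - 2 * (j : ℕ)| := by exact_mod_cast this
    rw [show 2 * ((k : ℕ) : ℝ) + 1 - 2 * (j : ℕ) = 2 * ((k : ℕ) + 1 / 2 - (j : ℕ)) by ring,
      abs_mul, abs_two] at this
    linarith
  have hupper : |((k : ℕ) : ℝ) + 1 / 2 - (j : ℕ)| ≤ N - 1 / 2 := by
    have := abs_le.1 (abs_val_sub_val_le k j)
    exact abs_le.2 ⟨by linarith, by linarith⟩
  simpa using two_mul_div_le_abs_sin one_half_pos hlower hupper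

lemma sum_uniformCotMatrix_half_mul {j l : Fin N} (hjl : j ≠ l) :
    ∑ k, uniformCotMatrix N (1 / 2) k j * uniformCotMatrix N (1 / 2) k l = -N := by
  have sin_ne_zero {x : ℝ} (hx : (N : ℝ)⁻¹ ≤ |sin x|) : sin x ≠ 0 :=
    abs_pos.1 ((inv_pos.2 (by exact_mod_cast j.pos)).trans_le hx)
  rw [← sum_mul_sub_uniformCotMatrix_sub_one (θ := 1 / 2) (c := 1) (by norm_num)
    (cot (((j : ℕ) - (l : ℕ)) * π / N)) j l]
  refine Finset.sum_congr rfl fun k _ ↦ ?_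
  have hsub : ((j : ℕ) - (l : ℕ) : ℝ) * π / N =
      ((k : ℕ) + 1 / 2 - (l : ℕ)) * π / N - ((k : ℕ) + 1 / 2 - (j : ℕ)) * π / N := by ring
  have hjl' := sin_ne_zero (inv_le_abs_sin_of_ne hjl)
  rw [hsub] at hjl' ⊢
  exact cot_mul_cot (sin_ne_zero (inv_le_abs_sin_add_half k j))
    (sin_ne_zero (inv_le_abs_sin_add_half k l)) hjl'

lemma rms_uniformCotMatrix_mulVec_le {θ : ℝ} {c : ℤ} (hθ : 2 * θ = c) (z : Fin N → ℝ) :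
    rms (uniformCotMatrix N θ *ᵥ z) ≤ N * rms fun i ↦ z i - avg z := by
  have hsum : ∑ j, ∑ l, -(N : ℝ) * (z j - z l) ^ 2 ≤ ∑ j, ∑ l,
      (∑ k, uniformCotMatrix N θ k j * uniformCotMatrix N θ k l) * (z j - z l) ^ 2 := by
    gcongr with j _ l
    exact neg_natCast_le_sum_uniformCotMatrix_mul hθ j l
  simp only [← Finset.mul_sum, sum_sum_sub_sq_eq_sum_sub_avg_sq] at hsum
  rw [mul_rms N.cast_nonneg, rms]
  gcongr
  linarith [two_mul_sum_mulVec_sq (sum_uniformCotMatrix_row hθ) z]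

lemma rms_uniformCotMatrix_half_mulVec (z : Fin N → ℝ) :
    rms (uniformCotMatrix N (1 / 2) *ᵥ z) = N * rms fun i ↦ z i - avg z := by
  have hterm (j l : Fin N) :
      (∑ k, uniformCotMatrix N (1 / 2) k j * uniformCotMatrix N (1 / 2) k l) * (z j - z l) ^ 2 =
        -N * (z j - z l) ^ 2 := by
    obtain rfl | hjl := eq_or_ne j l
    · simp
    · rw [sum_uniformCotMatrix_half_mul hjl]
  have hsum := two_mul_sum_mulVec_sq (sum_uniformCotMatrix_row (N := N) (θ := 1 / 2) (c := 1)
    (by norm_num)) z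
  simp only [hterm, ← Finset.mul_sum, sum_sum_sub_sq_eq_sum_sub_avg_sq] at hsum
  rw [mul_rms N.cast_nonneg, rms]
  congr 2
  linarith

end UniformMesh

section PerturbedMesh

variable {N : ℕ} {L δ : ℝ}

lemma abs_cot_sub_cot_le_of_near_mesh {n x y p q : ℝ} (hL : 0 < L) (hn : 0 < n)
    (hδ : 4 * π * δ * n ≤ L) (hx : |x - p * L / n| ≤ δ) (hy : |y - q * L / n| ≤ δ)
    (hsin : n⁻¹ ≤ |sin ((p - q) * π / n)|) :
    |cot ((x - y) * π / L) - cot ((p - q) * π / n)| ≤ 4 * π / L * n ^ 2 * δ := by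
  have hdist : |(x - y) * π / L - (p - q) * π / n| ≤ 2 * δ * (π / L) := by
    rw [show (x - y) * π / L - (p - q) * π / n =
      ((x - p * L / n) - (y - q * L / n)) * (π / L) by field_simp; ring, abs_mul,
      abs_of_pos (by positivity : 0 < π / L)]
    gcongr
    linarith [abs_sub (x - p * L / n) (y - q * L / n)]
  have hsmall : 2 * δ * (π / L) ≤ n⁻¹ / 2 := by
    rw [inv_eq_one_div, div_div, mul_div_assoc', div_le_div_iff₀ hL (by positivity)]
    linarith
  refine (abs_cot_sub_cot_le (inv_pos.2 hn) hsin hdist hsmall).trans_eq ?_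
  field_simp
  ring

lemma abs_rms_cotMatrix_midpoint_sub_rms_le (hL : 0 < L) (hN : 0 < N) (hδ : 4 * π * δ * N ≤ L)
    {s st : Fin N → ℝ} (hs : ∀ i, |s i - (i : ℕ) * L / N| ≤ δ)
    (hst : ∀ i, |st i - ((i : ℕ) + 1 / 2) * L / N| ≤ δ) (z : Fin N → ℝ) :
    |(N : ℝ)⁻¹ * rms (cotMatrix L st s *ᵥ z) - rms fun i ↦ z i - avg z| ≤
      4 * π / L * N ^ 2 * δ * l1norm z := by
  have hN' : (0 : ℝ) < N := by exact_mod_cast hN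
  have hδ₀ : 0 ≤ δ := (abs_nonneg _).trans (hs ⟨0, hN⟩)
  have hentry (k j : Fin N) : |cotMatrix L st s k j - uniformCotMatrix N (1 / 2) k j| ≤
      4 * π / L * N ^ 2 * δ :=
    abs_cot_sub_cot_le_of_near_mesh hL hN' hδ (hst k) (hs j) (inv_le_abs_sin_add_half k j)
  have := abs_rms_mulVec_sub_rms_mulVec_le (by positivity) hentry z
  rwa [rms_uniformCotMatrix_half_mulVec, inv_mul_cancel_left₀ hN'.ne'] at this

lemma rms_cotMatrix_self_le (hL : 0 < L) (hN : 0 < N) (hδ : 4 * π * δ * N ≤ L)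
    {s : Fin N → ℝ} (hs : ∀ i, |s i - (i : ℕ) * L / N| ≤ δ) (z : Fin N → ℝ) :
    (N : ℝ)⁻¹ * rms (cotMatrix L s s *ᵥ z) ≤
      rms (fun i ↦ z i - avg z) + 4 * π / L * N ^ 2 * δ * l1norm z := by
  have hN' : (0 : ℝ) < N := by exact_mod_cast hN
  have hδ₀ : 0 ≤ δ := (abs_nonneg _).trans (hs ⟨0, hN⟩)
  have hentry (k j : Fin N) : |cotMatrix L s s k j - uniformCotMatrix N 0 k j| ≤
      4 * π / L * N ^ 2 * δ := by
    rw [uniformCotMatrix_apply, add_zero]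
    obtain rfl | hkj := eq_or_ne k j
    · simp only [cotMatrix, Matrix.of_apply, sub_self, abs_zero, zero_mul, zero_div]
      positivity
    · exact abs_cot_sub_cot_le_of_near_mesh hL hN' hδ (hs k) (hs j) (inv_le_abs_sin_of_ne hkj)
  have hpert := (abs_le.1 (abs_rms_mulVec_sub_rms_mulVec_le (by positivity) hentry z)).2
  have hexact : (N : ℝ)⁻¹ * rms (uniformCotMatrix N 0 *ᵥ z) ≤ rms fun i ↦ z i - avg z :=
    (inv_mul_le_iff₀ hN').2 (rms_uniformCotMatrix_mulVec_le (c := 0) (by simp) z)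
  linarith

lemma cotMatrix_self_mulVec (L : ℝ) (s z : Fin N → ℝ) (k : Fin N) :
    (cotMatrix L s s *ᵥ z) k = ∑ j ∈ Finset.univ.erase k, cot ((s k - s j) * π / L) * z j :=
  (Finset.sum_erase Finset.univ
    (f := fun j ↦ cot ((s k - s j) * π / L) * z j) (by simp [cot_eq_cos_div_sin])).symm

end PerturbedMesh

theorem cot_l2_well_distributed_general (L : ℝ) (hL : 0 < L) (κ : ℕ) (hκ : 1 ≤ κ) (M : ℝ)
    (hM : 0 < M) :
    ∃ C > 0, ∃ N₀ : ℕ, ∀ N : ℕ, N₀ ≤ N → ∀ s st : Fin N → ℝ,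
      (∀ i : Fin N, |s i - ((i : ℕ) : ℝ) * L / (N : ℝ)| ≤ M / (N : ℝ) ^ (κ + 1)) →
      (∀ i : Fin N, |st i - (((i : ℕ) : ℝ) + 1/2) * L / (N : ℝ)| ≤ M / (N : ℝ) ^ (κ + 1)) →
      ∀ z : Fin N → ℝ,
      (|(N : ℝ)⁻¹ * Real.sqrt ((N : ℝ)⁻¹ *
            ∑ k : Fin N, (∑ j : Fin N, Real.cot ((st k - s j) * π / L) * z j) ^ 2)
          - Real.sqrt ((N : ℝ)⁻¹ * ∑ i : Fin N, (z i - avg z) ^ 2)|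
        ≤ C / (N : ℝ) ^ (κ - 1) * l1norm z) ∧
      ((N : ℝ)⁻¹ * Real.sqrt ((N : ℝ)⁻¹ *
            ∑ k : Fin N, (∑ j ∈ Finset.univ.erase k, Real.cot ((s k - s j) * π / L) * z j) ^ 2)
        ≤ Real.sqrt ((N : ℝ)⁻¹ * ∑ i : Fin N, (z i - avg z) ^ 2)
          + C / (N : ℝ) ^ (κ - 1) * l1norm z) := by
  refine ⟨4 * π * M / L, by positivity, ⌈4 * π * M / L⌉₊ + 1, fun N hN₀ s st hs hst z ↦ ?_⟩
  have hN : 0 < N := by lia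
  have hN' : (1 : ℝ) ≤ N := by exact_mod_cast hN
  have hδ : 4 * π * (M / (N : ℝ) ^ (κ + 1)) * N ≤ L := by
    have hceil : 4 * π * M / L ≤ N := Nat.le_of_ceil_le (by lia)
    calc 4 * π * (M / (N : ℝ) ^ (κ + 1)) * N = 4 * π * M / N ^ κ := by
          rw [pow_succ]
          field_simp
      _ ≤ L := by
        rw [div_le_iff₀' (by positivity), ← div_le_iff₀ hL]
        exact hceil.trans (le_self_pow₀ hN' (by lia))
  have hC : 4 * π / L * N ^ 2 * (M / (N : ℝ) ^ (κ + 1)) = 4 * π * M / L / N ^ (κ - 1) := by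
    rw [show κ + 1 = κ - 1 + 2 by lia, pow_add]
    field_simp
  simp only [← hC, ← cotMatrix_self_mulVec]
  exact ⟨abs_rms_cotMatrix_midpoint_sub_rms_le hL hN hδ hs hst z,
    rms_cotMatrix_self_le hL hN hδ hs z⟩

/-- Approximate `ℓ²` identities for cotangent sums over a well distributed mesh. -/
theorem cot_l2_well_distributed (L : ℝ) (hL : 0 < L) (κ : ℕ) (hκ : 2 ≤ κ) (M : ℝ) (hM : 0 < M) :
    ∃ C > 0, ∃ N₀ : ℕ, ∀ N : ℕ, N₀ ≤ N → ∀ s st : Fin N → ℝ,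
      (∀ i : Fin N, s i ∈ Set.Ico (0:ℝ) L ∧
        |s i - ((i : ℕ) : ℝ) * L / (N : ℝ)| ≤ M / (N : ℝ) ^ (κ + 1)) →
      (∀ i : Fin N, st i ∈ Set.Ico (0:ℝ) L ∧
        |st i - (((i : ℕ) : ℝ) + 1/2) * L / (N : ℝ)| ≤ M / (N : ℝ) ^ (κ + 1)) →
      ∀ z : Fin N → ℝ,
      (|(N : ℝ)⁻¹ * Real.sqrt ((N : ℝ)⁻¹ *
            ∑ k : Fin N, (∑ j : Fin N, Real.cot ((st k - s j) * π / L) * z j) ^ 2)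
          - Real.sqrt ((N : ℝ)⁻¹ * ∑ i : Fin N, (z i - avg z) ^ 2)|
        ≤ C / (N : ℝ) ^ (κ - 1) * l1norm z) ∧
      ((N : ℝ)⁻¹ * Real.sqrt ((N : ℝ)⁻¹ *
            ∑ k : Fin N, (∑ j ∈ Finset.univ.erase k, Real.cot ((s k - s j) * π / L) * z j) ^ 2)
        ≤ Real.sqrt ((N : ℝ)⁻¹ * ∑ i : Fin N, (z i - avg z) ^ 2)
          + C / (N : ℝ) ^ (κ - 1) * l1norm z) := by
  obtain ⟨C, hC, N₀, h⟩ := cot_l2_well_distributed_general L hL κ (by lia) M hM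
  exact ⟨C, hC, N₀, fun N hN s st hs hst ↦ h N hN s st (fun i ↦ (hs i).2) fun i ↦ (hst i).2⟩
end

section
/- Assume the curve setup and let a well distributed mesh with parameters κ ≥ 2 and M > 0 be given. Then there exist C > 0 and N₀ such that for every N ≥ N₀ (in particular the matrices A_N, Ã_N, B_N, B̃_N are well defined) and every z ∈ ℝ^N: (1/N)·(‖A_N z‖_{ℓ^p} + ‖Ã_N z‖_{ℓ^p}) ≤ C·‖z‖_{ℓ¹} for every p ∈ [1, ∞], and (1/N)·(‖B_N z‖_{ℓ²} + ‖B̃_N z‖_{ℓ²}) ≤ C·‖z‖_{ℓ²}. -/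
open Real MeasureTheory

/-- Dot product of two points of the plane `ℝ² ≃ ℂ`. -/
noncomputable def dotR (z w : ℂ) : ℝ := z.re * w.re + z.im * w.im

/-- The unit normal vector `n(s) = (l₂'(s), -l₁'(s))` of a curve `l`. -/
noncomputable def normalv (l : ℝ → ℂ) (s : ℝ) : ℂ := -Complex.I * deriv l s

/-- The discretized double layer matrix with rows evaluated at the points `a` and
columns at the points `b`. -/
noncomputable def Amat (l : ℝ → ℂ) {N : ℕ} (a b : Fin N → ℝ) : Matrix (Fin N) (Fin N) ℝ :=
  Matrix.of fun i j => dotR (l (a i) - l (b j)) (normalv l (a i)) / ‖l (a i) - l (b j)‖ ^ 2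

/-- The discretized singular (tangential) matrix with rows evaluated at the points `a`
and columns at the points `b`. -/
noncomputable def Bmat (l : ℝ → ℂ) {N : ℕ} (a b : Fin N → ℝ) : Matrix (Fin N) (Fin N) ℝ :=
  Matrix.of fun i j => dotR (l (a i) - l (b j)) (deriv l (a i)) / ‖l (a i) - l (b j)‖ ^ 2

/-- The normalized `ℓ²` norm of a vector. -/
noncomputable def l2norm {N : ℕ} (z : Fin N → ℝ) : ℝ := Real.sqrt ((N : ℝ)⁻¹ * ∑ i, z i ^ 2)

/-!
The entries of the tangential and of the double layer matrix are the real and imaginary parts of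
the kernel `l'(a) / (l(a) - l(b))`. By Taylor's formula and the chord-arc inequality, this kernel
differs from `1 / (a - b)` by a bounded amount as long as `a` and `b` are at most half a period
apart. Since `1 / (a - b)` is real, the double layer matrix has bounded entries. Moreover the
kernels of any two curves with the same period differ by a bounded amount, and a matrix with
bounded entries has norm `O(N)` on `ℓ²`, so only one curve has to be treated: the circle.

For the circle the kernel is a multiple of `1 / (1 - y / x)`. On shifted equispaced nodes, `x` and
`y` run through the `N`-th roots of two distinct unimodular numbers `p` and `q`, and the geometric
sum factors this Cauchy matrix, up to the scalar `1 - q / p`, into two Vandermonde matrices, each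
of which is `√N` times a unitary matrix. Hence its norm on `ℓ²` is at most `N / |p - q|`.
-/

open Filter Matrix
open scoped NNReal

section NormedRing

theorem norm_pow_sub_pow_le {R : Type*} [SeminormedRing R] [NormOneClass R] {x y : R}
    (hx : ‖x‖ ≤ 1) (hy : ‖y‖ ≤ 1) (n : ℕ) : ‖x ^ n - y ^ n‖ ≤ n * ‖x - y‖ := by
  induction n with
  | zero => simp
  | succ n ih =>
    have hyn : ‖y ^ n‖ ≤ 1 := (norm_pow_le y n).trans (pow_le_one₀ (norm_nonneg y) hy)
    calc ‖x ^ (n + 1) - y ^ (n + 1)‖ = ‖x * (x ^ n - y ^ n) + (x - y) * y ^ n‖ := by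
          rw [pow_succ', pow_succ']
          noncomm_ring
      _ ≤ ‖x‖ * ‖x ^ n - y ^ n‖ + ‖x - y‖ * ‖y ^ n‖ :=
          norm_add_le_of_le (norm_mul_le _ _) (norm_mul_le _ _)
      _ ≤ 1 * (n * ‖x - y‖) + ‖x - y‖ * 1 := by gcongr
      _ = (n + 1 : ℕ) * ‖x - y‖ := by
          push_cast
          ring

theorem norm_inv_sub_inv_le {𝕜 : Type*} [NormedDivisionRing 𝕜] {x y : 𝕜} {m : ℝ} (hm : 0 < m)
    (hx : m ≤ ‖x‖) (hxy : ‖x - y‖ ≤ m / 2) : ‖x⁻¹ - y⁻¹‖ ≤ 2 * ‖x - y‖ / m ^ 2 := by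
  have hy : m / 2 ≤ ‖y‖ := by linarith [norm_sub_norm_le x y]
  calc ‖x⁻¹ - y⁻¹‖ = ‖x - y‖ / (‖x‖ * ‖y‖) := by
        rw [← dist_eq_norm, dist_inv_inv₀ (norm_pos_iff.1 (hm.trans_le hx))
          (norm_pos_iff.1 ((half_pos hm).trans_le hy)), dist_eq_norm]
    _ ≤ ‖x - y‖ / (m * (m / 2)) := by gcongr
    _ = 2 * ‖x - y‖ / m ^ 2 := by field_simp

end NormedRing

section Periodic

theorem eq_of_periodic_of_injOn_Ico {α : Type*} {f : ℝ → α} {L : ℝ} (hL : 0 < L)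
    (hper : Function.Periodic f L) (hinj : Set.InjOn f (Set.Ico 0 L)) {a b : ℝ}
    (hab : |a - b| < L) (h : f a = f b) : a = b := by
  have hmod (x : ℝ) : f (toIcoMod hL 0 x) = f x := hper.sub_zsmul_eq _
  have hmem (x : ℝ) : toIcoMod hL 0 x ∈ Set.Ico 0 L := by simpa using toIcoMod_mem_Ico hL 0 x
  obtain ⟨n, hn⟩ := (toIcoMod_eq_toIcoMod hL).1 <|
    hinj (hmem a) (hmem b) (by rw [hmod, hmod, h])
  rw [abs_sub_comm, hn, zsmul_eq_mul, abs_mul, abs_of_pos hL, mul_lt_iff_lt_one_left hL] at hab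
  have hn0 : n = 0 := Int.abs_lt_one_iff.1 (by exact_mod_cast hab)
  rw [hn0, zero_smul, sub_eq_zero] at hn
  exact hn.symm

theorem forall_of_periodic_of_abs_sub_le {α : Type*} {P : α → Prop} {f : ℝ → α} {L : ℝ}
    (hL : 0 < L) (hf : Function.Periodic f L) (a : ℝ) (h : ∀ b, |a - b| ≤ L / 2 → P (f b))
    (b : ℝ) : P (f b) := by
  obtain ⟨b', hb', hbb'⟩ := hf.exists_mem_Ico hL b (a - L / 2)
  rw [hbb']
  refine h b' (abs_le.2 ⟨?_, ?_⟩) <;> linarith [hb'.1, hb'.2]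

theorem periodic_deriv {𝕜 E : Type*} [NontriviallyNormedField 𝕜] [NormedAddCommGroup E]
    [NormedSpace 𝕜 E] {f : 𝕜 → E} {L : 𝕜} (hf : Function.Periodic f L) :
    Function.Periodic (deriv f) L := fun s ↦ by
  rw [← deriv_comp_add_const, funext hf]

end Periodic

section Curves

variable {E : Type*} [NormedAddCommGroup E] [NormedSpace ℝ E]

theorem norm_sub_sub_smul_deriv_le {f : ℝ → E} {K : ℝ≥0} (hf : Differentiable ℝ f)
    (hK : LipschitzWith K (deriv f)) (a b : ℝ) :
    ‖f a - f b - (a - b) • deriv f a‖ ≤ K * |a - b| ^ 2 := by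
  have hderiv (x : ℝ) (hx : x ∈ Set.uIcc a b) : ‖deriv f x - deriv f a‖ ≤ K * |a - b| :=
    (hK.norm_sub_le x a).trans <| by
      gcongr
      simpa [abs_sub_comm a b] using Set.abs_sub_left_of_mem_uIcc hx
  have hmean := (convex_uIcc a b).norm_image_sub_le_of_norm_hasDerivWithin_le
    (f := fun x ↦ f x - x • deriv f a) (f' := fun x ↦ deriv f x - deriv f a)
    (fun x _ ↦ ((hf x).hasDerivAt.sub
      (by simpa using (hasDerivAt_id x).smul_const _)).hasDerivWithinAt)
    hderiv Set.right_mem_uIcc Set.left_mem_uIcc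
  calc ‖f a - f b - (a - b) • deriv f a‖
      = ‖f a - a • deriv f a - (f b - b • deriv f a)‖ := by rw [sub_smul, sub_sub_sub_comm]
    _ ≤ K * |a - b| ^ 2 := hmean.trans_eq (by rw [Real.norm_eq_abs, sq, mul_assoc])

/-- A regular simple closed curve of class `C^{1,1}`, parametrized with period `L`.
The parametrization need not have unit speed. -/
structure IsSimpleClosedCurve (L : ℝ) (l : ℝ → E) : Prop where
  differentiable : Differentiable ℝ l
  exists_lipschitzWith_deriv : ∃ K, LipschitzWith K (deriv l)
  periodic : Function.Periodic l L
  deriv_ne_zero : ∀ s, deriv l s ≠ 0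
  injOn : Set.InjOn l (Set.Ico 0 L)

/-- The average of the velocity `l'` over the segment from `a` to `a + u`. It extends the
difference quotient of `l` continuously to `u = 0`. -/
noncomputable def meanVelocity (l : ℝ → E) (a u : ℝ) : E := ∫ t in (0 : ℝ)..1, deriv l (a + t * u)

variable {l : ℝ → E} {L : ℝ}

theorem smul_meanVelocity [CompleteSpace E] (hl : Differentiable ℝ l)
    (hl' : Continuous (deriv l)) (a u : ℝ) : u • meanVelocity l a u = l (a + u) - l a := by
  simpa [meanVelocity] using intervalIntegral.integral_unitInterval_deriv_eq_sub
    (z₀ := a) (z₁ := u) (f' := deriv l) (by fun_prop) (fun t _ ↦ (hl _).hasDerivAt)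

theorem continuous_meanVelocity (hl' : Continuous (deriv l)) :
    Continuous fun p : ℝ × ℝ ↦ meanVelocity l p.1 p.2 :=
  intervalIntegral.continuous_parametric_intervalIntegral_of_continuous' (by fun_prop) 0 1

namespace IsSimpleClosedCurve

theorem continuous_deriv (hl : IsSimpleClosedCurve L l) : Continuous (deriv l) :=
  let ⟨_, hK⟩ := hl.exists_lipschitzWith_deriv
  hK.continuous

theorem meanVelocity_ne_zero [CompleteSpace E] (hL : 0 < L) (hl : IsSimpleClosedCurve L l)
    {a u : ℝ} (hu : |u| < L) : meanVelocity l a u ≠ 0 := by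
  intro h
  have hsecant := smul_meanVelocity hl.differentiable hl.continuous_deriv a u
  rw [h, smul_zero, eq_comm, sub_eq_zero] at hsecant
  have hu0 : u = 0 := by
    simpa using eq_of_periodic_of_injOn_Ico hL hl.periodic hl.injOn (by simpa using hu) hsecant
  exact hl.deriv_ne_zero a (by simpa [meanVelocity, hu0] using h)

/-- The chord-arc inequality. By periodicity it is the positivity of the minimum of the mean
velocity over a compact set. -/
theorem exists_mul_abs_sub_le_norm_sub [CompleteSpace E] (hL : 0 < L)
    (hl : IsSimpleClosedCurve L l) :
    ∃ c > 0, ∀ a b, |a - b| ≤ L / 2 → c * |a - b| ≤ ‖l a - l b‖ := by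
  have hcompact : IsCompact (Set.Icc 0 L ×ˢ Set.Icc (-(L / 2)) (L / 2)) :=
    isCompact_Icc.prod isCompact_Icc
  have hnonempty : (0, 0) ∈ Set.Icc 0 L ×ˢ Set.Icc (-(L / 2)) (L / 2) := by
    simp [hL.le, half_pos hL |>.le]
  obtain ⟨p, hp, hmin⟩ := hcompact.exists_isMinOn ⟨_, hnonempty⟩
    (continuous_meanVelocity hl.continuous_deriv).norm.continuousOn
  refine ⟨‖meanVelocity l p.1 p.2‖, norm_pos_iff.2 ?_, fun a b hab ↦ ?_⟩
  · exact hl.meanVelocity_ne_zero hL ((abs_le.2 hp.2).trans_lt (half_lt_self hL))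
  have hper : Function.Periodic (meanVelocity l) L := fun a ↦ by
    ext u
    simp only [meanVelocity, add_right_comm a L, periodic_deriv hl.periodic _]
  obtain ⟨b', hb', hbb'⟩ := hper.exists_mem_Ico₀ hL b
  calc ‖meanVelocity l p.1 p.2‖ * |a - b|
      ≤ ‖meanVelocity l b (a - b)‖ * |a - b| := by
        rw [hbb']
        gcongr
        exact hmin (a := (b', a - b)) ⟨⟨hb'.1, hb'.2.le⟩, abs_le.1 hab⟩
    _ = ‖l a - l b‖ := by
        rw [← Real.norm_eq_abs, mul_comm, ← norm_smul,
          smul_meanVelocity hl.differentiable hl.continuous_deriv, add_sub_cancel]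

theorem of_contDiff (hL : L ≠ 0) (hl : ContDiff ℝ 2 l) (hper : Function.Periodic l L)
    (hne : ∀ s, deriv l s ≠ 0) (hinj : Set.InjOn l (Set.Ico 0 L)) : IsSimpleClosedCurve L l where
  differentiable := hl.differentiable two_ne_zero
  exists_lipschitzWith_deriv := by
    have hl' : ContDiff ℝ 1 (deriv l) := hl.deriv'
    obtain ⟨K, hK⟩ := ((periodic_deriv (periodic_deriv hper)).isBounded_of_continuous hL
      (hl'.continuous_deriv le_rfl)).exists_norm_le
    exact ⟨K.toNNReal, lipschitzWith_of_nnnorm_deriv_le (hl'.differentiable one_ne_zero) fun s ↦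
      NNReal.le_toNNReal_of_coe_le (hK _ (Set.mem_range_self s))⟩
  periodic := hper
  deriv_ne_zero := hne
  injOn := hinj

end IsSimpleClosedCurve

end Curves

section Kernel

/-- The kernel `l'(a) / (l(a) - l(b))`, whose real and imaginary parts are the entries of the
tangential matrix and of the double layer matrix. -/
noncomputable def tangentKernel (l : ℝ → ℂ) (a b : ℝ) : ℂ := deriv l a / (l a - l b)

/-- The matrix of values of the kernel of `l` at rows `a` and columns `b`. -/
noncomputable def kernelMatrix (l : ℝ → ℂ) {N : ℕ} (a b : Fin N → ℝ) :
    Matrix (Fin N) (Fin N) ℂ :=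
  of fun i j ↦ tangentKernel l (a i) (b j)

theorem Bmat_eq_map_re (l : ℝ → ℂ) {N : ℕ} (a b : Fin N → ℝ) :
    Bmat l a b = (kernelMatrix l a b).map Complex.re := by
  ext i j
  simp only [Bmat, kernelMatrix, tangentKernel, dotR, map_apply, of_apply, Complex.div_re,
    Complex.sq_norm]
  ring

theorem Amat_eq_map_im (l : ℝ → ℂ) {N : ℕ} (a b : Fin N → ℝ) :
    Amat l a b = (kernelMatrix l a b).map Complex.im := by
  ext i j
  simp only [Amat, kernelMatrix, tangentKernel, dotR, normalv, map_apply, of_apply, Complex.div_im,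
    Complex.sq_norm, neg_mul, Complex.neg_re, Complex.neg_im, Complex.I_mul_re, Complex.I_mul_im]
  ring

theorem tangentKernel_periodic_right {l : ℝ → ℂ} {L : ℝ} (hl : Function.Periodic l L) (a : ℝ) :
    Function.Periodic (tangentKernel l a) L := fun b ↦ by
  rw [tangentKernel, hl b, tangentKernel]

namespace IsSimpleClosedCurve

variable {l : ℝ → ℂ} {L : ℝ}

theorem exists_norm_tangentKernel_sub_inv_le (hL : 0 < L) (hl : IsSimpleClosedCurve L l) :
    ∃ C, ∀ a b, |a - b| ≤ L / 2 → ‖tangentKernel l a b - ((a - b : ℝ) : ℂ)⁻¹‖ ≤ C := by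
  obtain ⟨c, hc, hchord⟩ := hl.exists_mul_abs_sub_le_norm_sub hL
  obtain ⟨K, hK⟩ := hl.exists_lipschitzWith_deriv
  refine ⟨K / c, fun a b hab ↦ ?_⟩
  rcases eq_or_ne a b with rfl | hne
  · simpa [tangentKernel] using by positivity
  have hpos : 0 < |a - b| := abs_pos.2 (sub_ne_zero.2 hne)
  have hchordpos : 0 < ‖l a - l b‖ := (mul_pos hc hpos).trans_le (hchord a b hab)
  have hab0 : ((a - b : ℝ) : ℂ) ≠ 0 := Complex.ofReal_ne_zero.2 (sub_ne_zero.2 hne)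
  calc ‖tangentKernel l a b - ((a - b : ℝ) : ℂ)⁻¹‖
      = ‖l a - l b - (a - b) • deriv l a‖ / (|a - b| * ‖l a - l b‖) := by
        rw [tangentKernel, ← one_div, div_sub_div _ _ (norm_pos_iff.1 hchordpos) hab0, norm_div,
          norm_mul, Complex.norm_real, Real.norm_eq_abs, mul_comm ‖_‖, ← norm_neg,
          Complex.real_smul]
        ring_nf
    _ ≤ K * |a - b| ^ 2 / (|a - b| * (c * |a - b|)) := by
        gcongr
        · exact norm_sub_sub_smul_deriv_le hl.differentiable hK a b
        · exact hchord a b hab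
    _ = K / c := by field_simp

theorem exists_abs_im_tangentKernel_le (hL : 0 < L) (hl : IsSimpleClosedCurve L l) :
    ∃ C, ∀ a b, |(tangentKernel l a b).im| ≤ C := by
  obtain ⟨C, hC⟩ := hl.exists_norm_tangentKernel_sub_inv_le hL
  refine ⟨C, fun a ↦ forall_of_periodic_of_abs_sub_le (P := fun k : ℂ ↦ |k.im| ≤ C) hL
    (tangentKernel_periodic_right hl.periodic a) a fun b hab ↦ ?_⟩
  calc |(tangentKernel l a b).im| = |(tangentKernel l a b - ((a - b : ℝ) : ℂ)⁻¹).im| := by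
        rw [← Complex.ofReal_inv, Complex.sub_im, Complex.ofReal_im, sub_zero]
    _ ≤ C := (Complex.abs_im_le_norm _).trans (hC a b hab)

theorem exists_norm_tangentKernel_sub_le {l₁ l₂ : ℝ → ℂ} (hL : 0 < L)
    (hl₁ : IsSimpleClosedCurve L l₁) (hl₂ : IsSimpleClosedCurve L l₂) :
    ∃ C, ∀ a b, ‖tangentKernel l₁ a b - tangentKernel l₂ a b‖ ≤ C := by
  obtain ⟨C₁, hC₁⟩ := hl₁.exists_norm_tangentKernel_sub_inv_le hL
  obtain ⟨C₂, hC₂⟩ := hl₂.exists_norm_tangentKernel_sub_inv_le hL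
  refine ⟨C₁ + C₂, fun a ↦ forall_of_periodic_of_abs_sub_le (P := fun k : ℂ ↦ ‖k‖ ≤ C₁ + C₂)
    (f := fun b ↦ tangentKernel l₁ a b - tangentKernel l₂ a b) hL
    ((tangentKernel_periodic_right hl₁.periodic a).sub
      (tangentKernel_periodic_right hl₂.periodic a)) a fun b hab ↦ ?_⟩
  calc ‖tangentKernel l₁ a b - tangentKernel l₂ a b‖
      = ‖(tangentKernel l₁ a b - ((a - b : ℝ) : ℂ)⁻¹)
          - (tangentKernel l₂ a b - ((a - b : ℝ) : ℂ)⁻¹)‖ := by rw [sub_sub_sub_cancel_right]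
    _ ≤ C₁ + C₂ := norm_sub_le_of_le (hC₁ a b hab) (hC₂ a b hab)

end IsSimpleClosedCurve

end Kernel

section Circle

/-- The unit circle, traversed counterclockwise with period `L`. -/
noncomputable def circleCurve (L s : ℝ) : ℂ := circleMap 0 1 (2 * π / L * s)

variable {L : ℝ}

theorem hasDerivAt_circleCurve (L s : ℝ) :
    HasDerivAt (circleCurve L) ((2 * π / L : ℝ) * Complex.I * circleCurve L s) s := by
  have h := (hasDerivAt_circleMap 0 1 (2 * π / L * s)).scomp s
    ((hasDerivAt_id s).const_mul (2 * π / L))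
  refine (h.congr_deriv ?_ : HasDerivAt (circleMap 0 1 ∘ _) _ s)
  simp only [circleCurve, Complex.real_smul, mul_one]
  ring

theorem norm_circleCurve (L s : ℝ) : ‖circleCurve L s‖ = 1 := by simp [circleCurve]

theorem circleCurve_ne_zero (L s : ℝ) : circleCurve L s ≠ 0 := circleMap_ne_center one_ne_zero

theorem circleCurve_eq_circleCurve_iff (hL : L ≠ 0) {a b : ℝ} :
    circleCurve L a = circleCurve L b ↔ ∃ n : ℤ, a = b + n * L := by
  rw [circleCurve, circleCurve, circleMap_eq_circleMap_iff _ one_ne_zero]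
  refine exists_congr fun n ↦ ?_
  rw [← mul_right_inj' (show 2 * π / L ≠ 0 by positivity), mul_add,
    show 2 * π / L * (n * L) = n * (2 * π) by field_simp, ← mul_assoc (n : ℂ), ← add_mul,
    mul_left_inj' Complex.I_ne_zero]
  norm_cast

theorem lipschitzWith_circleCurve (L : ℝ) :
    LipschitzWith (‖2 * π / L‖₊) (circleCurve L) := by
  have h := (lipschitzWith_circleMap 0 1).comp (lipschitzWith_smul (2 * π / L : ℝ))
  rwa [Real.nnabs_of_nonneg zero_le_one, Real.toNNReal_one, one_mul] at h

theorem circleCurve_sub (L a b : ℝ) :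
    circleCurve L (a - b) = circleCurve L a / circleCurve L b := by
  simp [circleCurve, mul_sub, circleMap_zero_div]

theorem isSimpleClosedCurve_circleCurve (hL : 0 < L) : IsSimpleClosedCurve L (circleCurve L) where
  differentiable s := (hasDerivAt_circleCurve L s).differentiableAt
  exists_lipschitzWith_deriv := by
    rw [funext fun s ↦ (hasDerivAt_circleCurve L s).deriv]
    exact ⟨_, (lipschitzWith_smul ((2 * π / L : ℝ) * Complex.I)).comp (lipschitzWith_circleCurve L)⟩
  periodic s := (circleCurve_eq_circleCurve_iff hL.ne').2 ⟨1, by simp⟩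
  deriv_ne_zero s := by
    rw [(hasDerivAt_circleCurve L s).deriv]
    simp [circleCurve_ne_zero, hL.ne', pi_ne_zero]
  injOn a ha b hb hab := by
    refine mul_left_cancel₀ (by positivity) (eq_of_circleMap_eq one_ne_zero ?_ hab)
    rw [← mul_sub, abs_mul, abs_of_pos (by positivity), div_mul_eq_mul_div,
      div_lt_iff₀ hL]
    gcongr
    exact abs_sub_lt_of_nonneg_of_lt ha.1 ha.2 hb.1 hb.2

theorem tangentKernel_circleCurve (L a b : ℝ) :
    tangentKernel (circleCurve L) a b =
      (2 * π / L : ℝ) * Complex.I * (1 - circleCurve L (b - a))⁻¹ := by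
  have := circleCurve_ne_zero L a
  rw [tangentKernel, (hasDerivAt_circleCurve L a).deriv, circleCurve_sub, one_sub_div this, inv_div,
    mul_div_assoc]

end Circle

section CauchyMatrix

open scoped Matrix.Norms.L2Operator

theorem l2_opNorm_le_card_mul {𝕜 n : Type*} [RCLike 𝕜] [Fintype n] [DecidableEq n]
    {A : Matrix n n 𝕜} {C : ℝ} (hA : ∀ i j, ‖A i j‖ ≤ C) : ‖A‖ ≤ Fintype.card n * C := by
  rcases isEmpty_or_nonempty n with _ | ⟨⟨i₀⟩⟩
  · simp [Subsingleton.elim A 0]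
  have hC : 0 ≤ C := (norm_nonneg _).trans (hA i₀ i₀)
  rw [cstar_norm_def]
  refine ContinuousLinearMap.opNorm_le_bound _ (by positivity) fun x ↦ ?_
  have hrow (i : n) : ‖(A *ᵥ x) i‖ ≤ C * ∑ j, ‖x j‖ := by
    rw [mulVec, dotProduct, Finset.mul_sum]
    exact norm_sum_le_of_le _ fun j _ ↦ (norm_mul_le _ _).trans (by gcongr; exact hA i j)
  refine le_of_sq_le_sq ?_ (by positivity)
  calc ‖toEuclideanCLM (𝕜 := 𝕜) A x‖ ^ 2 = ∑ i, ‖(A *ᵥ x) i‖ ^ 2 := EuclideanSpace.norm_sq_eq _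
    _ ≤ ∑ _i : n, (C * ∑ j, ‖x j‖) ^ 2 := by
        gcongr with i
        exact hrow i
    _ = Fintype.card n * C ^ 2 * (∑ j, ‖x j‖) ^ 2 := by simp; ring
    _ ≤ Fintype.card n * C ^ 2 * (Fintype.card n * ∑ j, ‖x j‖ ^ 2) := by
        gcongr
        exact sq_sum_le_card_mul_sum_sq
    _ = (Fintype.card n * C * ‖x‖) ^ 2 := by
        rw [EuclideanSpace.norm_sq_eq x |>.symm]
        ring

variable {N : ℕ} {x y : Fin N → ℂ} {p q : ℂ}

theorem vandermonde_mul_conjTranspose_apply {R : Type*} [CommRing R] [StarRing R]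
    (x y : Fin N → R) (i j : Fin N) :
    (vandermonde x * (vandermonde y)ᴴ) i j = ∑ k ∈ Finset.range N, (x i * star (y j)) ^ k := by
  simp [mul_apply, mul_pow, Finset.sum_range]

theorem norm_eq_one_of_pow_eq {𝕜 : Type*} [NormedDivisionRing 𝕜] {x p : 𝕜} {n : ℕ} (hn : n ≠ 0)
    (hp : ‖p‖ = 1) (hx : x ^ n = p) : ‖x‖ = 1 :=
  (pow_eq_one_iff_of_nonneg (norm_nonneg x) hn).1 (by rw [← norm_pow, hx, hp])

theorem mul_star_eq_one {𝕜 : Type*} [RCLike 𝕜] {z : 𝕜} (hz : ‖z‖ = 1) : z * star z = 1 := by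
  simp [RCLike.mul_conj, hz]

theorem vandermonde_mul_conjTranspose_self (hinj : Function.Injective x) (hp : ‖p‖ = 1)
    (hx : ∀ i, x i ^ N = p) : vandermonde x * (vandermonde x)ᴴ = (N : ℂ) • 1 := by
  ext i j
  rw [vandermonde_mul_conjTranspose_apply, Matrix.smul_apply, one_apply]
  split_ifs with hij
  · rw [← hij, mul_star_eq_one (norm_eq_one_of_pow_eq i.pos.ne' hp (hx i))]
    simp
  · have hxj := mul_star_eq_one (norm_eq_one_of_pow_eq i.pos.ne' hp (hx j))
    have hne : x i * star (x j) ≠ 1 := by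
      rw [← hxj, (mul_left_injective₀ (right_ne_zero_of_mul_eq_one hxj)).ne_iff, hinj.ne_iff]
      exact hij
    have hpow : (x i * star (x j)) ^ N = 1 := by
      rw [mul_pow, ← star_pow, hx, hx, mul_star_eq_one hp]
    rw [geom_sum_eq hne, hpow, sub_self, zero_div, smul_zero]

theorem l2_opNorm_vandermonde_le (hinj : Function.Injective x) (hp : ‖p‖ = 1)
    (hx : ∀ i, x i ^ N = p) : ‖vandermonde x‖ ≤ √N := by
  refine Real.le_sqrt_of_sq_le ?_
  calc ‖vandermonde x‖ ^ 2 = ‖vandermonde x * (vandermonde x)ᴴ‖ := by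
        rw [sq, ← l2_opNorm_conjTranspose, ← l2_opNorm_conjTranspose_mul_self,
          conjTranspose_conjTranspose]
    _ ≤ N := by
        rw [vandermonde_mul_conjTranspose_self hinj hp hx, ← diagonal_one, ← diagonal_smul,
          l2_opNorm_diagonal]
        exact (pi_norm_le_iff_of_nonneg N.cast_nonneg).2 (by simp)

/-- The Cauchy matrix with entries `1 / (1 - y j / x i)`. -/
noncomputable def cauchyMatrix (x y : Fin N → ℂ) : Matrix (Fin N) (Fin N) ℂ :=
  of fun i j ↦ (1 - y j / x i)⁻¹

theorem smul_cauchyMatrix (hp : ‖p‖ = 1) (hpq : p ≠ q) (hx : ∀ i, x i ^ N = p)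
    (hy : ∀ j, y j ^ N = q) :
    (1 - q / p) • cauchyMatrix x y = vandermonde (star x) * (vandermonde (star y))ᴴ := by
  have hp0 : p ≠ 0 := norm_ne_zero_iff.1 (hp ▸ one_ne_zero)
  ext i j
  have hpow : (y j / x i) ^ N = q / p := by rw [div_pow, hx, hy]
  have hne : 1 - y j / x i ≠ 0 := by
    intro h
    rw [← sub_eq_zero.1 h, one_pow, eq_div_iff hp0, one_mul] at hpow
    exact hpq hpow
  have hentry : star x i * star (star y j) = y j / x i := by
    rw [Pi.star_apply, Pi.star_apply, star_star, Complex.star_def,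
      ← Complex.inv_eq_conj (norm_eq_one_of_pow_eq i.pos.ne' hp (hx i)), inv_mul_eq_div]
  rw [vandermonde_mul_conjTranspose_apply, hentry, Matrix.smul_apply, cauchyMatrix, of_apply,
    smul_eq_mul, ← div_eq_mul_inv, div_eq_iff hne, geom_sum_mul_neg, hpow]

theorem l2_opNorm_cauchyMatrix_le (hxinj : Function.Injective x) (hyinj : Function.Injective y)
    (hp : ‖p‖ = 1) (hq : ‖q‖ = 1) (hpq : p ≠ q) (hx : ∀ i, x i ^ N = p) (hy : ∀ j, y j ^ N = q) :
    ‖cauchyMatrix x y‖ ≤ N / ‖p - q‖ := by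
  have hstar {x : Fin N → ℂ} {p : ℂ} (hinj : Function.Injective x) (hp : ‖p‖ = 1)
      (hx : ∀ i, x i ^ N = p) : ‖vandermonde (star x)‖ ≤ √N :=
    l2_opNorm_vandermonde_le (p := star p) (star_injective.comp hinj) (by rwa [norm_star])
      fun i ↦ by rw [Pi.star_apply, ← star_pow, hx]
  have hscalar : ‖1 - q / p‖ = ‖p - q‖ := by
    rw [one_sub_div (norm_ne_zero_iff.1 (hp ▸ one_ne_zero)), norm_div, hp, div_one]
  rw [le_div_iff₀ (norm_pos_iff.2 (sub_ne_zero.2 hpq)), mul_comm, ← hscalar, ← norm_smul,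
    smul_cauchyMatrix hp hpq hx hy]
  calc ‖vandermonde (star x) * (vandermonde (star y))ᴴ‖
      ≤ ‖vandermonde (star x)‖ * ‖vandermonde (star y)‖ :=
        (l2_opNorm_mul _ _).trans_eq (by rw [l2_opNorm_conjTranspose])
    _ ≤ √N * √N := by
        gcongr
        exacts [hstar hxinj hp hx, hstar hyinj hq hy]
    _ = N := Real.mul_self_sqrt N.cast_nonneg

end CauchyMatrix

section Mesh

open scoped Matrix.Norms.L2Operator

variable {L α β : ℝ}

/-- The equispaced nodes of mesh size `L / N` on a curve of length `L`, shifted by the fraction `α`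
of a mesh cell. -/
noncomputable def uniformNode (L α : ℝ) (N : ℕ) (i : Fin N) : ℝ := (i + α) * L / N

/-- A family of meshes deviating from the shifted equispaced nodes by `O(1 / N ^ 2)`. -/
def IsWellDistributed (L α : ℝ) (x : (N : ℕ) → Fin N → ℝ) : Prop :=
  ∃ M, ∀ᶠ N : ℕ in atTop, ∀ i, |x N i - uniformNode L α N i| ≤ M / N ^ 2

theorem circleCurve_uniformNode_pow (hL : 0 < L) (N : ℕ) (i : Fin N) :
    circleCurve L (uniformNode L α N i) ^ N = circleCurve L (α * L) := by
  have hN : (N : ℝ) ≠ 0 := by exact_mod_cast i.pos.ne'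
  have hpow : circleCurve L (uniformNode L α N i) ^ N =
      circleCurve L (N * uniformNode L α N i) := by
    simp only [circleCurve, circleMap_zero_pow, one_pow, mul_left_comm]
  rw [hpow, circleCurve_eq_circleCurve_iff hL.ne']
  refine ⟨i, ?_⟩
  rw [uniformNode, mul_div_cancel₀ _ hN]
  push_cast
  ring

theorem injective_circleCurve_uniformNode (hL : 0 < L) (N : ℕ) :
    Function.Injective fun i : Fin N ↦ circleCurve L (uniformNode L α N i) := by
  intro i j hij
  have hN : (0 : ℝ) < N := by exact_mod_cast i.pos
  have hdist : |uniformNode L α N i - uniformNode L α N j| < L := by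
    have hsub : uniformNode L α N i - uniformNode L α N j = ((i : ℝ) - j) * (L / N) := by
      simp only [uniformNode]
      ring
    rw [hsub, abs_mul, abs_of_pos (div_pos hL hN), ← mul_div_assoc, div_lt_iff₀ hN, mul_comm L]
    gcongr
    exact abs_sub_lt_of_nonneg_of_lt (by positivity) (by exact_mod_cast i.2) (by positivity)
      (by exact_mod_cast j.2)
  have hcircle := isSimpleClosedCurve_circleCurve hL
  have hnode := eq_of_periodic_of_injOn_Ico hL hcircle.periodic hcircle.injOn hdist hij
  rw [uniformNode, uniformNode, div_left_inj' hN.ne', mul_left_inj' hL.ne', add_left_inj] at hnode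
  exact Fin.ext (by exact_mod_cast hnode)

theorem circleCurve_mul_ne (hL : L ≠ 0) (hαβ : ∀ n : ℤ, α - β ≠ n) :
    circleCurve L (α * L) ≠ circleCurve L (β * L) := by
  rw [Ne, circleCurve_eq_circleCurve_iff hL]
  rintro ⟨n, hn⟩
  refine hαβ n (mul_right_cancel₀ hL ?_)
  linarith

theorem kernelMatrix_circleCurve (L : ℝ) {N : ℕ} (a b : Fin N → ℝ) :
    kernelMatrix (circleCurve L) a b = ((2 * π / L : ℝ) * Complex.I) •
      cauchyMatrix (fun i ↦ circleCurve L (a i)) (fun j ↦ circleCurve L (b j)) := by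
  ext i j
  simp only [kernelMatrix, cauchyMatrix, of_apply, Matrix.smul_apply, smul_eq_mul,
    tangentKernel_circleCurve, circleCurve_sub]

theorem l2_opNorm_kernelMatrix_circleCurve_le (hL : 0 < L) (hαβ : ∀ n : ℤ, α - β ≠ n) (N : ℕ) :
    ‖kernelMatrix (circleCurve L) (uniformNode L α N) (uniformNode L β N)‖ ≤
      2 * π / L * (N / ‖circleCurve L (α * L) - circleCurve L (β * L)‖) := by
  have hcauchy := l2_opNorm_cauchyMatrix_le (injective_circleCurve_uniformNode hL N)
    (injective_circleCurve_uniformNode hL N) (norm_circleCurve L (α * L))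
    (norm_circleCurve L (β * L)) (circleCurve_mul_ne hL.ne' hαβ)
    (circleCurve_uniformNode_pow hL N) (circleCurve_uniformNode_pow hL N)
  rw [kernelMatrix_circleCurve, norm_smul, norm_mul, Complex.norm_I, mul_one, Complex.norm_real,
    Real.norm_of_nonneg (by positivity)]
  gcongr

theorem norm_sub_div_le_norm_one_sub_circleCurve (hL : 0 < L) (N : ℕ) (i j : Fin N) :
    ‖circleCurve L (α * L) - circleCurve L (β * L)‖ / N ≤
      ‖1 - circleCurve L (uniformNode L β N j - uniformNode L α N i)‖ := by
  have hN : (0 : ℝ) < N := by exact_mod_cast i.pos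
  rw [circleCurve_sub, one_sub_div (circleCurve_ne_zero _ _), norm_div, norm_circleCurve, div_one,
    div_le_iff₀' hN, ← circleCurve_uniformNode_pow hL N i, ← circleCurve_uniformNode_pow hL N j]
  exact norm_pow_sub_pow_le (norm_circleCurve _ _).le (norm_circleCurve _ _).le N

theorem norm_tangentKernel_circleCurve_sub_le (hL : 0 < L) {a b u v m δ : ℝ} (hm : 0 < m)
    (huv : m ≤ ‖1 - circleCurve L (v - u)‖) (hδ : 2 * π / L * (|a - u| + |b - v|) ≤ δ)
    (hδm : δ ≤ m / 2) :
    ‖tangentKernel (circleCurve L) a b - tangentKernel (circleCurve L) u v‖ ≤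
      2 * π / L * (2 * δ / m ^ 2) := by
  have hdist : ‖(1 - circleCurve L (v - u)) - (1 - circleCurve L (b - a))‖ ≤ δ :=
    calc _ = ‖circleCurve L (b - a) - circleCurve L (v - u)‖ := by rw [sub_sub_sub_cancel_left]
      _ ≤ 2 * π / L * |(b - a) - (v - u)| := by
          simpa [abs_of_pos hL, abs_of_pos pi_pos] using
            (lipschitzWith_circleCurve L).norm_sub_le (b - a) (v - u)
      _ ≤ 2 * π / L * (|a - u| + |b - v|) := by
          rw [sub_sub_sub_comm, add_comm]
          gcongr
          exact abs_sub _ _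
      _ ≤ δ := hδ
  rw [tangentKernel_circleCurve, tangentKernel_circleCurve, ← mul_sub, norm_mul, norm_mul,
    Complex.norm_I, mul_one, Complex.norm_real, Real.norm_of_nonneg (by positivity), norm_sub_rev]
  gcongr
  exact (norm_inv_sub_inv_le hm huv (hdist.trans hδm)).trans (by gcongr)

namespace IsWellDistributed

variable {l : ℝ → ℂ} {a b : (N : ℕ) → Fin N → ℝ}

theorem of_abs_sub_le_div_pow {M : ℝ} {k : ℕ} (hM : 0 ≤ M) (hk : 2 ≤ k)
    (ha : ∀ᶠ N : ℕ in atTop, ∀ i, |a N i - uniformNode L α N i| ≤ M / N ^ k) :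
    IsWellDistributed L α a := by
  refine ⟨M, ?_⟩
  filter_upwards [ha, eventually_ge_atTop 1] with N haN hN i
  have : (1 : ℝ) ≤ N := by exact_mod_cast hN
  exact (haN i).trans (by gcongr)

/-- Distinct circle nodes are at distance at least of order `1 / N`, so moving them by
`O(1 / N ^ 2)` changes the kernel by `O(1)`. -/
theorem exists_norm_tangentKernel_circleCurve_sub_le (hL : 0 < L) (hαβ : ∀ n : ℤ, α - β ≠ n)
    (ha : IsWellDistributed L α a) (hb : IsWellDistributed L β b) :
    ∃ C, ∀ᶠ N : ℕ in atTop, ∀ i j, ‖tangentKernel (circleCurve L) (a N i) (b N j) -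
      tangentKernel (circleCurve L) (uniformNode L α N i) (uniformNode L β N j)‖ ≤ C := by
  obtain ⟨Ma, ha⟩ := ha
  obtain ⟨Mb, hb⟩ := hb
  set γ := ‖circleCurve L (α * L) - circleCurve L (β * L)‖
  have hγ : 0 < γ := norm_pos_iff.2 (sub_ne_zero.2 (circleCurve_mul_ne hL.ne' hαβ))
  set D := 2 * π / L * (Ma + Mb)
  refine ⟨2 * π / L * (2 * D / γ ^ 2), ?_⟩
  filter_upwards [ha, hb, eventually_ge_atTop ⌈2 * D / γ⌉₊] with N haN hbN hN i j
  have hNpos : (0 : ℝ) < N := by exact_mod_cast i.pos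
  have hdist : 2 * π / L * (|a N i - uniformNode L α N i| + |b N j - uniformNode L β N j|) ≤
      D / N ^ 2 :=
    calc _ ≤ 2 * π / L * (Ma / N ^ 2 + Mb / N ^ 2) := by
          gcongr
          exacts [haN i, hbN j]
      _ = D / N ^ 2 := by ring
  have hsmall : D / N ^ 2 ≤ γ / N / 2 := by
    have hD : 2 * D ≤ N * γ := (div_le_iff₀ hγ).1 (Nat.ceil_le.1 hN)
    calc D / N ^ 2 = 2 * D / (2 * N ^ 2) := by field_simp
      _ ≤ N * γ / (2 * N ^ 2) := by gcongr
      _ = γ / N / 2 := by field_simp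
  calc _ ≤ 2 * π / L * (2 * (D / N ^ 2) / (γ / N) ^ 2) :=
        norm_tangentKernel_circleCurve_sub_le hL (div_pos hγ hNpos)
          (norm_sub_div_le_norm_one_sub_circleCurve hL N i j) hdist hsmall
    _ = 2 * π / L * (2 * D / γ ^ 2) := by field_simp

theorem exists_l2_opNorm_kernelMatrix_le (hL : 0 < L) (hl : IsSimpleClosedCurve L l)
    (hαβ : ∀ n : ℤ, α - β ≠ n) (ha : IsWellDistributed L α a) (hb : IsWellDistributed L β b) :
    ∃ C, ∀ᶠ N : ℕ in atTop, ‖kernelMatrix l (a N) (b N)‖ ≤ C * N := by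
  obtain ⟨C₁, hC₁⟩ := hl.exists_norm_tangentKernel_sub_le hL (isSimpleClosedCurve_circleCurve hL)
  obtain ⟨C₂, hC₂⟩ := ha.exists_norm_tangentKernel_circleCurve_sub_le hL hαβ hb
  refine ⟨C₁ + C₂ + 2 * π / L / ‖circleCurve L (α * L) - circleCurve L (β * L)‖, ?_⟩
  filter_upwards [hC₂] with N hC₂
  set K := kernelMatrix l (a N) (b N)
  set K₁ := kernelMatrix (circleCurve L) (a N) (b N)
  set K₂ := kernelMatrix (circleCurve L) (uniformNode L α N) (uniformNode L β N)
  have hK₁ : ‖K - K₁‖ ≤ N * C₁ := by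
    simpa using l2_opNorm_le_card_mul (A := K - K₁) fun i j ↦ hC₁ (a N i) (b N j)
  have hK₂ : ‖K₁ - K₂‖ ≤ N * C₂ := by
    simpa using l2_opNorm_le_card_mul (A := K₁ - K₂) fun i j ↦ hC₂ i j
  calc ‖K‖ = ‖(K - K₁) + (K₁ - K₂) + K₂‖ := by rw [sub_add_sub_cancel, sub_add_cancel]
    _ ≤ N * C₁ + N * C₂ + _ := norm_add_le_of_le (norm_add_le_of_le hK₁ hK₂)
        (l2_opNorm_kernelMatrix_circleCurve_le hL hαβ N)
    _ = _ := by ring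

end IsWellDistributed

end Mesh

section VectorNorms

open scoped Matrix.Norms.L2Operator

variable {N : ℕ}

theorem l2norm_eq (z : Fin N → ℝ) : l2norm z = √((N : ℝ)⁻¹) * ‖WithLp.toLp 2 z‖ := by
  simp [l2norm, EuclideanSpace.norm_eq, Real.sqrt_mul]

theorem rpow_mean_rpow_le {v : Fin N → ℝ} {p R : ℝ} (hN : 0 < N) (hp : 0 < p)
    (hv : ∀ i, |v i| ≤ R) : ((N : ℝ)⁻¹ * ∑ i, |v i| ^ p) ^ (1 / p) ≤ R := by
  have hR : 0 ≤ R := (abs_nonneg _).trans (hv ⟨0, hN⟩)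
  calc ((N : ℝ)⁻¹ * ∑ i, |v i| ^ p) ^ (1 / p) ≤ ((N : ℝ)⁻¹ * ∑ _i : Fin N, R ^ p) ^ (1 / p) := by
        gcongr with i
        exact hv i
    _ = R := by
        have hN0 : (N : ℝ) ≠ 0 := by positivity
        rw [Fin.sum_const, nsmul_eq_mul, inv_mul_cancel_left₀ hN0, one_div,
          Real.rpow_rpow_inv hR hp.ne']

theorem abs_mulVec_le {A : Matrix (Fin N) (Fin N) ℝ} {C : ℝ} (hA : ∀ i j, |A i j| ≤ C)
    (z : Fin N → ℝ) (i : Fin N) : |(A *ᵥ z) i| ≤ N * (C * l1norm z) := by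
  have hN : (N : ℝ) ≠ 0 := by exact_mod_cast i.pos.ne'
  calc |(A *ᵥ z) i| ≤ ∑ j, C * |z j| := by
        rw [mulVec, dotProduct, ← Real.norm_eq_abs]
        refine norm_sum_le_of_le _ fun j _ ↦ ?_
        rw [norm_mul, Real.norm_eq_abs, Real.norm_eq_abs]
        gcongr
        exact hA i j
    _ = N * (C * l1norm z) := by
        rw [← Finset.mul_sum, l1norm]
        field_simp

theorem l2norm_map_re_mulVec_le (M : Matrix (Fin N) (Fin N) ℂ) (z : Fin N → ℝ) :
    l2norm (M.map Complex.re *ᵥ z) ≤ ‖M‖ * l2norm z := by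
  set w : EuclideanSpace ℂ (Fin N) := WithLp.toLp 2 fun j ↦ (z j : ℂ)
  have hw : ‖w‖ = ‖WithLp.toLp 2 z‖ := by simp [w, EuclideanSpace.norm_eq]
  have hre (i : Fin N) : (M.map Complex.re *ᵥ z) i = ((M *ᵥ w) i).re := by
    simp [w, mulVec, dotProduct]
  have hmap : ‖WithLp.toLp 2 (M.map Complex.re *ᵥ z)‖ ≤ ‖WithLp.toLp 2 (M *ᵥ w)‖ := by
    simp only [EuclideanSpace.norm_eq, hre]
    gcongr
    exact Complex.abs_re_le_norm _
  rw [l2norm_eq, l2norm_eq, mul_left_comm, ← hw]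
  gcongr
  exact hmap.trans (l2_opNorm_mulVec M w)

end VectorNorms

section Boundedness

open scoped Matrix.Norms.L2Operator

variable {L α β : ℝ} {l : ℝ → ℂ}

theorem IsSimpleClosedCurve.exists_abs_Amat_mulVec_le (hL : 0 < L)
    (hl : IsSimpleClosedCurve L l) :
    ∃ C, ∀ N (a b : Fin N → ℝ) z i, |(Amat l a b *ᵥ z) i| ≤ N * (C * l1norm z) := by
  obtain ⟨C, hC⟩ := hl.exists_abs_im_tangentKernel_le hL
  refine ⟨C, fun N a b ↦ abs_mulVec_le ?_⟩
  rw [Amat_eq_map_im]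
  exact fun i j ↦ hC (a i) (b j)

theorem IsWellDistributed.exists_l2norm_Bmat_mulVec_le {a b : (N : ℕ) → Fin N → ℝ} (hL : 0 < L)
    (hl : IsSimpleClosedCurve L l) (hαβ : ∀ n : ℤ, α - β ≠ n) (ha : IsWellDistributed L α a)
    (hb : IsWellDistributed L β b) :
    ∃ C, ∀ᶠ N : ℕ in atTop, ∀ z, l2norm (Bmat l (a N) (b N) *ᵥ z) ≤ N * (C * l2norm z) := by
  obtain ⟨C, hC⟩ := ha.exists_l2_opNorm_kernelMatrix_le hL hl hαβ hb
  refine ⟨C, hC.mono fun N hC z ↦ ?_⟩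
  calc l2norm (Bmat l (a N) (b N) *ᵥ z) ≤ ‖kernelMatrix l (a N) (b N)‖ * l2norm z := by
        rw [Bmat_eq_map_re]
        exact l2norm_map_re_mulVec_le _ z
    _ ≤ C * N * l2norm z := mul_le_mul_of_nonneg_right hC (Real.sqrt_nonneg _)
    _ = N * (C * l2norm z) := by ring

theorem inv_mul_add_le {𝕜 : Type*} [Field 𝕜] [LinearOrder 𝕜] [IsStrictOrderedRing 𝕜]
    {n x y w C₁ C₂ C : 𝕜} (hn : 0 < n) (hw : 0 ≤ w) (hC : C₁ + C₂ ≤ C)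
    (hx : x ≤ n * (C₁ * w)) (hy : y ≤ n * (C₂ * w)) : n⁻¹ * (x + y) ≤ C * w := by
  rw [inv_mul_le_iff₀ hn]
  calc x + y ≤ n * ((C₁ + C₂) * w) := by linarith
    _ ≤ n * (C * w) := by gcongr

theorem discretized_operator_boundedness_general {L α β : ℝ} {l : ℝ → ℂ}
    {a b : (N : ℕ) → Fin N → ℝ} (hL : 0 < L) (hl : IsSimpleClosedCurve L l)
    (hαβ : ∀ n : ℤ, α - β ≠ n) (ha : IsWellDistributed L α a) (hb : IsWellDistributed L β b) :
    ∃ C > 0, ∀ᶠ N : ℕ in atTop, ∀ z : Fin N → ℝ,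
      (∀ p : ℝ, 0 < p →
        (N : ℝ)⁻¹ * (((N : ℝ)⁻¹ * ∑ i, |(Amat l (b N) (a N)).mulVec z i| ^ p) ^ (1 / p)
          + ((N : ℝ)⁻¹ * ∑ i, |(Amat l (a N) (b N)).mulVec z i| ^ p) ^ (1 / p)) ≤ C * l1norm z) ∧
      (∀ i : Fin N, (N : ℝ)⁻¹ * (|(Amat l (b N) (a N)).mulVec z i|
          + |(Amat l (a N) (b N)).mulVec z i|) ≤ C * l1norm z) ∧
      (N : ℝ)⁻¹ * (l2norm ((Bmat l (b N) (a N)).mulVec z)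
          + l2norm ((Bmat l (a N) (b N)).mulVec z)) ≤ C * l2norm z := by
  have hβα (n : ℤ) : β - α ≠ n := fun h ↦ hαβ (-n) (by rw [Int.cast_neg, ← h, neg_sub])
  obtain ⟨C₀, hA⟩ := hl.exists_abs_Amat_mulVec_le hL
  obtain ⟨C₁, hB₁⟩ := ha.exists_l2norm_Bmat_mulVec_le hL hl hαβ hb
  obtain ⟨C₂, hB₂⟩ := hb.exists_l2norm_Bmat_mulVec_le hL hl hβα ha
  refine ⟨max 1 (max (C₀ + C₀) (C₁ + C₂)), by positivity, ?_⟩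
  filter_upwards [hB₁, hB₂, eventually_gt_atTop 0] with N hB₁ hB₂ hN z
  have hN' : (0 : ℝ) < N := by exact_mod_cast hN
  have hz : 0 ≤ l1norm z := by unfold l1norm; positivity
  exact ⟨fun p hp ↦ inv_mul_add_le hN' hz (by simp)
      (rpow_mean_rpow_le hN hp (hA N _ _ z)) (rpow_mean_rpow_le hN hp (hA N _ _ z)),
    fun i ↦ inv_mul_add_le hN' hz (by simp) (hA N _ _ z i) (hA N _ _ z i),
    inv_mul_add_le hN' (Real.sqrt_nonneg _) (by simp [add_comm]) (hB₂ z) (hB₁ z)⟩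

end Boundedness

/-- Uniform boundedness of the discretized operators `A_N, Ã_N, B_N, B̃_N`. -/
theorem discretized_operator_boundedness
    (L : ℝ) (hL : 0 < L) (l : ℝ → ℂ)
    (hsm : ContDiff ℝ (⊤ : ℕ∞) l) (hper : ∀ s, l (s + L) = l s)
    (harc : ∀ s, ‖deriv l s‖ = 1) (hinj : Set.InjOn l (Set.Ico 0 L))
    (κ : ℕ) (hκ : 2 ≤ κ) (M : ℝ) (hM : 0 < M)
    (ms mst : (N : ℕ) → Fin N → ℝ)
    (hms : ∀ N, 2 ≤ N → ∀ i : Fin N, ms N i ∈ Set.Ico (0:ℝ) L ∧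
      |ms N i - ((i : ℕ) : ℝ) * L / (N : ℝ)| ≤ M / (N : ℝ) ^ (κ + 1))
    (hmst : ∀ N, 2 ≤ N → ∀ i : Fin N, mst N i ∈ Set.Ico (0:ℝ) L ∧
      |mst N i - (((i : ℕ) : ℝ) + 1/2) * L / (N : ℝ)| ≤ M / (N : ℝ) ^ (κ + 1)) :
    ∃ C > 0, ∃ N₀ : ℕ, ∀ N : ℕ, N₀ ≤ N → ∀ z : Fin N → ℝ,
      (∀ p : ℝ, 1 ≤ p →
        (N : ℝ)⁻¹ * (((N : ℝ)⁻¹ * ∑ i, |(Amat l (mst N) (ms N)).mulVec z i| ^ p) ^ (1/p)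
          + ((N : ℝ)⁻¹ * ∑ i, |(Amat l (ms N) (mst N)).mulVec z i| ^ p) ^ (1/p))
          ≤ C * l1norm z) ∧
      (∀ i : Fin N,
        (N : ℝ)⁻¹ * (|(Amat l (mst N) (ms N)).mulVec z i|
          + |(Amat l (ms N) (mst N)).mulVec z i|) ≤ C * l1norm z) ∧
      (N : ℝ)⁻¹ * (l2norm ((Bmat l (mst N) (ms N)).mulVec z)
          + l2norm ((Bmat l (ms N) (mst N)).mulVec z)) ≤ C * l2norm z := by
  have hl : IsSimpleClosedCurve L l := .of_contDiff hL.ne' (contDiff_infty.1 hsm 2) hper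
    (fun s ↦ norm_ne_zero_iff.1 (harc s ▸ one_ne_zero)) hinj
  have hms : IsWellDistributed L 0 ms := .of_abs_sub_le_div_pow hM.le (hκ.trans κ.le_succ) <|
    (eventually_ge_atTop 2).mono fun N hN i ↦ by simpa [uniformNode] using (hms N hN i).2
  have hmst : IsWellDistributed L (1 / 2) mst :=
    .of_abs_sub_le_div_pow hM.le (hκ.trans κ.le_succ) <|
      (eventually_ge_atTop 2).mono fun N hN i ↦ (hmst N hN i).2
  have hshift (n : ℤ) : (0 : ℝ) - 1 / 2 ≠ n := fun h ↦ by
    have : -1 = 2 * n := by exact_mod_cast (by linarith : (-1 : ℝ) = 2 * n)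
    lia
  obtain ⟨C, hC, h⟩ := discretized_operator_boundedness_general hL hl hshift hms hmst
  obtain ⟨N₀, hN₀⟩ := eventually_atTop.1 h
  exact ⟨C, hC, N₀, fun N hN z ↦
    ⟨fun p hp ↦ (hN₀ N hN z).1 p (one_pos.trans_le hp), (hN₀ N hN z).2⟩⟩
end

section
/- Assume the curve setup with counterclockwise orientation and let a well distributed mesh with parameters κ ≥ 2 and M > 0 be given. Then there exist C > 0 and N₀ such that for every N ≥ N₀ and every z ∈ ℝ^N: |⟨(L/N)·B_N z⟩| + |⟨(L/N)·A_N z − π·z⟩| ≤ C·N^{−κ}·‖z‖_{ℓ¹} and |⟨(L/N)·B̃_N z⟩| + |⟨(L/N)·Ã_N z − π·z⟩| ≤ C·N^{−κ}·‖z‖_{ℓ¹}. -/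
open Real MeasureTheory

/-!
With the plane read as `ℂ`, the `j`-th column sums of `B` and `A` are the real and imaginary parts
of `∑ i, l'(aᵢ) / (l(aᵢ) - l(bⱼ))`. Subtracting from this kernel the one of the uniformly
parametrized circle removes the singularity: what remains is the logarithmic derivative of the ratio
of a chord of `l` to a chord of the circle, a periodic function of `aᵢ - bⱼ`, for which the
trapezoid rule has error `O(N^{-κ})`. Its integral over a period vanishes: periodicity makes the
integral `2πi m` for an integer `m` that is constant along the curve, and looking from the point of
`l` nearest to `p` shows that the winding number of `l` about any `p` off the curve is `m` or
`m + 1`; since the values `1` and `0` both occur, `m = 0`. On the circle the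
staggered nodes are the `N`-th roots `ω` of `-1`, and `∑ 1 / (1 - ω) = N / 2` is exact; since
moreover `∑ 1 / |1 - ω| ^ 2 = N ^ 2 / 4`, displacing the nodes by `O(N^{-κ-1})` costs only
`O(N^{-κ})`.
-/

section ParametricIntegral

variable {E F : Type*} [NormedAddCommGroup E] [NormedSpace ℝ E] [FiniteDimensional ℝ E]
  [NormedAddCommGroup F] [NormedSpace ℝ F] {G : E × ℝ → F}

theorem hasFDerivAt_intervalIntegral_of_contDiff (hG : ContDiff ℝ 1 G) (a b : ℝ) (p : E) :
    HasFDerivAt (fun q ↦ ∫ x in a..b, G (q, x))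
      (∫ x in a..b, (fderiv ℝ G (p, x)).comp (.inl ℝ E ℝ)) p := by
  have : ProperSpace E := FiniteDimensional.proper_real E
  have hG' : Continuous fun z ↦ (fderiv ℝ G z).comp (.inl ℝ E ℝ) :=
    (hG.continuous_fderiv one_ne_zero).clm_comp continuous_const
  obtain ⟨B, hB⟩ := ((isCompact_closedBall p 1).prod
    (isCompact_uIcc (a := a) (b := b))).exists_bound_of_continuousOn hG'.continuousOn
  have hslice (q : E) : Continuous fun x : ℝ ↦ (q, x) := by fun_prop
  refine hasFDerivAt_integral_of_dominated_of_fderiv_le''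
    (F' := fun q x ↦ (fderiv ℝ G (q, x)).comp (.inl ℝ E ℝ)) (bound := fun _ ↦ B)
    (Metric.closedBall_mem_nhds p one_pos)
    (.of_forall fun q ↦ (hG.continuous.comp (hslice q)).aestronglyMeasurable)
    ((hG.continuous.comp (hslice p)).intervalIntegrable _ _)
    (hG'.comp (hslice p)).aestronglyMeasurable
    ((ae_restrict_iff' measurableSet_uIoc).2 (.of_forall fun x hx q hq ↦
      hB (q, x) ⟨hq, Set.uIoc_subset_uIcc hx⟩))
    (by simp) (.of_forall fun x q _ ↦ ?_)
  exact (hG.differentiable one_ne_zero (q, x)).hasFDerivAt.comp q (hasFDerivAt_prodMk_left q x)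

theorem contDiff_intervalIntegral {n : ℕ} (hG : ContDiff ℝ n G) (a b : ℝ) :
    ContDiff ℝ n fun p ↦ ∫ x in a..b, G (p, x) := by
  induction n generalizing G with
  | zero =>
    rw [Nat.cast_zero, contDiff_zero]
    exact intervalIntegral.continuous_parametric_intervalIntegral_of_continuous'
      (f := fun p x ↦ G (p, x)) hG.continuous a b
  | succ n ih =>
    have hG1 : ContDiff ℝ 1 G := hG.of_le (by simp)
    have hderiv := hasFDerivAt_intervalIntegral_of_contDiff hG1 a b
    rw [Nat.cast_succ, contDiff_succ_iff_fderiv_apply]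
    refine ⟨fun p ↦ (hderiv p).differentiableAt, by simp, fun y ↦ ?_⟩
    have happly : (fun p ↦ fderiv ℝ (fun q ↦ ∫ x in a..b, G (q, x)) p y) =
        fun p ↦ ∫ x in a..b, fderiv ℝ G (p, x) (y, 0) := by
      funext p
      have hcont : Continuous fun x ↦ (fderiv ℝ G (p, x)).comp (.inl ℝ E ℝ) :=
        ((hG1.continuous_fderiv one_ne_zero).comp
          (continuous_const.prodMk continuous_id)).clm_comp continuous_const
      have hint := hcont.intervalIntegrable (μ := volume) a b
      rw [(hderiv p).fderiv, ContinuousLinearMap.intervalIntegral_apply hint]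
      simp
    rw [happly]
    exact ih ((hG.fderiv_right (m := n) (by simp)).clm_apply contDiff_const)

end ParametricIntegral

theorem exists_norm_le_of_periodic_prod {F : Type*} [SeminormedAddCommGroup F]
    {f : ℝ × ℝ → F} (hf : Continuous f) {a b : ℝ} (ha : 0 < a) (hb : 0 < b)
    (hfa : Function.Periodic f (a, 0)) (hfb : Function.Periodic f (0, b)) :
    ∃ C, ∀ p, ‖f p‖ ≤ C := by
  obtain ⟨C, hC⟩ := ((isCompact_Icc (a := (0 : ℝ)) (b := a)).prod
    (isCompact_Icc (a := (0 : ℝ)) (b := b))).exists_bound_of_continuousOn hf.continuousOn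
  refine ⟨C, fun ⟨u, t⟩ ↦ ?_⟩
  have hfst : Function.Periodic (fun u ↦ f (u, t)) a := fun u ↦ by simpa using hfa (u, t)
  obtain ⟨u', hu', hu⟩ := hfst.exists_mem_Ico₀ ha u
  have hsnd : Function.Periodic (fun t ↦ f (u', t)) b := fun t ↦ by simpa using hfb (u', t)
  obtain ⟨t', ht', ht⟩ := hsnd.exists_mem_Ico₀ hb t
  rw [hu, ht]
  exact hC (u', t') ⟨Set.Ico_subset_Icc_self hu', Set.Ico_subset_Icc_self ht'⟩

section Periodic

variable {E F : Type*} [NormedAddCommGroup E] [NormedSpace ℝ E]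
  [NormedAddCommGroup F] [NormedSpace ℝ F]

theorem periodic_iteratedFDeriv {f : E → F} {c : E} (hf : Function.Periodic f c) (n : ℕ) :
    Function.Periodic (iteratedFDeriv ℝ n f) c := fun x ↦ by
  rw [← iteratedFDeriv_comp_add_right]
  exact congrArg (iteratedFDeriv ℝ n · x) hf.funext

theorem periodic_deriv_s7 {f : ℝ → F} {c : ℝ} (hf : Function.Periodic f c) :
    Function.Periodic (deriv f) c := fun x ↦ by
  rw [← deriv_comp_add_const]
  exact congrArg (deriv · x) hf.funext

theorem integral_const_add_of_periodic {f : ℝ → F} {c : ℝ} (hf : Function.Periodic f c) (t : ℝ) :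
    ∫ u in (0 : ℝ)..c, f (t + u) = ∫ s in (0 : ℝ)..c, f s := by
  rw [intervalIntegral.integral_comp_add_left, add_zero, hf.intervalIntegral_add_eq t 0, zero_add]

theorem norm_iteratedDeriv_prodMk_le {f : ℝ × ℝ → F} {n : ℕ} (hf : ContDiff ℝ n f) (u t : ℝ) :
    ‖iteratedDeriv n (fun v ↦ f (v, t)) u‖ ≤ ‖iteratedFDeriv ℝ n f (u, t)‖ := by
  have hslice : (fun v ↦ f (v, t)) =
      (fun p ↦ f (p + (0, t))) ∘ ContinuousLinearMap.inl ℝ ℝ ℝ := by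
    funext v; simp
  have hshift : ContDiff ℝ n fun p ↦ f (p + (0, t)) := by fun_prop
  rw [← norm_iteratedFDeriv_eq_norm_iteratedDeriv, hslice,
    ContinuousLinearMap.iteratedFDeriv_comp_right _ hshift _ le_rfl, iteratedFDeriv_comp_add_right]
  refine (ContinuousMultilinearMap.norm_compContinuousLinearMap_le _ _).trans ?_
  simp [ContinuousLinearMap.norm_inl]

theorem exists_norm_iteratedDeriv_prodMk_le {f : ℝ × ℝ → F} {n : ℕ} (hf : ContDiff ℝ n f)
    {a b : ℝ} (ha : 0 < a) (hb : 0 < b) (hfa : Function.Periodic f (a, 0))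
    (hfb : Function.Periodic f (0, b)) :
    ∃ C, ∀ u t, ‖iteratedDeriv n (fun v ↦ f (v, t)) u‖ ≤ C := by
  obtain ⟨C, hC⟩ := exists_norm_le_of_periodic_prod
    (hf.continuous_iteratedFDeriv le_rfl) ha hb
    (periodic_iteratedFDeriv hfa n) (periodic_iteratedFDeriv hfb n)
  exact ⟨C, fun u t ↦ (norm_iteratedDeriv_prodMk_le hf u t).trans (hC _)⟩

end Periodic

section LogDeriv

theorem cexp_integral_logDeriv {f : ℝ → ℂ} (hf : ContDiff ℝ 1 f) (h0 : ∀ x, f x ≠ 0)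
    (a b : ℝ) : Complex.exp (∫ x in a..b, logDeriv f x) = f b / f a := by
  have hk : Continuous (logDeriv f) := hf.continuous_deriv_one.div hf.continuous h0
  set g : ℝ → ℂ := fun x ↦ f x * Complex.exp (-∫ y in a..x, logDeriv f y) with hg
  have hderiv (x : ℝ) : HasDerivAt g 0 x := by
    have hprim : HasDerivAt (fun x ↦ ∫ y in a..x, logDeriv f y) (logDeriv f x) x :=
      hk.integral_hasStrictDerivAt a x |>.hasDerivAt
    refine ((hf.differentiable_one x).hasDerivAt.mul hprim.neg.cexp).congr_deriv ?_
    rw [logDeriv_apply, Pi.neg_apply]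
    field_simp [h0 x]
    ring
  have hconst : g b = g a :=
    is_const_of_deriv_eq_zero (fun x ↦ (hderiv x).differentiableAt) (fun x ↦ (hderiv x).deriv) b a
  simp only [hg, intervalIntegral.integral_same, Complex.exp_zero, inv_one, mul_one,
    Complex.exp_neg] at hconst
  rw [← hconst]
  field_simp [h0 b]

theorem exists_int_integral_logDeriv_eq {f : ℝ → ℂ} (hf : ContDiff ℝ 1 f) (h0 : ∀ x, f x ≠ 0)
    {a b : ℝ} (hab : f a = f b) :
    ∃ n : ℤ, ∫ x in a..b, logDeriv f x = n * (2 * π * Complex.I) := by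
  rw [← Complex.exp_eq_one_iff, cexp_integral_logDeriv hf h0, hab, div_self (h0 b)]

theorem intervalIntegrable_logDeriv {f : ℝ → ℂ} {a b : ℝ} (hf : ContDiff ℝ 1 f)
    (h0 : ∀ x ∈ Set.uIcc a b, f x ≠ 0) : IntervalIntegrable (logDeriv f) volume a b :=
  (hf.continuous_deriv_one.continuousOn.div hf.continuous.continuousOn h0).intervalIntegrable

theorem integral_logDeriv_eq_log_sub {f : ℝ → ℂ} {a b : ℝ}
    (hf : ∀ x ∈ Set.uIcc a b, DifferentiableAt ℝ f x)
    (hslit : ∀ x ∈ Set.uIcc a b, f x ∈ Complex.slitPlane)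
    (hint : IntervalIntegrable (logDeriv f) volume a b) :
    ∫ x in a..b, logDeriv f x = Complex.log (f b) - Complex.log (f a) :=
  intervalIntegral.integral_eq_sub_of_hasDerivAt
    (fun x hx ↦ (hf x hx).hasDerivAt.clog_real (hslit x hx)) hint

theorem abs_im_integral_logDeriv_le {f : ℝ → ℂ} {a b : ℝ}
    (hf : ∀ x ∈ Set.uIcc a b, DifferentiableAt ℝ f x) (hre : ∀ x ∈ Set.uIcc a b, 0 < (f x).re)
    (hint : IntervalIntegrable (logDeriv f) volume a b) :
    |(∫ x in a..b, logDeriv f x).im| ≤ π := by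
  rw [integral_logDeriv_eq_log_sub hf (fun x hx ↦ .inl (hre x hx)) hint, Complex.sub_im,
    Complex.log_im, Complex.log_im]
  have harg (x : ℝ) (hx : x ∈ Set.uIcc a b) : |(f x).arg| ≤ π / 2 :=
    Complex.abs_arg_le_pi_div_two_iff.2 (hre x hx).le
  linarith [abs_sub (f b).arg (f a).arg, harg b Set.right_mem_uIcc, harg a Set.left_mem_uIcc]

theorem logDeriv_sub_const (f : ℝ → ℂ) (c : ℂ) (x : ℝ) :
    logDeriv (fun y ↦ f y - c) x = deriv f x / (f x - c) := by
  rw [logDeriv_apply, deriv_sub_const]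

end LogDeriv

section Trapezoid

variable {E : Type*} [NormedAddCommGroup E] [NormedSpace ℝ E]

theorem norm_le_of_integral_eq_zero [CompleteSpace E] {u u' : ℝ → E} {C x h : ℝ} (hh : 0 < h)
    (hu : ∀ y, HasDerivAt u (u' y) y) (hC : ∀ y, ‖u' y‖ ≤ C)
    (hint : ∫ y in x..x + h, u y = 0) : ‖u x‖ ≤ C * h := by
  have hC0 : 0 ≤ C := (norm_nonneg _).trans (hC x)
  have hcont : Continuous u := continuous_iff_continuousAt.2 fun y ↦ (hu y).continuousAt
  have hdiff : ∀ y ∈ Set.uIoc x (x + h), ‖u x - u y‖ ≤ C * h := by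
    intro y hy
    rw [Set.uIoc_of_le (by linarith)] at hy
    have hmvt := convex_univ.norm_image_sub_le_of_norm_hasDerivWithin_le
      (fun z _ ↦ (hu z).hasDerivWithinAt) (fun z _ ↦ hC z) (Set.mem_univ y) (Set.mem_univ x)
    refine hmvt.trans (mul_le_mul_of_nonneg_left ?_ hC0)
    rw [Real.norm_eq_abs, abs_le]
    constructor <;> linarith [hy.1, hy.2]
  have hmean := intervalIntegral.norm_integral_le_of_norm_le_const hdiff
  rw [intervalIntegral.integral_sub (by simp) (hcont.intervalIntegrable _ _), hint, sub_zero,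
    intervalIntegral.integral_const, add_sub_cancel_left, norm_smul, abs_of_pos hh,
    Real.norm_of_nonneg hh.le, mul_comm] at hmean
  exact le_of_mul_le_mul_right hmean hh

/-- The error, over one period `L`, of the `N`-point trapezoid rule for an `L`-periodic function,
as a function of the first node `x`. -/
noncomputable def trapezoidError (L : ℝ) (N : ℕ) (f : ℝ → E) (x : ℝ) : E :=
  (L / N) • ∑ k ∈ Finset.range N, f (x + k * (L / N)) - ∫ y in (0 : ℝ)..L, f y

variable {L : ℝ} {N : ℕ} {f : ℝ → E}

theorem hasDerivAt_trapezoidError [CompleteSpace E] (hf : ContDiff ℝ 1 f)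
    (hper : Function.Periodic f L) (x : ℝ) :
    HasDerivAt (trapezoidError L N f) (trapezoidError L N (deriv f) x) x := by
  have hmean : ∫ y in (0 : ℝ)..L, deriv f y = 0 := by
    rw [intervalIntegral.integral_deriv_eq_sub (fun y _ ↦ hf.differentiable_one y)
      (hf.continuous_deriv_one.intervalIntegrable _ _), hper.eq, sub_self]
  rw [trapezoidError, hmean]
  refine (HasDerivAt.const_smul _ (HasDerivAt.fun_sum fun k _ ↦ ?_)).sub
    (hasDerivAt_const x _)
  exact (hf.differentiable_one _).hasDerivAt.comp_add_const x (k * (L / N))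

theorem integral_trapezoidError_eq_zero [CompleteSpace E] (hN : N ≠ 0)
    (hf : Continuous f) (hper : Function.Periodic f L) (x : ℝ) :
    ∫ y in x..x + L / N, trapezoidError L N f y = 0 := by
  have hN' : (N : ℝ) ≠ 0 := Nat.cast_ne_zero.2 hN
  have hterm (k : ℕ) : ∫ y in x..x + L / N, f (y + k * (L / N)) =
      ∫ y in x + k * (L / N)..x + (k + 1 : ℕ) * (L / N), f y := by
    rw [intervalIntegral.integral_comp_add_right]
    congr 1
    push_cast
    ring
  have hsum : ∑ k ∈ Finset.range N, ∫ y in x..x + L / N, f (y + k * (L / N)) =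
      ∫ y in (0 : ℝ)..L, f y := by
    simp_rw [hterm]
    rw [intervalIntegral.sum_integral_adjacent_intervals (a := fun k : ℕ ↦ x + k * (L / N))
      fun k _ ↦ hf.intervalIntegrable _ _, Nat.cast_zero, zero_mul, add_zero,
      mul_div_cancel₀ L hN', hper.intervalIntegral_add_eq x 0, zero_add]
  have hshift (k : ℕ) : Continuous fun y ↦ f (y + k * (L / N)) := by fun_prop
  have hcont : Continuous fun y ↦ (L / N) • ∑ k ∈ Finset.range N, f (y + k * (L / N)) :=
    (continuous_finsetSum _ fun k _ ↦ hshift k).const_smul _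
  simp only [trapezoidError]
  rw [intervalIntegral.integral_sub (hcont.intervalIntegrable _ _) intervalIntegrable_const,
    intervalIntegral.integral_smul,
    intervalIntegral.integral_finsetSum fun k _ ↦ (hshift k).intervalIntegrable _ _, hsum,
    intervalIntegral.integral_const, add_sub_cancel_left, sub_self]

theorem norm_trapezoidError_le_of_bounded (hL : 0 < L) (hN : N ≠ 0) {C : ℝ}
    (hC : ∀ x, ‖f x‖ ≤ C) (x : ℝ) : ‖trapezoidError L N f x‖ ≤ 2 * L * C := by
  have hN' : (N : ℝ) ≠ 0 := Nat.cast_ne_zero.2 hN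
  have hsum : ‖(L / N) • ∑ k ∈ Finset.range N, f (x + k * (L / N))‖ ≤ L * C := by
    rw [norm_smul, Real.norm_of_nonneg (by positivity)]
    calc L / N * ‖∑ k ∈ Finset.range N, f (x + k * (L / N))‖
        ≤ L / N * ∑ _k ∈ Finset.range N, C := by
          gcongr
          exact norm_sum_le_of_le _ fun k _ ↦ hC _
      _ = L * C := by simp; field_simp
  have hint : ‖∫ y in (0 : ℝ)..L, f y‖ ≤ L * C := by
    simpa [abs_of_pos hL, mul_comm] using
      intervalIntegral.norm_integral_le_of_norm_le_const (a := 0) (b := L) fun y _ ↦ hC y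
  calc ‖trapezoidError L N f x‖ ≤ L * C + L * C := (norm_sub_le _ _).trans (add_le_add hsum hint)
    _ = 2 * L * C := by ring

theorem norm_trapezoidError_le [CompleteSpace E] (hL : 0 < L) (hN : N ≠ 0) {m : ℕ} {C : ℝ}
    (hf : ContDiff ℝ m f) (hper : Function.Periodic f L)
    (hC : ∀ x, ‖iteratedDeriv m f x‖ ≤ C) (x : ℝ) :
    ‖trapezoidError L N f x‖ ≤ 2 * L * C * (L / N) ^ m := by
  induction m generalizing f x with
  | zero =>
    rw [pow_zero, mul_one]
    exact norm_trapezoidError_le_of_bounded hL hN (by simpa using hC) x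
  | succ m ih =>
    have hf1 : ContDiff ℝ 1 f := hf.of_le (by simp)
    have hderiv := ih (f := deriv f) (by exact_mod_cast hf.deriv') (periodic_deriv_s7 hper)
      (by simpa only [iteratedDeriv_succ'] using hC)
    rw [pow_succ, ← mul_assoc]
    exact norm_le_of_integral_eq_zero (div_pos hL (Nat.cast_pos.2 hN.bot_lt))
      (hasDerivAt_trapezoidError hf1 hper) hderiv
      (integral_trapezoidError_eq_zero hN hf.continuous hper x)

theorem norm_smul_sum_sub_integral_le [CompleteSpace E] (hL : 0 < L) (hN : N ≠ 0) {m : ℕ}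
    {K C η y : ℝ} (hf : ContDiff ℝ m f) (hper : Function.Periodic f L)
    (hC : ∀ x, ‖iteratedDeriv m f x‖ ≤ C) (hK : ∀ u v, ‖f u - f v‖ ≤ K * |u - v|) (hK0 : 0 ≤ K)
    {x : Fin N → ℝ} (hx : ∀ i, |x i - (y + i * (L / N))| ≤ η) :
    ‖(L / N) • ∑ i, f (x i) - ∫ s in (0 : ℝ)..L, f s‖ ≤
      L * (K * η) + 2 * L * C * (L / N) ^ m := by
  have hsplit : (L / N) • ∑ i, f (x i) - ∫ s in (0 : ℝ)..L, f s =
      (L / N) • ∑ i, (f (x i) - f (y + i * (L / N))) + trapezoidError L N f y := by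
    rw [trapezoidError, Finset.sum_range fun k ↦ f (y + k * (L / N)), Finset.sum_sub_distrib,
      smul_sub]
    abel
  have hmove : ‖(L / N) • ∑ i, (f (x i) - f (y + i * (L / N)))‖ ≤ L * (K * η) := by
    rw [norm_smul, Real.norm_of_nonneg (by positivity)]
    calc L / N * ‖∑ i, (f (x i) - f (y + i * (L / N)))‖
        ≤ L / N * ∑ _i : Fin N, K * η := by
          gcongr
          exact norm_sum_le_of_le _ fun i _ ↦
            (hK _ _).trans (mul_le_mul_of_nonneg_left (hx i) hK0)
      _ = L * (K * η) := by simp; field_simp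
  rw [hsplit]
  exact (norm_add_le _ _).trans (add_le_add hmove (norm_trapezoidError_le hL hN hf hper hC y))

end Trapezoid

section RootsOfNegOne

theorem sum_natCast_mul_pow_mul_one_sub {R : Type*} [CommRing R] (x : R) (n : ℕ) :
    (∑ m ∈ Finset.range n, m * x ^ m) * (1 - x) = x * ∑ m ∈ Finset.range n, x ^ m - n * x ^ n := by
  induction n with
  | zero => simp
  | succ n ih =>
    rw [Finset.sum_range_succ, Finset.sum_range_succ, add_mul, ih]
    push_cast
    ring

theorem sum_sum_mul_mul_pow_of_isPrimitiveRoot {R : Type*} [CommRing R] [IsDomain R] {ζ : R}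
    {N : ℕ} (hζ : IsPrimitiveRoot ζ N) (hN : N ≠ 0) (α : R) (c : ℕ → R) :
    ∑ k ∈ Finset.range N, ∑ m ∈ Finset.range N, c m * (α * ζ ^ k) ^ m = N * c 0 := by
  have horth : ∀ m ∈ Finset.range N, m ≠ 0 →
      ∑ k ∈ Finset.range N, c m * (α * ζ ^ k) ^ m = 0 := by
    intro m hm hm0
    have hne : ζ ^ m ≠ 1 := hζ.pow_ne_one_of_pos_of_lt hm0 (Finset.mem_range.1 hm)
    have hgeom : ∑ k ∈ Finset.range N, (ζ ^ m) ^ k = 0 := by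
      refine (mul_eq_zero.1 ?_).resolve_right (sub_ne_zero.2 hne)
      rw [geom_sum_mul, ← pow_mul, mul_comm, pow_mul, hζ.pow_eq_one, one_pow, sub_self]
    calc ∑ k ∈ Finset.range N, c m * (α * ζ ^ k) ^ m
        = c m * α ^ m * ∑ k ∈ Finset.range N, (ζ ^ m) ^ k := by
          rw [Finset.mul_sum]
          exact Finset.sum_congr rfl fun k _ ↦ by rw [mul_pow, pow_right_comm, mul_assoc]
      _ = 0 := by rw [hgeom, mul_zero]
  rw [Finset.sum_comm, Finset.sum_eq_single_of_mem 0 (by simpa using hN.bot_lt) horth]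
  simp

variable {N : ℕ} {ω : ℂ}

theorem ne_one_of_pow_eq_neg_one (hω : ω ^ N = -1) : ω ≠ 1 := by
  rintro rfl
  norm_num at hω

theorem norm_eq_one_of_pow_eq_neg_one (hω : ω ^ N = -1) : ‖ω‖ = 1 := by
  have hN : N ≠ 0 := by
    rintro rfl
    norm_num at hω
  rw [← pow_eq_one_iff_of_nonneg (norm_nonneg ω) hN, ← norm_pow, hω, norm_neg, norm_one]

theorem geom_sum_eq_of_pow_eq_neg_one (hω : ω ^ N = -1) :
    ∑ m ∈ Finset.range N, ω ^ m = 2 * (1 - ω)⁻¹ := by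
  rw [eq_mul_inv_iff_mul_eq₀ (sub_ne_zero.2 (ne_one_of_pow_eq_neg_one hω).symm), geom_sum_mul_neg,
    hω]
  norm_num

theorem norm_inv_one_sub_le_of_pow_eq_neg_one (hω : ω ^ N = -1) : ‖(1 - ω)⁻¹‖ ≤ N / 2 := by
  have hgeom : ‖2 * (1 - ω)⁻¹‖ ≤ N := by
    rw [← geom_sum_eq_of_pow_eq_neg_one hω]
    refine (norm_sum_le _ _).trans_eq ?_
    simp [norm_eq_one_of_pow_eq_neg_one hω]
  rw [norm_mul, Complex.norm_ofNat] at hgeom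
  linarith

theorem norm_inv_one_sub_sq_eq_sum_pow (hω : ω ^ N = -1) :
    ((‖(1 - ω)⁻¹‖ ^ 2 : ℝ) : ℂ) = ∑ m ∈ Finset.range N, (N / 4 - m / 2) * ω ^ m := by
  have hω0 : ω ≠ 0 := norm_ne_zero_iff.1 (by simp [norm_eq_one_of_pow_eq_neg_one hω])
  have hne : 1 - ω ≠ 0 := sub_ne_zero.2 (ne_one_of_pow_eq_neg_one hω).symm
  have hnorm : ((‖(1 - ω)⁻¹‖ ^ 2 : ℝ) : ℂ) = -ω * (1 - ω)⁻¹ ^ 2 := by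
    have hne' : ω - 1 ≠ 0 := sub_ne_zero.2 (ne_one_of_pow_eq_neg_one hω)
    rw [← Complex.normSq_eq_norm_sq, ← Complex.mul_conj, map_inv₀, map_sub, map_one,
      ← Complex.inv_eq_conj (norm_eq_one_of_pow_eq_neg_one hω)]
    field_simp
    ring
  have hweighted := sum_natCast_mul_pow_mul_one_sub ω N
  rw [geom_sum_eq_of_pow_eq_neg_one hω, hω, ← eq_mul_inv_iff_mul_eq₀ hne] at hweighted
  calc ((‖(1 - ω)⁻¹‖ ^ 2 : ℝ) : ℂ)
      = N / 4 * ∑ m ∈ Finset.range N, ω ^ m - 2⁻¹ * ∑ m ∈ Finset.range N, m * ω ^ m := by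
        rw [hnorm, hweighted, geom_sum_eq_of_pow_eq_neg_one hω]
        field_simp
        ring
    _ = ∑ m ∈ Finset.range N, (N / 4 - m / 2) * ω ^ m := by
        rw [Finset.mul_sum, Finset.mul_sum, ← Finset.sum_sub_distrib]
        exact Finset.sum_congr rfl fun m _ ↦ by ring

variable {ζ α : ℂ}

theorem mul_pow_pow_eq_neg_one (hζ : IsPrimitiveRoot ζ N) (hα : α ^ N = -1) (k : ℕ) :
    (α * ζ ^ k) ^ N = -1 := by
  rw [mul_pow, pow_right_comm, hζ.pow_eq_one, one_pow, mul_one, hα]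

theorem sum_inv_one_sub_mul_pow (hζ : IsPrimitiveRoot ζ N) (hN : N ≠ 0) (hα : α ^ N = -1) :
    ∑ k ∈ Finset.range N, (1 - α * ζ ^ k)⁻¹ = N / 2 := by
  have hterm (k : ℕ) : (1 - α * ζ ^ k)⁻¹ = ∑ m ∈ Finset.range N, 2⁻¹ * (α * ζ ^ k) ^ m := by
    rw [← Finset.mul_sum, geom_sum_eq_of_pow_eq_neg_one (mul_pow_pow_eq_neg_one hζ hα k),
      inv_mul_cancel_left₀ two_ne_zero]
  simp_rw [hterm]
  rw [sum_sum_mul_mul_pow_of_isPrimitiveRoot hζ hN α fun _ ↦ 2⁻¹, div_eq_mul_inv]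

theorem sum_norm_inv_one_sub_mul_pow_sq (hζ : IsPrimitiveRoot ζ N) (hN : N ≠ 0)
    (hα : α ^ N = -1) :
    ∑ k ∈ Finset.range N, ‖(1 - α * ζ ^ k)⁻¹‖ ^ 2 = (N : ℝ) ^ 2 / 4 := by
  apply Complex.ofReal_injective
  rw [Complex.ofReal_sum]
  simp_rw [norm_inv_one_sub_sq_eq_sum_pow (mul_pow_pow_eq_neg_one hζ hα _)]
  rw [sum_sum_mul_mul_pow_of_isPrimitiveRoot hζ hN α fun m ↦ N / 4 - m / 2]
  push_cast
  ring

end RootsOfNegOne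

section RefCircle

/-- The `L`-periodic uniform parametrization of the unit circle, the reference curve to which the
given curve of period `L` is compared. -/
noncomputable def refCircle (L s : ℝ) : ℂ := circleMap 0 1 (2 * π / L * s)

variable {L : ℝ}

theorem refCircle_add (s u : ℝ) : refCircle L (s + u) = refCircle L s * refCircle L u := by
  rw [refCircle, refCircle, refCircle, circleMap_zero_mul, mul_one, mul_add]

theorem refCircle_natCast_mul (n : ℕ) (s : ℝ) : refCircle L (n * s) = refCircle L s ^ n := by
  rw [refCircle, refCircle, circleMap_zero_pow, one_pow, mul_left_comm]

theorem refCircle_eq_one_iff (hL : 0 < L) {u : ℝ} : refCircle L u = 1 ↔ ∃ n : ℤ, u = n * L := by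
  have hone : (1 : ℂ) = circleMap 0 1 0 := by simp [circleMap]
  rw [hone, refCircle, circleMap_eq_circleMap_iff 0 one_ne_zero]
  refine exists_congr fun n ↦ ?_
  have hreal : 2 * π / L * u = n * (2 * π) ↔ u = n * L := by
    field_simp
  rw [← hreal, Complex.ofReal_zero, zero_mul, zero_add, ← mul_assoc (n : ℂ),
    mul_left_inj' Complex.I_ne_zero]
  norm_cast

theorem refCircle_zero : refCircle L 0 = 1 := by simp [refCircle, circleMap]

theorem periodic_refCircle (hL : 0 < L) : Function.Periodic (refCircle L) L := fun s ↦ by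
  have hone : refCircle L L = 1 := (refCircle_eq_one_iff hL).2 ⟨1, by simp⟩
  rw [refCircle_add, hone, mul_one]

theorem refCircle_eq_one_iff_of_abs_lt (hL : 0 < L) {u : ℝ} (hu : |u| < L) :
    refCircle L u = 1 ↔ u = 0 := by
  refine ⟨fun h ↦ ?_, fun h ↦ h ▸ refCircle_zero⟩
  obtain ⟨n, rfl⟩ := (refCircle_eq_one_iff hL).1 h
  rw [abs_mul, abs_of_pos hL, mul_lt_iff_lt_one_left hL] at hu
  have hn : |n| < 1 := by exact_mod_cast hu
  simp [Int.abs_lt_one_iff.1 hn]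

theorem norm_refCircle (s : ℝ) : ‖refCircle L s‖ = 1 := by simp [refCircle]

theorem contDiff_refCircle {n : WithTop ℕ∞} : ContDiff ℝ n (refCircle L) :=
  (contDiff_circleMap 0 1).comp (contDiff_const.mul contDiff_id)

theorem hasDerivAt_refCircle (s : ℝ) :
    HasDerivAt (refCircle L) (2 * π * Complex.I / L * refCircle L s) s := by
  have hscale : HasDerivAt (fun s : ℝ ↦ 2 * π / L * s) (2 * π / L) s := by
    simpa using (hasDerivAt_id s).const_mul (2 * π / L)
  refine ((hasDerivAt_circleMap 0 1 (2 * π / L * s)).scomp s hscale).congr_deriv ?_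
  rw [Complex.real_smul, refCircle]
  push_cast
  ring

theorem norm_refCircle_sub_le (hL : 0 < L) (s u : ℝ) :
    ‖refCircle L s - refCircle L u‖ ≤ 2 * π / L * |s - u| := by
  have h := (lipschitzWith_circleMap 0 1).dist_le_mul (2 * π / L * s) (2 * π / L * u)
  have hpos : 0 < 2 * π / L := by positivity
  rwa [dist_eq_norm, Real.dist_eq, ← mul_sub, abs_mul, abs_of_pos hpos, Real.coe_nnabs, abs_one,
    one_mul] at h

theorem logDeriv_refCircle_sub_one {u : ℝ} (hu : refCircle L u ≠ 1) :
    logDeriv (fun v ↦ refCircle L v - 1) u =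
      2 * π * Complex.I / L * (1 - (1 - refCircle L u)⁻¹) := by
  have hne : refCircle L u - 1 ≠ 0 := sub_ne_zero.2 hu
  have hne' : 1 - refCircle L u ≠ 0 := sub_ne_zero.2 hu.symm
  rw [logDeriv_apply, ((hasDerivAt_refCircle u).sub_const 1).deriv]
  field_simp
  ring

end RefCircle

section ChordSlope

variable {E : Type*} [NormedAddCommGroup E] [NormedSpace ℝ E]

/-- The slope `(l (t + u) - l t) / u` of the chord of `l` from `t` to `t + u`, as a function of
`p = (u, t)`. It is written as a mean of the velocity, which also covers `u = 0` and shows that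
the slope is as smooth as the velocity. -/
noncomputable def chordSlope (l : ℝ → E) (p : ℝ × ℝ) : E :=
  ∫ x in (0 : ℝ)..1, deriv l (p.2 + p.1 * x)

variable {l : ℝ → E}

theorem contDiff_chordSlope {n : ℕ} (hl : ContDiff ℝ (n + 1) l) :
    ContDiff ℝ n (chordSlope l) := by
  have hderiv : ContDiff ℝ n (deriv l) := hl.deriv'
  have hpath : ContDiff ℝ n fun z : (ℝ × ℝ) × ℝ ↦ z.1.2 + z.1.1 * z.2 := by fun_prop
  exact contDiff_intervalIntegral (hderiv.comp hpath) 0 1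

theorem smul_chordSlope [CompleteSpace E] (hl : ContDiff ℝ 1 l) (u t : ℝ) :
    u • chordSlope l (u, t) = l (t + u) - l t := by
  rw [chordSlope, intervalIntegral.smul_integral_comp_add_mul (deriv l) u t,
    intervalIntegral.integral_deriv_eq_sub (fun _ _ ↦ hl.differentiable_one _)
      (hl.continuous_deriv_one.intervalIntegrable _ _)]
  simp

theorem chordSlope_zero [CompleteSpace E] (t : ℝ) : chordSlope l (0, t) = deriv l t := by
  simp [chordSlope]

end ChordSlope

section RegularJordanCurve

/-- `l` is an `L`-periodic `C^n` parametrization, with nowhere vanishing velocity, of a simple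
closed curve. -/
structure IsRegularJordanCurve (n : ℕ) (L : ℝ) (l : ℝ → ℂ) : Prop where
  period_pos : 0 < L
  contDiff : ContDiff ℝ n l
  periodic : Function.Periodic l L
  deriv_ne_zero : ∀ s, deriv l s ≠ 0
  injOn : Set.InjOn l (Set.Ico 0 L)

variable {n : ℕ} {L : ℝ} {l : ℝ → ℂ}

theorem IsRegularJordanCurve.of_le {m : ℕ} (hl : IsRegularJordanCurve n L l) (hmn : m ≤ n) :
    IsRegularJordanCurve m L l where
  __ := hl
  contDiff := hl.contDiff.of_le (by exact_mod_cast hmn)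

theorem IsRegularJordanCurve.eq_iff (hl : IsRegularJordanCurve n L l) {u t : ℝ} :
    l (t + u) = l t ↔ refCircle L u = 1 := by
  have hL := hl.period_pos
  rw [refCircle_eq_one_iff hL]
  constructor
  · intro h
    have hmod (x : ℝ) : toIcoMod hL 0 x ∈ Set.Ico 0 L := by simpa using toIcoMod_mem_Ico hL 0 x
    have hval (x : ℝ) : l (toIcoMod hL 0 x) = l x := hl.periodic.sub_zsmul_eq _
    have heq := hl.injOn (hmod (t + u)) (hmod t) (by rw [hval, hval, h])
    refine ⟨toIcoDiv hL 0 (t + u) - toIcoDiv hL 0 t, ?_⟩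
    simp only [toIcoMod, zsmul_eq_mul] at heq
    push_cast
    linarith
  · rintro ⟨n, rfl⟩
    exact hl.periodic.int_mul n t

theorem isRegularJordanCurve_refCircle (hL : 0 < L) : IsRegularJordanCurve n L (refCircle L) where
  period_pos := hL
  contDiff := contDiff_refCircle
  periodic := periodic_refCircle hL
  deriv_ne_zero s := by
    rw [(hasDerivAt_refCircle s).deriv]
    simp [hL.ne', ← norm_ne_zero_iff, norm_refCircle]
  injOn s hs t ht hst := by
    have hmul : refCircle L t * refCircle L (s - t) = refCircle L t * 1 := by
      rw [← refCircle_add, add_sub_cancel, hst, mul_one]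
    have ht0 : refCircle L t ≠ 0 := norm_ne_zero_iff.1 (by simp [norm_refCircle])
    refine sub_eq_zero.1 ((refCircle_eq_one_iff_of_abs_lt hL (abs_lt.2 ⟨?_, ?_⟩)).1
      (mul_left_cancel₀ ht0 hmul))
    · linarith [hs.1, ht.2]
    · linarith [hs.2, ht.1]

theorem IsRegularJordanCurve.chordSlope_ne_zero (hl : IsRegularJordanCurve (n + 1) L l)
    {u : ℝ} (hu : |u| < L) (t : ℝ) : chordSlope l (u, t) ≠ 0 := by
  rcases eq_or_ne u 0 with rfl | hu0
  · rw [chordSlope_zero]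
    exact hl.deriv_ne_zero t
  · refine right_ne_zero_of_smul (a := u) ?_
    rwa [smul_chordSlope (hl.contDiff.of_le (by simp)), sub_ne_zero, Ne, hl.eq_iff,
      refCircle_eq_one_iff_of_abs_lt hl.period_pos hu]

/-- The ratio `(l (t + u) - l t) / (refCircle L u - 1)` of a chord of `l` to the chord of the
reference circle with the same parameters, as a function of `p = (u, t)`; on the diagonal
`u ∈ L ℤ` it takes the limiting value. -/
noncomputable def chordRatio (L : ℝ) (l : ℝ → ℂ) (p : ℝ × ℝ) : ℂ :=
  open Classical in
  if refCircle L p.1 = 1 then deriv l p.2 / deriv (refCircle L) 0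
  else (l (p.2 + p.1) - l p.2) / (refCircle L p.1 - 1)

theorem chordRatio_of_ne {u : ℝ} (hu : refCircle L u ≠ 1) (t : ℝ) :
    chordRatio L l (u, t) = (l (t + u) - l t) / (refCircle L u - 1) :=
  if_neg hu

theorem periodic_chordRatio_fst (hL : 0 < L) (hl : Function.Periodic l L) :
    Function.Periodic (chordRatio L l) (L, 0) := fun p ↦ by
  simp only [chordRatio, Prod.fst_add, Prod.snd_add, add_zero, periodic_refCircle hL p.1,
    ← add_assoc, hl (p.2 + p.1)]

theorem periodic_chordRatio_snd (hl : Function.Periodic l L) :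
    Function.Periodic (chordRatio L l) (0, L) := fun p ↦ by
  simp only [chordRatio, Prod.fst_add, Prod.snd_add, add_zero, periodic_deriv_s7 hl p.2, hl p.2,
    add_right_comm p.2 L, hl (p.2 + p.1)]

theorem IsRegularJordanCurve.chordRatio_ne_zero (hl : IsRegularJordanCurve n L l) (p : ℝ × ℝ) :
    chordRatio L l p ≠ 0 := by
  have hcirc := isRegularJordanCurve_refCircle (n := n) hl.period_pos
  rw [chordRatio]
  split_ifs with hp
  · exact div_ne_zero (hl.deriv_ne_zero _) (hcirc.deriv_ne_zero _)
  · exact div_ne_zero (sub_ne_zero.2 (hl.eq_iff.not.2 hp)) (sub_ne_zero.2 hp)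

theorem IsRegularJordanCurve.chordRatio_eq_div_chordSlope
    (hl : IsRegularJordanCurve (n + 1) L l) {u : ℝ} (hu : |u| < L) (t : ℝ) :
    chordRatio L l (u, t) = chordSlope l (u, t) / chordSlope (refCircle L) (u, 0) := by
  rcases eq_or_ne u 0 with rfl | hu0
  · simp [chordRatio, refCircle_zero, chordSlope_zero]
  · have hcirc := (refCircle_eq_one_iff_of_abs_lt hl.period_pos hu).not.2 hu0
    have hchord := smul_chordSlope (hl.contDiff.of_le (by simp)) u t
    have hchord_circ := smul_chordSlope (contDiff_refCircle (L := L)) u 0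
    rw [zero_add, refCircle_zero] at hchord_circ
    rw [chordRatio_of_ne hcirc, ← hchord, ← hchord_circ, Complex.real_smul, Complex.real_smul,
      mul_div_mul_left _ _ (Complex.ofReal_ne_zero.2 hu0)]

theorem IsRegularJordanCurve.contDiffAt_chordRatio_of_abs_lt
    (hl : IsRegularJordanCurve (n + 1) L l) {p : ℝ × ℝ} (hp : |p.1| < L) :
    ContDiffAt ℝ n (chordRatio L l) p := by
  have hcirc := isRegularJordanCurve_refCircle (n := n + 1) hl.period_pos
  have hcirc_slope : ContDiff ℝ n fun q : ℝ × ℝ ↦ chordSlope (refCircle L) (q.1, 0) :=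
    (contDiff_chordSlope contDiff_refCircle).comp (contDiff_fst.prodMk contDiff_const)
  have hquot : ContDiffAt ℝ n (fun q ↦ chordSlope l q / chordSlope (refCircle L) (q.1, 0)) p := by
    simp only [div_eq_mul_inv]
    exact (contDiff_chordSlope hl.contDiff).contDiffAt.mul
      (hcirc_slope.contDiffAt.inv (hcirc.chordSlope_ne_zero hp 0))
  refine hquot.congr_of_eventuallyEq ?_
  filter_upwards [(isOpen_Iio.preimage continuous_fst.abs).mem_nhds hp] with q hq
  exact hl.chordRatio_eq_div_chordSlope hq q.2

theorem IsRegularJordanCurve.contDiff_chordRatio (hl : IsRegularJordanCurve (n + 1) L l) :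
    ContDiff ℝ n (chordRatio L l) := by
  refine contDiff_iff_contDiffAt.2 fun ⟨u, t⟩ ↦ ?_
  have hmem : toIcoMod hl.period_pos 0 u ∈ Set.Ico 0 L := by
    simpa using toIcoMod_mem_Ico hl.period_pos 0 u
  have hshift : chordRatio L l =
      fun p ↦ chordRatio L l (p - toIcoDiv hl.period_pos 0 u • ((L, 0) : ℝ × ℝ)) :=
    funext fun p ↦ ((periodic_chordRatio_fst hl.period_pos hl.periodic).sub_zsmul_eq _).symm
  rw [hshift]
  refine (hl.contDiffAt_chordRatio_of_abs_lt ?_).comp (u, t)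
    (contDiff_id.sub contDiff_const).contDiffAt
  change |toIcoMod hl.period_pos 0 u| < L
  exact (abs_of_nonneg hmem.1).trans_lt hmem.2

end RegularJordanCurve

section RegularKernel

/-- The kernel `l'(t + u) / (l (t + u) - l t)` minus the same kernel of the reference circle at
`t = 0`, as a function of `p = (u, t)`. As the logarithmic derivative of `chordRatio` in `u`, it is
also defined on the diagonal, where the two singularities cancel. -/
noncomputable def regularKernel (L : ℝ) (l : ℝ → ℂ) (p : ℝ × ℝ) : ℂ :=
  logDeriv (fun v ↦ chordRatio L l (v, p.2)) p.1

variable {n : ℕ} {L : ℝ} {l : ℝ → ℂ}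

theorem IsRegularJordanCurve.regularKernel_of_ne (hl : IsRegularJordanCurve (n + 1) L l) {u : ℝ}
    (hu : refCircle L u ≠ 1) (t : ℝ) :
    regularKernel L l (u, t) =
      deriv l (t + u) / (l (t + u) - l t) - logDeriv (fun v ↦ refCircle L v - 1) u := by
  have hdiff : Differentiable ℝ l := hl.contDiff.differentiable (by simp)
  have hquot : (fun v ↦ chordRatio L l (v, t)) =ᶠ[nhds u]
      fun v ↦ (l (t + v) - l t) / (refCircle L v - 1) := by
    filter_upwards [(hasDerivAt_refCircle u).continuousAt.eventually_ne hu] with v hv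
    exact chordRatio_of_ne hv t
  rw [regularKernel, (logDeriv_congr_nhds hquot).eq_of_nhds,
    logDeriv_div (f := fun v ↦ l (t + v) - l t) u (sub_ne_zero.2 (hl.eq_iff.not.2 hu))
      (sub_ne_zero.2 hu) (by fun_prop) ((hasDerivAt_refCircle u).differentiableAt.sub_const 1),
    logDeriv_sub_const (fun v ↦ l (t + v)), deriv_comp_const_add]

theorem IsRegularJordanCurve.contDiff_regularKernel (hl : IsRegularJordanCurve (n + 2) L l) :
    ContDiff ℝ n (regularKernel L l) := by
  have hratio : ContDiff ℝ (n + 1 : ℕ) (chordRatio L l) := hl.contDiff_chordRatio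
  have hderiv (p : ℝ × ℝ) :
      regularKernel L l p = fderiv ℝ (chordRatio L l) p (1, 0) * (chordRatio L l p)⁻¹ := by
    have hslice : HasDerivAt (fun v : ℝ ↦ (v, p.2)) (1, 0) p.1 :=
      (hasDerivAt_id p.1).prodMk (hasDerivAt_const p.1 p.2)
    have hcomp := ((hratio.differentiable (by simp)) p).hasFDerivAt.comp_hasDerivAt p.1 hslice
    rw [regularKernel, logDeriv_apply, div_eq_mul_inv]
    exact congrArg (· * _) hcomp.deriv
  rw [funext hderiv]
  refine ContDiff.mul ((hratio.fderiv_right (m := n) (by simp)).clm_apply contDiff_const) ?_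
  exact (hratio.of_le (by simp)).inv hl.chordRatio_ne_zero

theorem periodic_regularKernel_fst (hL : 0 < L) (hl : Function.Periodic l L) :
    Function.Periodic (regularKernel L l) (L, 0) := fun p ↦ by
  have hper : Function.Periodic (fun v ↦ chordRatio L l (v, p.2)) L := fun v ↦ by
    simpa using periodic_chordRatio_fst hL hl (v, p.2)
  simp only [regularKernel, logDeriv_apply, Prod.fst_add, Prod.snd_add, add_zero,
    periodic_deriv_s7 hper p.1, hper p.1]

theorem periodic_regularKernel_snd (hl : Function.Periodic l L) :
    Function.Periodic (regularKernel L l) (0, L) := fun p ↦ by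
  have hper (v : ℝ) : chordRatio L l (v, p.2 + L) = chordRatio L l (v, p.2) := by
    simpa using periodic_chordRatio_snd hl (v, p.2)
  simp only [regularKernel, Prod.fst_add, Prod.snd_add, add_zero, hper]

theorem IsRegularJordanCurve.exists_norm_regularKernel_sub_le
    (hl : IsRegularJordanCurve 3 L l) :
    ∃ K, 0 ≤ K ∧ ∀ u v t, ‖regularKernel L l (u, t) - regularKernel L l (v, t)‖ ≤
      K * |u - v| := by
  have hsmooth : ContDiff ℝ (1 : ℕ) (regularKernel L l) := hl.contDiff_regularKernel
  obtain ⟨K, hK⟩ := exists_norm_iteratedDeriv_prodMk_le hsmooth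
    hl.period_pos hl.period_pos (periodic_regularKernel_fst hl.period_pos hl.periodic)
    (periodic_regularKernel_snd hl.periodic)
  refine ⟨K, (norm_nonneg _).trans (hK 0 0), fun u v t ↦ ?_⟩
  have hslice : ContDiff ℝ 1 fun v ↦ regularKernel L l (v, t) :=
    hsmooth.comp (contDiff_prodMk_left t)
  simp only [iteratedDeriv_one] at hK
  exact convex_univ.norm_image_sub_le_of_norm_deriv_le
    (fun w _ ↦ hslice.differentiable_one w) (fun w _ ↦ hK w t) (Set.mem_univ v) (Set.mem_univ u)

theorem IsRegularJordanCurve.exists_int_forall_integral_regularKernel_eq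
    (hl : IsRegularJordanCurve 2 L l) :
    ∃ n : ℤ, ∀ t, ∫ u in (0 : ℝ)..L, regularKernel L l (u, t) = n * (2 * π * Complex.I) := by
  have hratio : ContDiff ℝ (1 : ℕ) (chordRatio L l) := hl.contDiff_chordRatio
  have hint (t : ℝ) : ∃ n : ℤ,
      ∫ u in (0 : ℝ)..L, regularKernel L l (u, t) = n * (2 * π * Complex.I) := by
    refine exists_int_integral_logDeriv_eq (f := fun v ↦ chordRatio L l (v, t)) ?_
      (fun v ↦ hl.chordRatio_ne_zero _) ?_
    · exact hratio.comp (contDiff_prodMk_left t)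
    · simpa using (periodic_chordRatio_fst hl.period_pos hl.periodic (0, t)).symm
  have hcont : Continuous fun t ↦ ∫ u in (0 : ℝ)..L, regularKernel L l (u, t) :=
    intervalIntegral.continuous_parametric_intervalIntegral_of_continuous'
      (f := fun t u ↦ regularKernel L l (u, t))
      ((hl.contDiff_regularKernel (n := 0)).continuous.comp continuous_swap) 0 L
  obtain ⟨n, hn⟩ := hint 0
  have hdiscrete : IsDiscrete (AddSubgroup.zmultiples (2 * π * Complex.I) : Set ℂ) :=
    ⟨NormedSpace.discreteTopology_zmultiples _⟩
  refine ⟨n, fun t ↦ hn ▸ isPreconnected_univ.constant_of_mapsTo hdiscrete hcont.continuousOn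
    (fun s _ ↦ ?_) (Set.mem_univ t) (Set.mem_univ 0)⟩
  obtain ⟨m, hm⟩ := hint s
  exact ⟨m, by simpa using hm.symm⟩

end RegularKernel

section WindingNumber

theorem re_pos_of_norm_sub_one_le {w : ℂ} (hw : ‖w - 1‖ ≤ ‖w‖) : 0 < w.re := by
  have hsq := pow_le_pow_left₀ (norm_nonneg _) hw 2
  rw [← Complex.normSq_eq_norm_sq, ← Complex.normSq_eq_norm_sq, Complex.normSq_apply,
    Complex.normSq_apply, Complex.sub_re, Complex.sub_im, Complex.one_re, Complex.one_im] at hsq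
  linarith

theorem re_inv_one_sub_of_norm_eq_one {w : ℂ} (hw : ‖w‖ = 1) (hw1 : w ≠ 1) :
    (1 - w)⁻¹.re = 1 / 2 := by
  have hsq : w.re * w.re + w.im * w.im = 1 := by
    rw [← Complex.normSq_apply, Complex.normSq_eq_norm_sq, hw, one_pow]
  have hne : Complex.normSq (1 - w) ≠ 0 := Complex.normSq_eq_zero.not.2 (sub_ne_zero.2 hw1.symm)
  rw [Complex.inv_re, div_eq_iff hne, Complex.normSq_apply]
  simp only [Complex.sub_re, Complex.sub_im, Complex.one_re, Complex.one_im]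
  linear_combination -(1 / 2) * hsq

theorem im_logDeriv_refCircle_sub_one {L u : ℝ} (hu : refCircle L u ≠ 1) :
    (logDeriv (fun v ↦ refCircle L v - 1) u).im = π / L := by
  have hscale : 2 * π * Complex.I / L = ((2 * π / L : ℝ) : ℂ) * Complex.I := by
    push_cast
    ring
  rw [logDeriv_refCircle_sub_one hu, hscale, mul_assoc, Complex.im_ofReal_mul, Complex.I_mul_im,
    Complex.sub_re, re_inv_one_sub_of_norm_eq_one (norm_refCircle u) hu, Complex.one_re]
  ring

theorem im_integral_logDeriv_refCircle_sub_one {L a b : ℝ}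
    (hab : ∀ u ∈ Set.uIcc a b, refCircle L u ≠ 1) :
    (∫ u in a..b, logDeriv (fun v ↦ refCircle L v - 1) u).im = π / L * (b - a) := by
  have hint := intervalIntegrable_logDeriv (contDiff_refCircle.sub contDiff_const)
    fun u hu ↦ sub_ne_zero.2 (hab u hu)
  calc (∫ u in a..b, logDeriv (fun v ↦ refCircle L v - 1) u).im
      = ∫ u in a..b, (logDeriv (fun v ↦ refCircle L v - 1) u).im :=
        (Complex.imCLM.intervalIntegral_comp_comm hint).symm
    _ = ∫ _u in a..b, π / L :=
        intervalIntegral.integral_congr fun u hu ↦ im_logDeriv_refCircle_sub_one (hab u hu)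
    _ = π / L * (b - a) := by rw [intervalIntegral.integral_const, smul_eq_mul, mul_comm]

theorem integral_deriv_div_sub_eq_zero {l : ℝ → ℂ} {L : ℝ} (hl : ContDiff ℝ 1 l)
    (hper : Function.Periodic l L) {p : ℂ} (hp : ∀ s, (l s).re < p.re) :
    ∫ s in (0 : ℝ)..L, deriv l s / (l s - p) = 0 := by
  have hslit (s : ℝ) : p - l s ∈ Complex.slitPlane := .inl (by simpa using hp s)
  have hlog (s : ℝ) : deriv l s / (l s - p) = logDeriv (fun s ↦ p - l s) s := by
    rw [logDeriv_apply, deriv_const_sub, ← neg_sub (l s) p, neg_div_neg_eq]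
  simp_rw [hlog]
  rw [integral_logDeriv_eq_log_sub (fun s _ ↦ (hl.differentiable_one s).const_sub p)
    (fun s _ ↦ hslit s) (intervalIntegrable_logDeriv (contDiff_const.sub hl)
    fun s _ ↦ Complex.slitPlane_ne_zero (hslit s)), hper.eq, sub_self]

namespace IsRegularJordanCurve

variable {n : ℕ} {L : ℝ} {l : ℝ → ℂ}

theorem exists_forall_norm_sub_le (hl : IsRegularJordanCurve n L l) (p : ℂ) :
    ∃ t, ∀ s, ‖l t - p‖ ≤ ‖l s - p‖ := by
  obtain ⟨-, ⟨t, rfl⟩, ht⟩ :=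
    (hl.periodic.compact_of_continuous hl.period_pos.ne' hl.contDiff.continuous)
      |>.exists_infDist_eq_dist (Set.range_nonempty l) p
  refine ⟨t, fun s ↦ ?_⟩
  rw [← dist_eq_norm', ← dist_eq_norm', ← ht]
  exact Metric.infDist_le_dist_of_mem (Set.mem_range_self s)

theorem logDeriv_sub_div_sub (hl : IsRegularJordanCurve (n + 1) L l) {p : ℂ} {u t : ℝ}
    (hp : l (t + u) ≠ p) (hu : refCircle L u ≠ 1) :
    logDeriv (fun v ↦ (l (t + v) - p) / (l (t + v) - l t)) u =
      deriv l (t + u) / (l (t + u) - p) - regularKernel L l (u, t) -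
        logDeriv (fun v ↦ refCircle L v - 1) u := by
  have hdiff : Differentiable ℝ l := hl.contDiff.differentiable (by simp)
  have hlog (c : ℂ) :
      logDeriv (fun v ↦ l (t + v) - c) u = deriv l (t + u) / (l (t + u) - c) := by
    rw [logDeriv_sub_const (fun v ↦ l (t + v)), deriv_comp_const_add]
  rw [logDeriv_div (f := fun v ↦ l (t + v) - p) u (sub_ne_zero.2 hp)
    (sub_ne_zero.2 (hl.eq_iff.not.2 hu)) (by fun_prop) (by fun_prop), hlog, hlog,
    hl.regularKernel_of_ne hu]
  ring

theorem continuous_deriv_div_sub (hl : IsRegularJordanCurve (n + 1) L l) {p : ℂ}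
    (hp : ∀ s, l s ≠ p) : Continuous fun s ↦ deriv l s / (l s - p) := by
  have hl1 : ContDiff ℝ 1 l := hl.contDiff.of_le (by simp)
  exact hl1.continuous_deriv_one.div (hl1.continuous.sub continuous_const)
    fun s ↦ sub_ne_zero.2 (hp s)

theorem continuous_regularKernel_prodMk (hl : IsRegularJordanCurve 2 L l) (t : ℝ) :
    Continuous fun u ↦ regularKernel L l (u, t) :=
  (hl.contDiff_regularKernel (n := 0)).continuous.comp (Continuous.prodMk_left t)

theorem differentiableAt_sub_div_sub (hl : IsRegularJordanCurve (n + 1) L l) (p : ℂ) {u t : ℝ}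
    (hu : refCircle L u ≠ 1) :
    DifferentiableAt ℝ (fun v ↦ (l (t + v) - p) / (l (t + v) - l t)) u := by
  have hdiff : Differentiable ℝ l := hl.contDiff.differentiable (by simp)
  have hnum : DifferentiableAt ℝ (fun v ↦ l (t + v) - p) u := by fun_prop
  exact hnum.div (by fun_prop) (sub_ne_zero.2 (hl.eq_iff.not.2 hu))

theorem re_sub_div_sub_pos (hl : IsRegularJordanCurve n L l) {p : ℂ} {u t : ℝ}
    (ht : ‖l t - p‖ ≤ ‖l (t + u) - p‖) (hu : refCircle L u ≠ 1) :
    0 < ((l (t + u) - p) / (l (t + u) - l t)).re := by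
  refine re_pos_of_norm_sub_one_le ?_
  rw [div_sub_one (sub_ne_zero.2 (hl.eq_iff.not.2 hu)), sub_sub_sub_cancel_left, norm_div, norm_div]
  gcongr

/- For `t` nearest to `p`, the quotient `(l s - p) / (l s - l t)` stays in the right half plane, so
its argument varies by at most `π` along the curve. -/
theorem abs_im_integral_sub_le_of_mem_Ioo (hl : IsRegularJordanCurve 2 L l) {p : ℂ}
    (hp : ∀ s, l s ≠ p) {t : ℝ} (ht : ∀ s, ‖l t - p‖ ≤ ‖l s - p‖) {δ : ℝ}
    (hδ : δ ∈ Set.Ioo 0 (L / 2)) :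
    |(∫ u in δ..L - δ, deriv l (t + u) / (l (t + u) - p) - regularKernel L l (u, t)).im -
      π / L * (L - 2 * δ)| ≤ π := by
  obtain ⟨hδ0, hδL⟩ := hδ
  set q : ℝ → ℂ := fun u ↦ (l (t + u) - p) / (l (t + u) - l t)
  have hcirc (u : ℝ) (hu : u ∈ Set.uIcc δ (L - δ)) : refCircle L u ≠ 1 := by
    rw [Set.uIcc_of_le (by linarith)] at hu
    have hupos : 0 < u := hδ0.trans_le hu.1
    rw [Ne, refCircle_eq_one_iff_of_abs_lt hl.period_pos
      (by rw [abs_of_pos hupos]; linarith [hu.2])]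
    exact hupos.ne'
  have hsmooth : IntervalIntegrable
      (fun u ↦ deriv l (t + u) / (l (t + u) - p) - regularKernel L l (u, t)) volume δ (L - δ) :=
    (((hl.continuous_deriv_div_sub hp).comp (continuous_const_add t)).sub
      (hl.continuous_regularKernel_prodMk t)).intervalIntegrable _ _
  have hcircle := intervalIntegrable_logDeriv (contDiff_refCircle.sub contDiff_const)
    fun u hu ↦ sub_ne_zero.2 (hcirc u hu)
  have hlog : Set.EqOn (logDeriv q) (fun u ↦ deriv l (t + u) / (l (t + u) - p) -
      regularKernel L l (u, t) - logDeriv (fun v ↦ refCircle L v - 1) u) (Set.uIcc δ (L - δ)) :=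
    fun u hu ↦ hl.logDeriv_sub_div_sub (hp _) (hcirc u hu)
  have hbound := abs_im_integral_logDeriv_le
    (fun u hu ↦ hl.differentiableAt_sub_div_sub p (t := t) (hcirc u hu))
    (fun u hu ↦ hl.re_sub_div_sub_pos (ht _) (hcirc u hu))
    ((hsmooth.sub hcircle).congr fun u hu ↦ (hlog (Set.uIoc_subset_uIcc hu)).symm)
  rwa [intervalIntegral.integral_congr hlog, intervalIntegral.integral_sub hsmooth hcircle,
    Complex.sub_im, im_integral_logDeriv_refCircle_sub_one hcirc, sub_sub L, ← two_mul] at hbound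

theorem abs_im_integral_sub_le (hl : IsRegularJordanCurve 2 L l) {p : ℂ}
    (hp : ∀ s, l s ≠ p) {t : ℝ} (ht : ∀ s, ‖l t - p‖ ≤ ‖l s - p‖) :
    |(∫ s in (0 : ℝ)..L, deriv l s / (l s - p)).im -
      (∫ u in (0 : ℝ)..L, regularKernel L l (u, t)).im - π| ≤ π := by
  set f : ℝ → ℂ := fun u ↦ deriv l (t + u) / (l (t + u) - p) - regularKernel L l (u, t)
  have hquot : Continuous fun u ↦ deriv l (t + u) / (l (t + u) - p) :=
    (hl.continuous_deriv_div_sub hp).comp (continuous_const_add t)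
  have hkernel := hl.continuous_regularKernel_prodMk t
  have hf : Continuous f := hquot.sub hkernel
  have hL := hl.period_pos
  have hint (a b : ℝ) : IntervalIntegrable f volume a b := hf.intervalIntegrable a b
  have hprim : Continuous fun x ↦ ∫ u in (0 : ℝ)..x, f u :=
    intervalIntegral.continuous_primitive hint 0
  have hcont : Continuous fun δ ↦ ∫ u in δ..L - δ, f u := by
    simp_rw [← fun δ ↦ intervalIntegral.integral_interval_sub_left (hint 0 (L - δ)) (hint 0 δ)]
    exact (hprim.comp (continuous_const.sub continuous_id)).sub hprim
  have hclosed : IsClosed {δ | |(∫ u in δ..L - δ, f u).im - π / L * (L - 2 * δ)| ≤ π} :=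
    isClosed_le (by fun_prop) continuous_const
  have hsub := hclosed.closure_subset_iff.2 fun δ ↦ hl.abs_im_integral_sub_le_of_mem_Ioo hp ht
  rw [closure_Ioo (by linarith)] at hsub
  have hzero : |(∫ u in (0 : ℝ)..L - 0, f u).im - π / L * (L - 2 * 0)| ≤ π :=
    hsub ⟨le_rfl, by linarith⟩
  have hper : Function.Periodic (fun s ↦ deriv l s / (l s - p)) L := fun s ↦ by
    simp only [periodic_deriv_s7 hl.periodic s, hl.periodic s]
  rwa [sub_zero, intervalIntegral.integral_sub (hquot.intervalIntegrable _ _)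
    (hkernel.intervalIntegrable _ _), integral_const_add_of_periodic hper, Complex.sub_im,
    mul_zero, sub_zero, div_mul_cancel₀ _ hL.ne'] at hzero

theorem le_and_le_of_integral_eq (hl : IsRegularJordanCurve 2 L l) {m w : ℤ}
    (hm : ∀ t, ∫ u in (0 : ℝ)..L, regularKernel L l (u, t) = m * (2 * π * Complex.I)) {p : ℂ}
    (hp : ∀ s, l s ≠ p)
    (hw : ∫ s in (0 : ℝ)..L, deriv l s / (l s - p) = w * (2 * π * Complex.I)) :
    m ≤ w ∧ w ≤ m + 1 := by
  obtain ⟨t, ht⟩ := hl.exists_forall_norm_sub_le p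
  have hbound := hl.abs_im_integral_sub_le hp ht
  have him (k : ℤ) : (k * (2 * π * Complex.I) : ℂ).im = 2 * π * k := by
    simp [mul_comm]
  rw [hw, hm, him, him, abs_le] at hbound
  have hle : (m : ℝ) ≤ w := le_of_mul_le_mul_left (by linarith [hbound.1]) two_pi_pos
  have hge : (w : ℝ) ≤ m + 1 := le_of_mul_le_mul_left (by linarith [hbound.2]) two_pi_pos
  exact ⟨by exact_mod_cast hle, by exact_mod_cast hge⟩

theorem integral_regularKernel_eq_zero (hl : IsRegularJordanCurve 2 L l)
    (horient : ∃ z₀ : ℂ, (∀ s, l s ≠ z₀) ∧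
      ∫ t in (0 : ℝ)..L, deriv l t / (l t - z₀) = 2 * π * Complex.I) (t : ℝ) :
    ∫ u in (0 : ℝ)..L, regularKernel L l (u, t) = 0 := by
  obtain ⟨m, hm⟩ := hl.exists_int_forall_integral_regularKernel_eq
  obtain ⟨z₀, hz₀, hwinding⟩ := horient
  have hinside := hl.le_and_le_of_integral_eq hm hz₀ (w := 1) (by simpa using hwinding)
  obtain ⟨R, hR⟩ : ∃ R : ℝ, ∀ s, (l s).re < R := by
    obtain ⟨B, hB⟩ := (hl.periodic.compact_of_continuous hl.period_pos.ne'
      hl.contDiff.continuous).isBounded.exists_norm_le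
    exact ⟨B + 1, fun s ↦ ((l s).re_le_norm.trans (hB _ ⟨s, rfl⟩)).trans_lt (lt_add_one B)⟩
  have hwinding_zero : ∫ s in (0 : ℝ)..L, deriv l s / (l s - R) = 0 :=
    integral_deriv_div_sub_eq_zero (hl.contDiff.of_le (by simp)) hl.periodic (by simpa using hR)
  have houtside := hl.le_and_le_of_integral_eq hm (p := R) (w := 0)
    (fun s hs ↦ (hR s).ne (by simp [hs])) (by simpa using hwinding_zero)
  obtain rfl : m = 0 := by omega
  simpa using hm t

end IsRegularJordanCurve

end WindingNumber

section QuadratureOnCircle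

theorem half_norm_le_norm_of_norm_sub_le {E : Type*} [SeminormedAddCommGroup E] {a b : E}
    (h : ‖a - b‖ ≤ ‖a‖ / 2) : ‖a‖ / 2 ≤ ‖b‖ := by
  linarith [norm_sub_norm_le a b]

theorem norm_inv_sub_inv_le_s7 {𝕜 : Type*} [NormedField 𝕜] {a b : 𝕜} (ha : a ≠ 0)
    (h : ‖a - b‖ ≤ ‖a‖ / 2) : ‖a⁻¹ - b⁻¹‖ ≤ 2 * ‖a - b‖ * ‖a⁻¹‖ ^ 2 := by
  have ha_pos : 0 < ‖a‖ := norm_pos_iff.2 ha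
  have hb_half := half_norm_le_norm_of_norm_sub_le h
  have hb : b ≠ 0 := norm_pos_iff.1 (by linarith)
  calc ‖a⁻¹ - b⁻¹‖ = ‖a⁻¹‖ * ‖a - b‖ * ‖b‖⁻¹ := by
        rw [inv_sub_inv' ha hb, norm_mul, norm_mul, norm_sub_rev, norm_inv b]
    _ ≤ ‖a⁻¹‖ * ‖a - b‖ * (‖a‖ / 2)⁻¹ := by gcongr
    _ = 2 * ‖a - b‖ * ‖a⁻¹‖ ^ 2 := by
        rw [norm_inv, inv_div]
        ring

theorem isPrimitiveRoot_refCircle {L : ℝ} (hL : L ≠ 0) {N : ℕ} (hN : N ≠ 0) :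
    IsPrimitiveRoot (refCircle L (L / N)) N := by
  have hL' : (L : ℂ) ≠ 0 := Complex.ofReal_ne_zero.2 hL
  convert Complex.isPrimitiveRoot_exp N hN using 1
  rw [refCircle, circleMap_zero, Complex.ofReal_one, one_mul]
  congr 1
  push_cast
  field_simp

theorem refCircle_pow_eq_neg_one {L : ℝ} (hL : 0 < L) {N : ℕ} (hN : N ≠ 0) (m : ℤ) :
    refCircle L ((1 / 2 - m) * (L / N)) ^ N = -1 := by
  have hhalf : refCircle L (L / 2) = -1 := by
    rw [refCircle, div_mul_div_cancel₀ hL.ne', mul_div_cancel_left₀ _ two_ne_zero]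
    simp [circleMap]
  have hperiods : N * ((1 / 2 - m) * (L / N)) = L / 2 - m * L := by
    field_simp
  rw [← refCircle_natCast_mul, hperiods, (periodic_refCircle hL).sub_int_mul_eq, hhalf]

variable {L y η : ℝ} {N : ℕ} {x : Fin N → ℝ}

theorem norm_one_sub_sub_one_sub_refCircle_le (hL : 0 < L)
    (hx : ∀ i, |x i - (y + i * (L / N))| ≤ η) (i : Fin N) :
    ‖(1 - refCircle L y * refCircle L (L / N) ^ (i : ℕ)) - (1 - refCircle L (x i))‖ ≤
      2 * π / L * η := by
  rw [← refCircle_natCast_mul, ← refCircle_add, sub_sub_sub_cancel_left]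
  exact (norm_refCircle_sub_le hL _ _).trans (by gcongr; exact hx i)

theorem two_pi_div_mul_le_half_norm_one_sub (hN : N ≠ 0) {ω : ℂ} (hω : ω ^ N = -1)
    (hη : 2 * π / L * η ≤ 1 / N) : 2 * π / L * η ≤ ‖1 - ω‖ / 2 := by
  have hne : 0 < ‖1 - ω‖ := norm_pos_iff.2 (sub_ne_zero.2 (ne_one_of_pow_eq_neg_one hω).symm)
  have hinv := norm_inv_one_sub_le_of_pow_eq_neg_one hω
  rw [norm_inv, inv_le_iff_one_le_mul₀ hne] at hinv
  refine hη.trans ?_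
  rw [div_le_iff₀ (by positivity)]
  linarith

theorem refCircle_ne_one_of_abs_sub_le (hL : 0 < L) (hN : N ≠ 0) (hy : refCircle L y ^ N = -1)
    (hx : ∀ i, |x i - (y + i * (L / N))| ≤ η) (hη : 2 * π / L * η ≤ 1 / N) (i : Fin N) :
    refCircle L (x i) ≠ 1 := by
  have hω := mul_pow_pow_eq_neg_one (isPrimitiveRoot_refCircle hL.ne' hN) hy i
  have hne : 0 < ‖1 - refCircle L y * refCircle L (L / N) ^ (i : ℕ)‖ :=
    norm_pos_iff.2 (sub_ne_zero.2 (ne_one_of_pow_eq_neg_one hω).symm)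
  have hhalf := half_norm_le_norm_of_norm_sub_le
    ((norm_one_sub_sub_one_sub_refCircle_le hL hx i).trans
      (two_pi_div_mul_le_half_norm_one_sub hN hω hη))
  exact (sub_ne_zero.1 (norm_pos_iff.1 (by linarith))).symm

theorem norm_sum_inv_one_sub_refCircle_sub_le (hL : 0 < L) (hN : N ≠ 0)
    (hy : refCircle L y ^ N = -1) (hx : ∀ i, |x i - (y + i * (L / N))| ≤ η)
    (hη : 2 * π / L * η ≤ 1 / N) :
    ‖∑ i, (1 - refCircle L (x i))⁻¹ - N / 2‖ ≤ π / L * η * N ^ 2 := by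
  have hζ := isPrimitiveRoot_refCircle hL.ne' hN
  set ω : ℕ → ℂ := fun k ↦ refCircle L y * refCircle L (L / N) ^ k
  have hω (k : ℕ) : ω k ^ N = -1 := mul_pow_pow_eq_neg_one hζ hy k
  have hterm (i : Fin N) : ‖(1 - ω i)⁻¹ - (1 - refCircle L (x i))⁻¹‖ ≤
      2 * (2 * π / L * η) * ‖(1 - ω i)⁻¹‖ ^ 2 := by
    have hclose := norm_one_sub_sub_one_sub_refCircle_le hL hx i
    refine (norm_inv_sub_inv_le_s7 (sub_ne_zero.2 (ne_one_of_pow_eq_neg_one (hω i)).symm)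
      (hclose.trans (two_pi_div_mul_le_half_norm_one_sub hN (hω i) hη))).trans ?_
    gcongr
  have hexact : ∑ i : Fin N, (1 - ω i)⁻¹ = N / 2 := by
    rw [Fin.sum_univ_eq_sum_range fun k ↦ (1 - ω k)⁻¹, sum_inv_one_sub_mul_pow hζ hN hy]
  have hsq : ∑ i : Fin N, ‖(1 - ω i)⁻¹‖ ^ 2 = (N : ℝ) ^ 2 / 4 := by
    rw [Fin.sum_univ_eq_sum_range fun k ↦ ‖(1 - ω k)⁻¹‖ ^ 2,
      sum_norm_inv_one_sub_mul_pow_sq hζ hN hy]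
  calc ‖∑ i, (1 - refCircle L (x i))⁻¹ - N / 2‖
      = ‖∑ i : Fin N, ((1 - ω i)⁻¹ - (1 - refCircle L (x i))⁻¹)‖ := by
        rw [← hexact, norm_sub_rev, Finset.sum_sub_distrib]
    _ ≤ ∑ i : Fin N, 2 * (2 * π / L * η) * ‖(1 - ω i)⁻¹‖ ^ 2 :=
        norm_sum_le_of_le _ fun i _ ↦ hterm i
    _ = π / L * η * N ^ 2 := by
        rw [← Finset.mul_sum, hsq]
        ring

theorem norm_smul_sum_logDeriv_refCircle_sub_le (hL : 0 < L) (hN : N ≠ 0)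
    (hy : refCircle L y ^ N = -1) (hx : ∀ i, |x i - (y + i * (L / N))| ≤ η)
    (hη : 2 * π / L * η ≤ 1 / N) :
    ‖(L / N) • ∑ i, logDeriv (fun v ↦ refCircle L v - 1) (x i) - π * Complex.I‖ ≤
      2 * π ^ 2 / L * η * N := by
  have hsum : (L / N) • ∑ i, logDeriv (fun v ↦ refCircle L v - 1) (x i) - π * Complex.I =
      -(2 * π * Complex.I / N * (∑ i, (1 - refCircle L (x i))⁻¹ - N / 2)) := by
    have hL' : (L : ℂ) ≠ 0 := Complex.ofReal_ne_zero.2 hL.ne'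
    simp_rw [logDeriv_refCircle_sub_one (refCircle_ne_one_of_abs_sub_le hL hN hy hx hη _)]
    rw [← Finset.mul_sum, Finset.sum_sub_distrib, Finset.sum_const, Finset.card_univ,
      Fintype.card_fin, nsmul_one, Complex.real_smul]
    push_cast
    field_simp
    ring
  have hnorm : ‖2 * π * Complex.I / N‖ = 2 * π / N := by
    simp [abs_of_pos pi_pos]
  rw [hsum, norm_neg, norm_mul, hnorm]
  calc 2 * π / N * ‖∑ i, (1 - refCircle L (x i))⁻¹ - N / 2‖
      ≤ 2 * π / N * (π / L * η * N ^ 2) := by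
        gcongr
        exact norm_sum_inv_one_sub_refCircle_sub_le hL hN hy hx hη
    _ = 2 * π ^ 2 / L * η * N := by field_simp

end QuadratureOnCircle

section QuadratureOnCurve

variable {κ : ℕ} {L : ℝ} {l : ℝ → ℂ}

theorem IsRegularJordanCurve.exists_norm_smul_sum_regularKernel_le
    (hl : IsRegularJordanCurve (κ + 2) L l) (hκ : 1 ≤ κ)
    (horient : ∃ z₀ : ℂ, (∀ s, l s ≠ z₀) ∧
      ∫ t in (0 : ℝ)..L, deriv l t / (l t - z₀) = 2 * π * Complex.I) :
    ∃ A B : ℝ, 0 ≤ A ∧ 0 ≤ B ∧ ∀ N : ℕ, N ≠ 0 → ∀ (y t η : ℝ) (x : Fin N → ℝ),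
      (∀ i, |x i - (y + i * (L / N))| ≤ η) →
      ‖(L / N) • ∑ i, regularKernel L l (x i, t)‖ ≤ A * η + B / N ^ κ := by
  have hL := hl.period_pos
  have hkernel : ContDiff ℝ κ (regularKernel L l) := hl.contDiff_regularKernel
  obtain ⟨K, hK0, hK⟩ := (hl.of_le (m := 3) (by lia)).exists_norm_regularKernel_sub_le
  obtain ⟨C, hC⟩ := exists_norm_iteratedDeriv_prodMk_le hkernel hL hL
    (periodic_regularKernel_fst hL hl.periodic) (periodic_regularKernel_snd hl.periodic)
  have hC0 : 0 ≤ C := (norm_nonneg _).trans (hC 0 0)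
  refine ⟨L * K, 2 * L * C * L ^ κ, by positivity, by positivity, fun N hN y t η x hx ↦ ?_⟩
  have hper : Function.Periodic (fun u ↦ regularKernel L l (u, t)) L := fun u ↦ by
    simpa using periodic_regularKernel_fst hL hl.periodic (u, t)
  have herror := norm_smul_sum_sub_integral_le hL hN (hkernel.comp (contDiff_prodMk_left t)) hper
    (fun u ↦ hC u t) (fun u v ↦ hK u v t) hK0 hx
  rw [Function.comp_def, (hl.of_le (m := 2) (by lia)).integral_regularKernel_eq_zero horient t,
    sub_zero] at herror
  refine herror.trans_eq ?_
  rw [div_pow]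
  ring

theorem IsRegularJordanCurve.exists_norm_smul_sum_sub_le (hl : IsRegularJordanCurve (κ + 2) L l)
    (hκ : 1 ≤ κ)
    (horient : ∃ z₀ : ℂ, (∀ s, l s ≠ z₀) ∧
      ∫ t in (0 : ℝ)..L, deriv l t / (l t - z₀) = 2 * π * Complex.I) :
    ∃ A B : ℝ, 0 ≤ A ∧ 0 ≤ B ∧ ∀ N : ℕ, N ≠ 0 → ∀ (y t η : ℝ) (x : Fin N → ℝ),
      refCircle L y ^ N = -1 → (∀ i, |x i - (y + i * (L / N))| ≤ η) → 2 * π / L * η ≤ 1 / N →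
      ‖(L / N) • ∑ i, deriv l (t + x i) / (l (t + x i) - l t) - π * Complex.I‖ ≤
        A * (η * N) + B / N ^ κ := by
  obtain ⟨A, B, hA, hB, hregular⟩ := hl.exists_norm_smul_sum_regularKernel_le hκ horient
  have hL := hl.period_pos
  refine ⟨A + 2 * π ^ 2 / L, B, by positivity, hB, fun N hN y t η x hy hx hη ↦ ?_⟩
  have hη_le : η ≤ η * N := le_mul_of_one_le_right
    ((abs_nonneg _).trans (hx ⟨0, hN.bot_lt⟩)) (by exact_mod_cast Nat.one_le_iff_ne_zero.2 hN)
  have hsplit (i : Fin N) : deriv l (t + x i) / (l (t + x i) - l t) =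
      regularKernel L l (x i, t) + logDeriv (fun v ↦ refCircle L v - 1) (x i) := by
    rw [hl.regularKernel_of_ne (refCircle_ne_one_of_abs_sub_le hL hN hy hx hη i), sub_add_cancel]
  simp_rw [hsplit]
  rw [Finset.sum_add_distrib, smul_add, add_sub_assoc]
  calc ‖(L / N) • ∑ i, regularKernel L l (x i, t) +
        ((L / N) • ∑ i, logDeriv (fun v ↦ refCircle L v - 1) (x i) - π * Complex.I)‖
      ≤ A * η + B / N ^ κ + 2 * π ^ 2 / L * η * N :=
        norm_add_le_of_le (hregular N hN y t η x hx)
          (norm_smul_sum_logDeriv_refCircle_sub_le hL hN hy hx hη)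
    _ ≤ A * (η * N) + B / N ^ κ + 2 * π ^ 2 / L * η * N := by gcongr
    _ = (A + 2 * π ^ 2 / L) * (η * N) + B / N ^ κ := by ring

theorem IsRegularJordanCurve.exists_eventually_norm_smul_sum_sub_le
    (hl : IsRegularJordanCurve (κ + 2) L l) (hκ : 1 ≤ κ)
    (horient : ∃ z₀ : ℂ, (∀ s, l s ≠ z₀) ∧
      ∫ t in (0 : ℝ)..L, deriv l t / (l t - z₀) = 2 * π * Complex.I)
    {M : ℝ} (hM : 0 ≤ M) :
    ∃ C > 0, ∀ᶠ N : ℕ in Filter.atTop, ∀ (α β : ℝ) (m : ℤ), α - β = 1 / 2 - m →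
      ∀ a b : Fin N → ℝ, (∀ i, |a i - (i + α) * L / N| ≤ M / N ^ (κ + 1)) →
        (∀ j, |b j - (j + β) * L / N| ≤ M / N ^ (κ + 1)) →
        ∀ j, ‖(L / N) • ∑ i, deriv l (a i) / (l (a i) - l (b j)) - π * Complex.I‖ ≤
          C / N ^ κ := by
  obtain ⟨A, B, hA, hB, hsum⟩ := hl.exists_norm_smul_sum_sub_le hκ horient
  have hL := hl.period_pos
  refine ⟨A * (2 * M) + B + 1, by positivity, ?_⟩
  filter_upwards [Filter.eventually_ne_atTop 0,
    Filter.eventually_ge_atTop ⌈2 * π / L * (2 * M)⌉₊] with N hN hlarge α β m hαβ a b ha hb j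
  have hnear (i : Fin N) : |a i - b j - ((1 / 2 - (m + j : ℤ)) * (L / N) + i * (L / N))| ≤
      2 * M / N ^ (κ + 1) := by
    have hshift : (i + α) * L / N - (j + β) * L / N =
        (1 / 2 - (m + j : ℤ)) * (L / N) + i * (L / N) := by
      push_cast
      linear_combination (L / N) * hαβ
    rw [← hshift, ← Real.dist_eq, two_mul, add_div]
    exact dist_sub_sub_le_of_le (ha i) (hb j)
  have hNκ : (N : ℝ) ≤ N ^ κ := by exact_mod_cast Nat.le_self_pow (by lia) N
  have hsmall : 2 * π / L * (2 * M / N ^ (κ + 1)) ≤ 1 / N := by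
    rw [pow_succ, ← div_div, mul_div_assoc', div_le_div_iff_of_pos_right (by positivity),
      mul_div_assoc', div_le_one (by positivity)]
    exact (Nat.ceil_le.1 hlarge).trans hNκ
  have herror := hsum N hN _ (b j) _ (fun i ↦ a i - b j)
    (refCircle_pow_eq_neg_one hL hN (m + j)) hnear hsmall
  simp only [add_sub_cancel] at herror
  refine herror.trans ?_
  rw [pow_succ, ← div_div, div_mul_cancel₀ _ (by positivity), mul_div_assoc', ← add_div]
  exact div_le_div_of_nonneg_right (lt_add_one _).le (by positivity)

end QuadratureOnCurve

section MeanIdentities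

variable {N : ℕ}

theorem Bmat_apply (l : ℝ → ℂ) (a b : Fin N → ℝ) (i j : Fin N) :
    Bmat l a b i j = (deriv l (a i) / (l (a i) - l (b j))).re := by
  simp only [Bmat, Matrix.of_apply, dotR, Complex.div_re, Complex.normSq_eq_norm_sq]
  ring

theorem Amat_apply (l : ℝ → ℂ) (a b : Fin N → ℝ) (i j : Fin N) :
    Amat l a b i j = (deriv l (a i) / (l (a i) - l (b j))).im := by
  simp only [Amat, Matrix.of_apply, dotR, normalv, Complex.div_im, Complex.normSq_eq_norm_sq,
    Complex.mul_re, Complex.mul_im, Complex.neg_re, Complex.neg_im, Complex.I_re, Complex.I_im]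
  ring

theorem abs_avg_mul_le {w : Fin N → ℝ} {c : ℝ} (hw : ∀ j, |w j| ≤ c) (z : Fin N → ℝ) :
    |avg (w * z)| ≤ c * l1norm z := by
  rw [avg, l1norm, abs_mul, abs_of_nonneg (by positivity), mul_left_comm, Finset.mul_sum]
  gcongr
  refine (Finset.abs_sum_le_sum_abs _ _).trans (Finset.sum_le_sum fun j _ ↦ ?_)
  rw [Pi.mul_apply, abs_mul]
  exact mul_le_mul_of_nonneg_right (hw j) (abs_nonneg _)

theorem avg_mulVec (A : Matrix (Fin N) (Fin N) ℝ) (z : Fin N → ℝ) :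
    avg (A.mulVec z) = avg ((fun j ↦ ∑ i, A i j) * z) := by
  simp only [avg, Matrix.mulVec, dotProduct, Pi.mul_apply, Finset.sum_mul]
  rw [Finset.sum_comm]

theorem avg_smul (c : ℝ) (z : Fin N → ℝ) : avg (c • z) = c * avg z := by
  simp only [avg, Pi.smul_apply, smul_eq_mul, ← Finset.mul_sum, mul_left_comm]

theorem avg_sub (w z : Fin N → ℝ) : avg (w - z) = avg w - avg z := by
  simp only [avg, Pi.sub_apply, Finset.sum_sub_distrib, mul_sub]

theorem abs_avg_Bmat_add_abs_avg_Amat_le (l : ℝ → ℂ) (a b : Fin N → ℝ) {h c : ℝ}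
    (hsum : ∀ j, ‖h • ∑ i, deriv l (a i) / (l (a i) - l (b j)) - π * Complex.I‖ ≤ c)
    (z : Fin N → ℝ) :
    |avg (h • (Bmat l a b).mulVec z)| + |avg (fun i ↦ h * (Amat l a b).mulVec z i - π * z i)| ≤
      2 * c * l1norm z := by
  set e : Fin N → ℂ := fun j ↦
    h • ∑ i, deriv l (a i) / (l (a i) - l (b j)) - π * Complex.I
  have hre : avg (h • (Bmat l a b).mulVec z) = avg ((fun j ↦ (e j).re) * z) := by
    rw [avg_smul, avg_mulVec, ← avg_smul, ← smul_mul_assoc]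
    congr 2
    ext j
    simp [e, Bmat_apply]
  have him : avg (fun i ↦ h * (Amat l a b).mulVec z i - π * z i) =
      avg ((fun j ↦ (e j).im) * z) := by
    change avg (h • (Amat l a b).mulVec z - π • z) = _
    rw [avg_sub, avg_smul, avg_mulVec, ← avg_smul, ← avg_sub]
    congr 1
    ext j
    simp [e, Amat_apply]
    ring
  rw [hre, him, mul_assoc, two_mul]
  exact add_le_add (abs_avg_mul_le (fun j ↦ (Complex.abs_re_le_norm _).trans (hsum j)) z)
    (abs_avg_mul_le (fun j ↦ (Complex.abs_im_le_norm _).trans (hsum j)) z)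

end MeanIdentities

theorem discretized_mean_identities_general {κ : ℕ} {L : ℝ} {l : ℝ → ℂ}
    (hl : IsRegularJordanCurve (κ + 2) L l) (hκ : 1 ≤ κ)
    (horient : ∃ z₀ : ℂ, (∀ s, l s ≠ z₀) ∧
      ∫ t in (0 : ℝ)..L, deriv l t / (l t - z₀) = 2 * π * Complex.I)
    {M : ℝ} {ms mst : (N : ℕ) → Fin N → ℝ}
    (hms : ∀ N, 2 ≤ N → ∀ i : Fin N, |ms N i - i * L / N| ≤ M / N ^ (κ + 1))
    (hmst : ∀ N, 2 ≤ N → ∀ i : Fin N, |mst N i - (i + 1 / 2) * L / N| ≤ M / N ^ (κ + 1)) :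
    ∃ C > 0, ∃ N₀ : ℕ, ∀ N : ℕ, N₀ ≤ N → ∀ z : Fin N → ℝ,
      (|avg ((L / N) • (Bmat l (mst N) (ms N)).mulVec z)|
        + |avg (fun i ↦ L / N * (Amat l (mst N) (ms N)).mulVec z i - π * z i)|
        ≤ C / N ^ κ * l1norm z) ∧
      (|avg ((L / N) • (Bmat l (ms N) (mst N)).mulVec z)|
        + |avg (fun i ↦ L / N * (Amat l (ms N) (mst N)).mulVec z i - π * z i)|
        ≤ C / N ^ κ * l1norm z) := by
  have hM : 0 ≤ M := by
    have hmesh := (abs_nonneg _).trans (hms 2 le_rfl 0)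
    rwa [le_div_iff₀ (by positivity), zero_mul] at hmesh
  obtain ⟨C, hC, herror⟩ := hl.exists_eventually_norm_smul_sum_sub_le hκ horient hM
  refine ⟨2 * C, by positivity, Filter.eventually_atTop.1 ?_⟩
  filter_upwards [herror, Filter.eventually_ge_atTop 2] with N herror hN z
  have hms' : ∀ i : Fin N, |ms N i - (i + 0) * L / N| ≤ M / N ^ (κ + 1) := by
    simpa only [add_zero] using hms N hN
  rw [mul_div_assoc]
  exact ⟨abs_avg_Bmat_add_abs_avg_Amat_le l _ _
      (herror (1 / 2) 0 0 (by simp) (mst N) (ms N) (hmst N hN) hms') z,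
    abs_avg_Bmat_add_abs_avg_Amat_le l _ _
      (herror 0 (1 / 2) 1 (by norm_num) (ms N) (mst N) hms' (hmst N hN)) z⟩

/-- Discretization of the identities `⟨Bφ⟩ = 0` and `⟨Aφ⟩ = π⟨φ⟩`. -/
theorem discretized_mean_identities
    (L : ℝ) (hL : 0 < L) (l : ℝ → ℂ)
    (hsm : ContDiff ℝ (⊤ : ℕ∞) l) (hper : ∀ s, l (s + L) = l s)
    (harc : ∀ s, ‖deriv l s‖ = 1) (hinj : Set.InjOn l (Set.Ico 0 L))
    (horient : ∃ z₀ : ℂ, (∀ s, l s ≠ z₀) ∧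
      (∫ t in (0:ℝ)..L, deriv l t / (l t - z₀)) = 2 * (π : ℂ) * Complex.I)
    (κ : ℕ) (hκ : 2 ≤ κ) (M : ℝ) (hM : 0 < M)
    (ms mst : (N : ℕ) → Fin N → ℝ)
    (hms : ∀ N, 2 ≤ N → ∀ i : Fin N, ms N i ∈ Set.Ico (0:ℝ) L ∧
      |ms N i - ((i : ℕ) : ℝ) * L / (N : ℝ)| ≤ M / (N : ℝ) ^ (κ + 1))
    (hmst : ∀ N, 2 ≤ N → ∀ i : Fin N, mst N i ∈ Set.Ico (0:ℝ) L ∧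
      |mst N i - (((i : ℕ) : ℝ) + 1/2) * L / (N : ℝ)| ≤ M / (N : ℝ) ^ (κ + 1)) :
    ∃ C > 0, ∃ N₀ : ℕ, ∀ N : ℕ, N₀ ≤ N → ∀ z : Fin N → ℝ,
      (|avg ((L / (N : ℝ)) • (Bmat l (mst N) (ms N)).mulVec z)|
        + |avg (fun i => (L / (N : ℝ)) * (Amat l (mst N) (ms N)).mulVec z i - π * z i)|
        ≤ C / (N : ℝ) ^ κ * l1norm z) ∧
      (|avg ((L / (N : ℝ)) • (Bmat l (ms N) (mst N)).mulVec z)|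
        + |avg (fun i => (L / (N : ℝ)) * (Amat l (ms N) (mst N)).mulVec z i - π * z i)|
        ≤ C / (N : ℝ) ^ κ * l1norm z) := by
  have hl : IsRegularJordanCurve (κ + 2) L l :=
    ⟨hL, contDiff_infty.1 hsm _, hper,
      fun s ↦ norm_ne_zero_iff.1 (by simp [harc s]), hinj⟩
  exact discretized_mean_identities_general hl (one_le_two.trans hκ) horient
    (fun N hN i ↦ (hms N hN i).2) (fun N hN i ↦ (hmst N hN i).2)
end
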